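/- arXiv:1102.5072 — 6 statements merged into one kernel-verified Lean document; each statement's English description precedes it below -/
import Mathlib

section
/- Let (A, m_A, k_A) ⊆ (B, m_B, k_B) be one-dimensional Noetherian local domains with k_A infinite. If B is the integral closure of A and B is finitely generated as an A-module, then m_A·B = m_B^(e/r), where e = e(A) is the multiplicity of A and r = [k_B : k_A] is the degree of the residue field extension. -/
/-- `e` is the Hilbert–Samuel multiplicity of the ideal `J` on the (one-dimensional) ring `R`,
characterized as the limit of `λ(R/Jⁿ)/n`.  The length `λ(R/Jⁿ)` is expressed as the Krull
dimension of the lattice of `R`-submodules of `R/Jⁿ` (i.e. the length of a longest chain of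
submodules). -/
def IsHSMultOfDimOne (R : Type*) [CommRing R] (J : Ideal R) (e : ℕ) : Prop :=
  ∃ len : ℕ → ℕ,
    (∀ n : ℕ, Order.krullDim (Submodule R (R ⧸ J ^ n)) = ((len n : ℕ∞) : WithBot ℕ∞)) ∧
    Filter.Tendsto (fun n : ℕ => (len n : ℝ) / (n : ℝ)) Filter.atTop (nhds (e : ℝ))

/-!
The conductor `𝔠` of `A` in `B` is nonzero because `B` is finite over `A` with the same fraction
field. Let `J` be a nonzero ideal of `A`. Since `𝔠B ⊆ A`, we have `𝔠JⁿB ⊆ Jⁿ ⊆ JⁿB`, so the length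
of `A/Jⁿ` differs by a bounded amount from the `A`-length of `B/JⁿB`. As `B` is a discrete
valuation ring, `JB = m_B ^ s` for some `s`, and this second length is `r * s * n`. Dividing by `n`
and letting `n` tend to infinity gives `e = r * s`.
-/

open Filter Topology IsLocalRing

section QuotientLength

variable {R M N : Type*} [Ring R] [AddCommGroup M] [Module R M] [AddCommGroup N] [Module R N]

theorem length_quotient_le_of_comap_le (f : M →ₗ[R] N) {P : Submodule R M} {Q : Submodule R N}
    (h : Q.comap f ≤ P) : Module.length R (M ⧸ P) ≤ Module.length R (N ⧸ Q) := by
  let g : (M ⧸ Q.comap f) →ₗ[R] N ⧸ Q := (Q.comap f).mapQ Q f le_rfl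
  have hg : Function.Injective g := by
    rw [← LinearMap.ker_eq_bot, Submodule.ker_mapQ, Submodule.mkQ_map_self]
  exact (Module.length_le_of_surjective _ (Submodule.factor_surjective h)).trans
    (Module.length_le_of_injective g hg)

theorem length_quotient_le_add_of_le_comap (f : M →ₗ[R] N) {P : Submodule R M}
    {Q : Submodule R N} (h : P ≤ Q.comap f) :
    Module.length R (N ⧸ Q) ≤
      Module.length R (M ⧸ P) + Module.length R (N ⧸ LinearMap.range f) := by
  let g : (M ⧸ P) →ₗ[R] N ⧸ Q := P.mapQ Q f h
  have hrange : LinearMap.range f ≤ (LinearMap.range g).comap Q.mkQ := by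
    rintro _ ⟨x, rfl⟩
    exact ⟨P.mkQ x, rfl⟩
  have hcoker : Function.Surjective
      ((LinearMap.range f).mapQ (LinearMap.range g) Q.mkQ hrange) := by
    intro z
    obtain ⟨w, rfl⟩ := Submodule.mkQ_surjective _ z
    obtain ⟨y, rfl⟩ := Submodule.mkQ_surjective _ w
    exact ⟨Submodule.Quotient.mk y, rfl⟩
  rw [Module.length_eq_add_of_exact (LinearMap.range g).subtype (LinearMap.range g).mkQ
    (Submodule.subtype_injective _) (Submodule.mkQ_surjective _) (LinearMap.exact_subtype_mkQ _)]
  exact add_le_add (Module.length_le_of_surjective _ g.surjective_rangeRestrict)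
    (Module.length_le_of_surjective _ hcoker)

end QuotientLength

section Conductor

variable (A B : Type*) [CommRing A] [CommRing B] [Algebra A B]

/-- The conductor of `A` in an `A`-algebra `B`, the largest ideal of `A` that multiplies `B` into
the image of `A`. It is encoded as the annihilator of the cokernel of `A → B`, and serves to
compare ideals of `A` with their extensions to `B`. -/
def conductorIdeal : Ideal A :=
  Module.annihilator A (B ⧸ LinearMap.range (Algebra.linearMap A B))

theorem conductorIdeal_smul_top_le :
    conductorIdeal A B • (⊤ : Submodule A B) ≤ LinearMap.range (Algebra.linearMap A B) := by
  rw [Submodule.smul_le]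
  intro c hc b _
  rw [← Submodule.Quotient.mk_eq_zero, Submodule.Quotient.mk_smul]
  exact Module.mem_annihilator.mp hc _

theorem conductorIdeal_ne_bot [Nontrivial A] [Module.Finite A B] (K : Type*) [CommRing K]
    [Algebra A K] [IsFractionRing A K] [Algebra B K] [IsScalarTower A B K] [FaithfulSMul B K] :
    conductorIdeal A B ≠ ⊥ := by
  have htorsion : Module.IsTorsion A (B ⧸ LinearMap.range (Algebra.linearMap A B)) := by
    intro x
    obtain ⟨b, rfl⟩ := Submodule.Quotient.mk_surjective _ x
    obtain ⟨⟨a, s⟩, has⟩ := IsLocalization.surj (nonZeroDivisors A) (algebraMap B K b)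
    refine ⟨s, (Submodule.Quotient.mk_eq_zero _).mpr ⟨a, FaithfulSMul.algebraMap_injective B K ?_⟩⟩
    calc algebraMap B K (algebraMap A B a) = algebraMap A K a :=
          (IsScalarTower.algebraMap_apply A B K a).symm
      _ = algebraMap B K b * algebraMap A K s := has.symm
      _ = algebraMap B K ((s : A) • b) := by
        rw [Algebra.smul_def, map_mul, ← IsScalarTower.algebraMap_apply, mul_comm]
  obtain ⟨c, hc, hc'⟩ := Submodule.annihilator_top_inter_nonZeroDivisors htorsion
  rw [Submodule.annihilator_top] at hc
  exact (Submodule.ne_bot_iff _).mpr ⟨c, hc, nonZeroDivisors.ne_zero hc'⟩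

variable {A B}

theorem comap_map_conductorIdeal_mul_le (hinj : Function.Injective (algebraMap A B))
    (J : Ideal A) :
    ((conductorIdeal A B * J).map (algebraMap A B)).comap (algebraMap A B) ≤ J := by
  have h : (conductorIdeal A B * J) • (⊤ : Submodule A B) ≤
      Submodule.map (Algebra.linearMap A B) J :=
    calc (conductorIdeal A B * J) • (⊤ : Submodule A B)
        = J • conductorIdeal A B • (⊤ : Submodule A B) := by rw [mul_comm, Submodule.mul_smul]
      _ ≤ J • LinearMap.range (Algebra.linearMap A B) :=
        smul_mono_right J (conductorIdeal_smul_top_le A B)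
      _ = Submodule.map (Algebra.linearMap A B) J := by
        rw [← Submodule.map_top, ← Submodule.map_smul'', Ideal.smul_eq_mul, Ideal.mul_top]
  rw [Ideal.smul_top_eq_map] at h
  intro a ha
  obtain ⟨a', ha', heq⟩ := h ha
  exact hinj heq ▸ ha'

theorem length_quotient_le_length_quotient_map_conductorIdeal_mul
    (hinj : Function.Injective (algebraMap A B)) (J : Ideal A) :
    Module.length A (A ⧸ J) ≤
      Module.length A (B ⧸ (conductorIdeal A B * J).map (algebraMap A B)) := by
  rw [← (Submodule.Quotient.restrictScalarsEquiv A
    ((conductorIdeal A B * J).map (algebraMap A B))).length_eq]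
  exact length_quotient_le_of_comap_le (Algebra.linearMap A B)
    (comap_map_conductorIdeal_mul_le hinj J)

theorem length_quotient_map_le_add_length_quotient_map_conductorIdeal (J : Ideal A) :
    Module.length A (B ⧸ J.map (algebraMap A B)) ≤
      Module.length A (A ⧸ J) +
        Module.length A (B ⧸ (conductorIdeal A B).map (algebraMap A B)) := by
  have hle := conductorIdeal_smul_top_le A B
  rw [Ideal.smul_top_eq_map] at hle
  rw [← (Submodule.Quotient.restrictScalarsEquiv A (J.map (algebraMap A B))).length_eq,
    ← (Submodule.Quotient.restrictScalarsEquiv A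
      ((conductorIdeal A B).map (algebraMap A B))).length_eq]
  have hJ : J ≤ ((J.map (algebraMap A B)).restrictScalars A).comap (Algebra.linearMap A B) :=
    fun _ ha => Ideal.mem_map_of_mem (algebraMap A B) ha
  exact (length_quotient_le_add_of_le_comap (Algebra.linearMap A B) hJ).trans
    (add_le_add_right (Module.length_le_of_surjective _ (Submodule.factor_surjective hle)) _)

end Conductor

section Multiplicity

theorem tendsto_div_natCast_of_abs_sub_mul_le {u : ℕ → ℝ} {d k : ℝ}
    (h : ∀ n : ℕ, |u n - d * n| ≤ k) : Tendsto (fun n : ℕ => u n / n) atTop (𝓝 d) := by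
  rw [tendsto_iff_dist_tendsto_zero]
  refine squeeze_zero' (.of_forall fun _ => dist_nonneg) ?_
    (tendsto_const_div_atTop_nhds_zero_nat k)
  filter_upwards [eventually_gt_atTop 0] with n hn
  have hn : (0 : ℝ) < n := Nat.cast_pos.mpr hn
  rw [Real.dist_eq, div_sub' hn.ne', abs_div, abs_of_pos hn, mul_comm]
  gcongr
  exact h n

namespace IsHSMultOfDimOne

variable {R : Type*} [CommRing R] {J : Ideal R} {e : ℕ}

theorem exists_length_quotient_pow_eq (he : IsHSMultOfDimOne R J e) :
    ∃ len : ℕ → ℕ, (∀ n, Module.length R (R ⧸ J ^ n) = len n) ∧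
      Tendsto (fun n : ℕ => (len n : ℝ) / n) atTop (𝓝 (e : ℝ)) := by
  obtain ⟨len, hlen, hlim⟩ := he
  exact ⟨len, fun n => WithBot.coe_injective ((Module.coe_length R _).trans (hlen n)), hlim⟩

theorem ne_bot [IsDomain R] (he : IsHSMultOfDimOne R J e) (hR : ¬ IsField R) : J ≠ ⊥ := by
  rintro rfl
  obtain ⟨len, hlen, -⟩ := he.exists_length_quotient_pow_eq
  have hlength : Module.length R (R ⧸ (⊥ : Ideal R)) = len 1 := by
    rw [← hlen 1, pow_one]
  have hfinite : IsFiniteLength R (R ⧸ (⊥ : Ideal R)) :=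
    Module.length_ne_top_iff.mp (hlength ▸ ENat.natCast_ne_top _)
  have : IsArtinian R (R ⧸ (⊥ : Ideal R)) :=
    (isFiniteLength_iff_isNoetherian_isArtinian.mp hfinite).2
  have : IsArtinianRing R :=
    isArtinian_of_linearEquiv (Submodule.quotEquivOfEqBot (⊥ : Ideal R) rfl)
  exact hR (IsArtinianRing.isField_of_isDomain R)

theorem eq_of_length_bounds (he : IsHSMultOfDimOne R J e) {d k : ℕ}
    (hupper : ∀ n, Module.length R (R ⧸ J ^ n) ≤ (d * n + k : ℕ))
    (hlower : ∀ n, (d * n : ℕ) ≤ Module.length R (R ⧸ J ^ n) + k) : e = d := by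
  obtain ⟨len, hlen, hlim⟩ := he.exists_length_quotient_pow_eq
  have hbound : ∀ n : ℕ, |(len n : ℝ) - (d : ℝ) * n| ≤ k := by
    intro n
    have hle : len n ≤ d * n + k := by exact_mod_cast hlen n ▸ hupper n
    have hge : d * n ≤ len n + k := by exact_mod_cast hlen n ▸ hlower n
    rw [abs_sub_le_iff, sub_le_iff_le_add', sub_le_iff_le_add']
    exact_mod_cast And.intro hle hge
  exact_mod_cast tendsto_nhds_unique hlim (tendsto_div_natCast_of_abs_sub_mul_le hbound)

end IsHSMultOfDimOne

end Multiplicity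

section DiscreteValuationRing

theorem isDiscreteValuationRing_of_isIntegralClosure (A : Type*) {B : Type*} [CommRing A]
    [CommRing B] [IsDomain A] [IsDomain B] [IsNoetherianRing B] [IsLocalRing B] [Algebra A B]
    (hdimB : ringKrullDim B = 1) (K : Type*) [Field K] [Algebra A K] [IsFractionRing A K]
    [Algebra B K] [IsScalarTower A B K] [IsIntegralClosure B A K] :
    IsDiscreteValuationRing B := by
  have : IsFractionRing B K := IsIntegralClosure.isFractionRing_of_finite_extension A K K B
  have : IsIntegrallyClosedIn B K := .of_isIntegralClosure A
  have : IsIntegrallyClosed B := (isIntegrallyClosed_iff_isIntegrallyClosedIn K).mpr this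
  have : Ring.KrullDimLE 1 B := Ring.krullDimLE_iff.mpr hdimB.le
  have : IsDedekindDomain B :=
    { maximalOfPrime := fun hne hprime => hprime.isMaximal_of_ne_bot hne }
  have hfield : ¬ IsField B := (ringKrullDim_eq_one_iff_of_isLocalRing_isDomain.mp hdimB).1
  exact ((IsDiscreteValuationRing.TFAE B hfield).out 2 0).mp this

variable {A B : Type*} [CommRing A] [CommRing B] [IsLocalRing A] [IsDomain B]
  [IsDiscreteValuationRing B] [Algebra A B] [IsLocalHom (algebraMap A B)]
  [Module.Finite (ResidueField A) (ResidueField B)]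

variable (A B) in
theorem length_quotient_maximalIdeal_pow (n : ℕ) :
    Module.length A (B ⧸ maximalIdeal B ^ n) =
      (Module.finrank (ResidueField A) (ResidueField B) * n : ℕ) := by
  rw [length_restrictScalars A B, IsDiscreteValuationRing.length_quotient_pow_maximalIdeal,
    Module.length_eq_finrank, mul_comm, Nat.cast_mul]

theorem IsHSMultOfDimOne.eq_finrank_mul {J : Ideal A} {e s : ℕ} (he : IsHSMultOfDimOne A J e)
    (hinj : Function.Injective (algebraMap A B)) (hcond : conductorIdeal A B ≠ ⊥)
    (hJ : J.map (algebraMap A B) = maximalIdeal B ^ s) :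
    e = Module.finrank (ResidueField A) (ResidueField B) * s := by
  have hJpow (n : ℕ) : (J ^ n).map (algebraMap A B) = maximalIdeal B ^ (s * n) := by
    rw [Ideal.map_pow, hJ, pow_mul]
  obtain ⟨t, ht⟩ := exists_maximalIdeal_pow_eq_of_principal B inferInstance
    ((conductorIdeal A B).map (algebraMap A B))
    ((Ideal.map_eq_bot_iff_of_injective hinj).not.mpr hcond)
  refine he.eq_of_length_bounds
    (k := Module.finrank (ResidueField A) (ResidueField B) * t) (fun n => ?_) (fun n => ?_)
  · have h := length_quotient_le_length_quotient_map_conductorIdeal_mul hinj (J ^ n)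
    rw [Ideal.map_mul, ht, hJpow, ← pow_add, length_quotient_maximalIdeal_pow] at h
    rwa [mul_assoc, ← mul_add, add_comm]
  · have h := length_quotient_map_le_add_length_quotient_map_conductorIdeal (B := B) (J ^ n)
    rwa [ht, hJpow, length_quotient_maximalIdeal_pow, length_quotient_maximalIdeal_pow,
      ← mul_assoc] at h

end DiscreteValuationRing

theorem stmt0_general {A B : Type*} [CommRing A] [CommRing B] [IsDomain A] [IsDomain B]
    [IsNoetherianRing B] [IsLocalRing A] [IsLocalRing B]
    [Algebra A B] (hinj : Function.Injective (algebraMap A B))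
    [IsLocalHom (algebraMap A B)] (hdimB : ringKrullDim B = 1)
    (K : Type*) [Field K] [Algebra A K] [IsFractionRing A K]
    [Algebra B K] [IsScalarTower A B K] [IsIntegralClosure B A K] [Module.Finite A B]
    (J : Ideal A) (e r : ℕ) (he : IsHSMultOfDimOne A J e)
    (hr : r = Module.finrank (ResidueField A) (ResidueField B)) :
    r ∣ e ∧ J.map (algebraMap A B) = maximalIdeal B ^ (e / r) := by
  have : IsDiscreteValuationRing B := isDiscreteValuationRing_of_isIntegralClosure A hdimB K
  have : FaithfulSMul B K :=
    (faithfulSMul_iff_algebraMap_injective B K).mpr (IsIntegralClosure.algebraMap_injective B A K)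
  have hA : ¬ IsField A := fun hA =>
    IsDiscreteValuationRing.not_isField B (isField_of_isIntegral_of_isField' hA)
  obtain ⟨s, hs⟩ := exists_maximalIdeal_pow_eq_of_principal B inferInstance
    (J.map (algebraMap A B)) ((Ideal.map_eq_bot_iff_of_injective hinj).not.mpr (he.ne_bot hA))
  have hers : e = r * s := hr ▸ he.eq_finrank_mul hinj (conductorIdeal_ne_bot A B K) hs
  have hrpos : 0 < r := hr ▸ Module.finrank_pos
  refine ⟨⟨s, hers⟩, ?_⟩
  rw [hs, hers, Nat.mul_div_cancel_left s hrpos]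

/-- Let `(A, m_A, k_A) ⊆ (B, m_B, k_B)` be one-dimensional Noetherian local domains with `k_A`
infinite.  If `B` is the integral closure of `A` (in the quotient field `K` of `A`) and `B` is
finitely generated as an `A`-module, then `m_A · B = m_B ^ (e/r)`, where `e = e(A)` is the
multiplicity of `A` and `r = [k_B : k_A]` is the degree of the residue field extension. -/
theorem stmt0 {A B : Type*} [CommRing A] [CommRing B] [IsDomain A] [IsDomain B]
    [IsNoetherianRing A] [IsNoetherianRing B] [IsLocalRing A] [IsLocalRing B]
    [Algebra A B] (hinj : Function.Injective (algebraMap A B))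
    [IsLocalHom (algebraMap A B)]
    (hdimA : ringKrullDim A = 1) (hdimB : ringKrullDim B = 1)
    [Infinite (IsLocalRing.ResidueField A)]
    (K : Type*) [Field K] [Algebra A K] [IsFractionRing A K]
    [Algebra B K] [IsScalarTower A B K]
    [IsIntegralClosure B A K]
    [Module.Finite A B]
    (e r : ℕ)
    (he : IsHSMultOfDimOne A (IsLocalRing.maximalIdeal A) e)
    (hr : r = Module.finrank (IsLocalRing.ResidueField A) (IsLocalRing.ResidueField B)) :
    r ∣ e ∧
      Ideal.map (algebraMap A B) (IsLocalRing.maximalIdeal A) =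
        IsLocalRing.maximalIdeal B ^ (e / r) :=
  stmt0_general hinj hdimB K (IsLocalRing.maximalIdeal A) e r he hr
end

section
/- Let R ⊆ T ⊆ Quot(R) be rings with (R, m) a local Noetherian domain and T a finitely generated R-module. Let R̂ and T̂ denote the m-adic completions of R and T respectively. Then R̂ and T̂ have the same total quotient ring. -/
/-!
Let `c` be a common denominator of generators of `T` over `R`, so that `c T ⊆ R`. Multiplication by
`c` is then an `R`-linear map `T → R` whose composites with `R → T` on either side are again
multiplication by `c`. Completing these two identities shows that `c T̂` lies in the image of
`R̂ → T̂` and that the kernel of `R̂ → T̂` is killed by `c`. Since completion is flat, `c` stays a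
nonzerodivisor in `R̂` and in `T̂`; hence `R̂ → T̂` is injective, and both rings have the same
fractions, as `b / s = (c b) / (c s)`.
-/

open nonZeroDivisors

section Conductor

variable {A B : Type*} [CommRing A] [CommRing B] [Algebra A B] {c : A}

theorem algebraMap_mem_nonZeroDivisors_of_forall_smul_mem_range
    (hc : algebraMap A B c ∈ B⁰) (hcB : ∀ b : B, c • b ∈ Set.range (algebraMap A B))
    (hinj : Function.Injective (algebraMap A B)) {a : A} (ha : a ∈ A⁰) :
    algebraMap A B a ∈ B⁰ := by
  refine mem_nonZeroDivisors_iff_right.mpr fun b hb ↦ ?_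
  obtain ⟨a', ha'⟩ := hcB b
  have haa' : a' * a = 0 := hinj <| by
    rw [map_mul, ha', smul_mul_assoc, hb, smul_zero, map_zero]
  have hcb : algebraMap A B c * b = 0 := by
    rw [← Algebra.smul_def, ← ha', (mem_nonZeroDivisors_iff_right.mp ha) a' haa', map_zero]
  exact (mem_nonZeroDivisors_iff.mp hc).1 b hcb

theorem isFractionRing_of_forall_smul_mem_range (L : Type*) [CommRing L] [Algebra A L]
    [Algebra B L] [IsScalarTower A B L] [IsFractionRing B L]
    (hc : algebraMap A B c ∈ B⁰) (hcB : ∀ b : B, c • b ∈ Set.range (algebraMap A B))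
    (hinj : Function.Injective (algebraMap A B)) :
    IsFractionRing A L where
  map_units a := by
    rw [IsScalarTower.algebraMap_apply A B L]
    exact IsLocalization.map_units L
      (⟨_, algebraMap_mem_nonZeroDivisors_of_forall_smul_mem_range hc hcB hinj a.2⟩ : B⁰)
  surj z := by
    obtain ⟨⟨b, s⟩, hbs⟩ := IsLocalization.surj B⁰ z
    obtain ⟨a, ha⟩ := hcB b
    obtain ⟨t, ht⟩ := hcB s
    have hmem : algebraMap A B t ∈ B⁰ := by
      rw [ht, Algebra.smul_def]
      exact mul_mem hc s.2
    refine ⟨⟨a, t, mem_nonZeroDivisors_of_injective hinj hmem⟩, ?_⟩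
    simp only [IsScalarTower.algebraMap_apply A B L, ha, ht, Algebra.smul_def, map_mul, ← hbs]
    ring
  exists_of_eq {x y} hxy := by
    rw [IsScalarTower.algebraMap_apply A B L, IsScalarTower.algebraMap_apply A B L] at hxy
    exact ⟨1, by rw [hinj (IsFractionRing.injective B L hxy)]⟩

end Conductor

theorem exists_fractionRing_ringEquiv_of_forall_smul_mem_range {R A B : Type*} [CommRing R]
    [CommRing A] [CommRing B] [Algebra R A] [Algebra R B] {c : R}
    (φ : A →ₐ[R] B) (hφ : Function.Injective φ) (hc : algebraMap R B c ∈ B⁰)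
    (hcB : ∀ b : B, c • b ∈ φ.range) :
    ∃ e : FractionRing A ≃+* FractionRing B,
      ∀ a : A, e (algebraMap A (FractionRing A) a) = algebraMap B (FractionRing B) (φ a) := by
  algebraize [φ.toRingHom]
  have : IsScalarTower R A B := .of_algebraMap_eq fun r ↦ (φ.commutes r).symm
  have : IsFractionRing A (FractionRing B) := isFractionRing_of_forall_smul_mem_range
    (c := algebraMap R A c) (FractionRing B) (by rwa [← IsScalarTower.algebraMap_apply])
    (fun b ↦ by rw [algebraMap_smul]; exact hcB b) hφ
  exact ⟨(FractionRing.algEquiv A (FractionRing B)).toRingEquiv, AlgEquiv.commutes _⟩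

theorem algebraMap_mem_nonZeroDivisors_of_flat {A B : Type*} [CommRing A] [CommRing B]
    [Algebra A B] [Module.Flat A B] {a : A} (ha : a ∈ A⁰) : algebraMap A B a ∈ B⁰ := by
  have hreg : IsSMulRegular B (algebraMap A B a) :=
    (isSMulRegular_algebraMap_iff B).mpr (Module.Flat.isSMulRegular_of_nonZeroDivisors ha)
  refine mem_nonZeroDivisors_iff_right.mpr fun b hb ↦ hreg.right_eq_zero_of_smul ?_
  rwa [smul_eq_mul, mul_comm]

section Denominator

variable {R T K : Type*} [CommRing R] [CommRing T] [CommRing K] [Algebra R T] [Algebra T K]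
  [Algebra R K] [IsScalarTower R T K]

theorem exists_mem_forall_smul_mem_range_algebraMap [Module.Finite R T] (S : Submonoid R)
    [IsLocalization S K] (hTK : Function.Injective (algebraMap T K)) :
    ∃ c ∈ S, ∀ t : T, c • t ∈ Set.range (algebraMap R T) := by
  have hfg : (LinearMap.range (IsScalarTower.toAlgHom R T K).toLinearMap).FG :=
    Module.Finite.iff_fg.mp inferInstance
  obtain ⟨c, hcS, hc⟩ := FractionalIdeal.isFractional_of_fg (S := S) hfg
  refine ⟨c, hcS, fun t ↦ ?_⟩
  obtain ⟨r, hr⟩ := hc (algebraMap T K t) ⟨t, rfl⟩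
  refine ⟨r, hTK ?_⟩
  rw [← IsScalarTower.algebraMap_apply, hr, algebra_compatible_smul T c t, smul_eq_mul, map_mul,
    ← IsScalarTower.algebraMap_apply, Algebra.smul_def]

theorem algebraMap_mem_nonZeroDivisors_of_isLocalization (S : Submonoid R) [IsLocalization S K]
    (hTK : Function.Injective (algebraMap T K)) {c : R} (hc : c ∈ S) : algebraMap R T c ∈ T⁰ := by
  refine mem_nonZeroDivisors_of_injective hTK ?_
  rw [← IsScalarTower.algebraMap_apply]
  exact (IsLocalization.map_units K ⟨c, hc⟩).mem_nonZeroDivisors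

theorem exists_linearMap_comp_eq_smul_id
    (hinj : Function.Injective (algebraMap R T)) {c : R}
    (hc : ∀ t : T, c • t ∈ Set.range (algebraMap R T)) :
    ∃ f : T →ₗ[R] R, Algebra.linearMap R T ∘ₗ f = c • LinearMap.id ∧
      f ∘ₗ Algebra.linearMap R T = c • LinearMap.id := by
  have hf := LinearMap.codRestrictOfInjective_comp (c • LinearMap.id) (Algebra.linearMap R T)
    hinj hc
  refine ⟨_, hf, LinearMap.ext fun r ↦ hinj ?_⟩
  exact (LinearMap.congr_fun hf (algebraMap R T r)).trans (by simp [Algebra.smul_def])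

end Denominator

section AdicCompletionMap

variable {R A B : Type*} [CommRing R] [CommRing A] [CommRing B] [Algebra R A] [Algebra R B]
  {I : Ideal A} {J : Ideal B}

theorem pow_le_comap_pow {g : A →ₐ[R] B} (h : I ≤ J.comap g) (n : ℕ) :
    I ^ n ≤ (J ^ n).comap g :=
  (Ideal.pow_right_mono h n).trans (Ideal.le_comap_pow g n)

theorem factorₐ_comp_quotientMapₐ_comp_evalₐ {g : A →ₐ[R] B} (h : I ≤ J.comap g) {m n : ℕ}
    (hmn : m ≤ n) :
    (Ideal.Quotient.factorₐ R (Ideal.pow_le_pow_right hmn)).comp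
        ((Ideal.quotientMapₐ (J ^ n) g (pow_le_comap_pow h n)).comp
          ((AdicCompletion.evalₐ I n).restrictScalars R)) =
      (Ideal.quotientMapₐ (J ^ m) g (pow_le_comap_pow h m)).comp
        ((AdicCompletion.evalₐ I m).restrictScalars R) := by
  ext x
  obtain ⟨s, rfl⟩ := AdicCompletion.mk_surjective I A x
  have hs := congrArg (Ideal.quotientMapₐ (J ^ m) g (pow_le_comap_pow h m))
    (AdicCompletion.Ideal.mk_eq_mk I hmn s)
  simpa using hs

/-- The homomorphism of adic completions induced by an algebra homomorphism `g` carrying `I`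
into `J`. -/
noncomputable def adicCompletionMapₐ (g : A →ₐ[R] B) (h : I ≤ J.comap g) :
    AdicCompletion I A →ₐ[R] AdicCompletion J B :=
  AdicCompletion.liftAlgHom J
    (fun n ↦ (Ideal.quotientMapₐ (J ^ n) g (pow_le_comap_pow h n)).comp
      ((AdicCompletion.evalₐ I n).restrictScalars R))
    (factorₐ_comp_quotientMapₐ_comp_evalₐ h)

theorem val_adicCompletionMapₐ_mk (g : A →ₐ[R] B) (h : I ≤ J.comap g)
    (s : AdicCompletion.AdicCauchySequence I A) (n : ℕ) :
    (adicCompletionMapₐ g h (AdicCompletion.mk I A s)).val n = Submodule.Quotient.mk (g (s n)) := by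
  have heval : AdicCompletion.evalₐ J n (adicCompletionMapₐ g h (AdicCompletion.mk I A s)) =
      Ideal.Quotient.mk (J ^ n) (g (s n)) := by
    rw [adicCompletionMapₐ,
      AdicCompletion.evalₐ_liftAlgHom J _ (factorₐ_comp_quotientMapₐ_comp_evalₐ h)]
    simp
  rw [← AdicCompletion.eval_apply, ← AdicCompletion.factor_evalₐ_eq_eval J _ (by simp), heval]
  rfl

end AdicCompletionMap

section RestrictScalars

variable {R S : Type*} [CommRing R] [CommRing S] [Algebra R S] (I : Ideal R)
  (M : Type*) [AddCommGroup M] [Module R M] [Module S M] [IsScalarTower R S M]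

theorem restrictScalars_map_pow_smul_top (n : ℕ) :
    (I.map (algebraMap R S) ^ n • ⊤ : Submodule S M).restrictScalars R = I ^ n • ⊤ := by
  rw [← Ideal.map_pow, Submodule.restrictScalars_map_smul_eq, Submodule.restrictScalars_top]

/-- The identification of `M ⧸ (IS)ⁿM` with `M ⧸ IⁿM`, used to compare the `IS`-adic and `I`-adic
completions of `M` level by level. -/
noncomputable def quotientMapPowEquiv (n : ℕ) :
    (M ⧸ (I.map (algebraMap R S) ^ n • ⊤ : Submodule S M)) ≃ₗ[R]
      M ⧸ (I ^ n • ⊤ : Submodule R M) :=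
  (Submodule.Quotient.restrictScalarsEquiv R _).symm ≪≫ₗ
    Submodule.quotEquivOfEq _ _ (restrictScalars_map_pow_smul_top I M n)

theorem transitionMap_quotientMapPowEquiv {m n : ℕ} (hmn : m ≤ n)
    (y : M ⧸ (I.map (algebraMap R S) ^ n • ⊤ : Submodule S M)) :
    AdicCompletion.transitionMap I M hmn (quotientMapPowEquiv I M n y) =
      quotientMapPowEquiv I M m
        (AdicCompletion.transitionMap (I.map (algebraMap R S)) M hmn y) := by
  obtain ⟨y, rfl⟩ := Submodule.Quotient.mk_surjective _ y
  rfl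

/-- The identification of the `IS`-adic completion of an `S`-module with its `I`-adic completion as
an `R`-module. It makes the functoriality of `AdicCompletion I` over `R` available for a
completion formed over `S`. -/
noncomputable def adicCompletionRestrictScalars :
    AdicCompletion (I.map (algebraMap R S)) M ≃ₗ[R] AdicCompletion I M where
  toFun x := ⟨fun n ↦ quotientMapPowEquiv I M n (x.val n), fun {m n} hmn ↦
    (transitionMap_quotientMapPowEquiv I M hmn _).trans (congrArg _ (x.property hmn))⟩
  invFun x := ⟨fun n ↦ (quotientMapPowEquiv I M n).symm (x.val n), fun {m n} hmn ↦
    (quotientMapPowEquiv I M m).injective <| by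
      refine (transitionMap_quotientMapPowEquiv I M hmn _).symm.trans ?_
      simp only [LinearEquiv.apply_symm_apply]
      exact x.property hmn⟩
  map_add' x y := by ext n; exact map_add (quotientMapPowEquiv I M n) (x.val n) (y.val n)
  map_smul' r x := by ext n; exact map_smul (quotientMapPowEquiv I M n) r (x.val n)
  left_inv x := by ext n; exact (quotientMapPowEquiv I M n).symm_apply_apply _
  right_inv x := by ext n; exact (quotientMapPowEquiv I M n).apply_symm_apply _

end RestrictScalars

section Completion

variable {R T : Type*} [CommRing R] [CommRing T] [Algebra R T] (I : Ideal R)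

/-- The canonical homomorphism `R̂ → T̂` from the `I`-adic completion of `R` to the `IT`-adic
completion of `T`. -/
noncomputable def adicCompletionAlgebraMap :
    AdicCompletion I R →ₐ[R] AdicCompletion (I.map (algebraMap R T)) T :=
  adicCompletionMapₐ (Algebra.ofId R T) Ideal.le_comap_map

theorem adicCompletionRestrictScalars_adicCompletionAlgebraMap (x : AdicCompletion I R) :
    adicCompletionRestrictScalars I T (adicCompletionAlgebraMap I x) =
      AdicCompletion.map I (Algebra.linearMap R T) x := by
  obtain ⟨s, rfl⟩ := AdicCompletion.mk_surjective I R x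
  ext n
  exact congrArg (quotientMapPowEquiv I T n) (val_adicCompletionMapₐ_mk _ _ s n)

theorem adicCompletion_map_smul_id {M : Type*} [AddCommGroup M] [Module R M] (c : R)
    (x : AdicCompletion I M) : AdicCompletion.map I (c • LinearMap.id) x = c • x := by
  obtain ⟨s, rfl⟩ := AdicCompletion.mk_surjective I M x
  ext n
  rfl

variable {f : T →ₗ[R] R} {c : R}

theorem adicCompletionAlgebraMap_map_restrictScalars
    (hf : Algebra.linearMap R T ∘ₗ f = c • LinearMap.id)
    (y : AdicCompletion (I.map (algebraMap R T)) T) :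
    adicCompletionAlgebraMap I (AdicCompletion.map I f (adicCompletionRestrictScalars I T y)) =
      c • y := by
  apply (adicCompletionRestrictScalars I T).injective
  rw [adicCompletionRestrictScalars_adicCompletionAlgebraMap, AdicCompletion.map_comp_apply,
    hf, adicCompletion_map_smul_id, map_smul]

theorem map_restrictScalars_adicCompletionAlgebraMap
    (hf : f ∘ₗ Algebra.linearMap R T = c • LinearMap.id) (x : AdicCompletion I R) :
    AdicCompletion.map I f (adicCompletionRestrictScalars I T (adicCompletionAlgebraMap I x)) =
      c • x := by
  rw [adicCompletionRestrictScalars_adicCompletionAlgebraMap, AdicCompletion.map_comp_apply,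
    hf, adicCompletion_map_smul_id]

theorem adicCompletionAlgebraMap_injective
    (hf : f ∘ₗ Algebra.linearMap R T = c • LinearMap.id)
    (hc : IsSMulRegular (AdicCompletion I R) c) :
    Function.Injective (adicCompletionAlgebraMap (T := T) I) := fun x y hxy ↦ hc <| by
  simp only [← map_restrictScalars_adicCompletionAlgebraMap I hf, hxy]

end Completion

theorem stmt1_general {R T : Type*} [CommRing R] [IsNoetherianRing R] [CommRing T] [Algebra R T]
    [Module.Finite R T] (K : Type*) [CommRing K] [Algebra R K] [IsFractionRing R K] [Algebra T K]
    [IsScalarTower R T K] (hTK : Function.Injective (algebraMap T K)) (I : Ideal R) :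
    ∃ e : FractionRing (AdicCompletion I R) ≃+*
        FractionRing (AdicCompletion (I.map (algebraMap R T)) T),
      ∀ x : R,
        e (algebraMap _ _ (algebraMap R (AdicCompletion I R) x)) =
          algebraMap _ _ (algebraMap T (AdicCompletion (I.map (algebraMap R T)) T)
            (algebraMap R T x)) := by
  have : IsNoetherianRing T := IsNoetherianRing.of_finite R T
  have hRT : Function.Injective (algebraMap R T) := .of_comp (f := algebraMap T K) <| by
    rw [← RingHom.coe_comp, ← IsScalarTower.algebraMap_eq]
    exact IsFractionRing.injective R K
  obtain ⟨c, hcR, hcT⟩ := exists_mem_forall_smul_mem_range_algebraMap (T := T) R⁰ hTK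
  obtain ⟨f, hιf, hfι⟩ := exists_linearMap_comp_eq_smul_id hRT hcT
  have hφ : Function.Injective (adicCompletionAlgebraMap (T := T) I) :=
    adicCompletionAlgebraMap_injective I hfι (Module.Flat.isSMulRegular_of_nonZeroDivisors hcR)
  have hc : algebraMap R (AdicCompletion (I.map (algebraMap R T)) T) c ∈
      (AdicCompletion (I.map (algebraMap R T)) T)⁰ := by
    rw [IsScalarTower.algebraMap_apply R T]
    exact algebraMap_mem_nonZeroDivisors_of_flat
      (algebraMap_mem_nonZeroDivisors_of_isLocalization R⁰ hTK hcR)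
  obtain ⟨e, he⟩ := exists_fractionRing_ringEquiv_of_forall_smul_mem_range
    (adicCompletionAlgebraMap (T := T) I) hφ hc
    fun y ↦ ⟨_, adicCompletionAlgebraMap_map_restrictScalars I hιf y⟩
  refine ⟨e, fun x ↦ ?_⟩
  rw [he, AlgHom.commutes, IsScalarTower.algebraMap_apply R T]

/-- Let `R ⊆ T ⊆ Quot(R)` be rings with `(R, m)` a local Noetherian domain and `T` a finitely
generated `R`-module.  Let `R̂` and `T̂` denote the `m`-adic completions of `R` and `T`
respectively (the topology on `T` being given by the filtration `mⁿT = (mT)ⁿ`).  Then `R̂` and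
`T̂` have the same total quotient ring: there is a ring isomorphism between the total quotient
rings `Quot(R̂)` and `Quot(T̂)` compatible with the canonical maps from `R`. -/
theorem stmt1 {R T : Type*} [CommRing R] [IsDomain R] [IsNoetherianRing R] [IsLocalRing R]
    [CommRing T] [Algebra R T] [Module.Finite R T]
    (K : Type*) [Field K] [Algebra R K] [IsFractionRing R K]
    [Algebra T K] [IsScalarTower R T K] (hTK : Function.Injective (algebraMap T K)) :
    let m : Ideal R := IsLocalRing.maximalIdeal R
    let J : Ideal T := Ideal.map (algebraMap R T) m
    let Rhat := AdicCompletion m R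
    let That := AdicCompletion J T
    ∃ e : FractionRing Rhat ≃+* FractionRing That,
      ∀ x : R,
        e (algebraMap Rhat (FractionRing Rhat) (algebraMap R Rhat x)) =
          algebraMap That (FractionRing That) (algebraMap T That (algebraMap R T x)) :=
  stmt1_general K hTK _
end

section
/- If A is a complete Noetherian local domain and z is an indeterminate over A, then the completion of the local ring A(z) = A[z]_{m_A A[z]} (with respect to its maximal ideal) is again a domain; that is, A(z) is analytically irreducible. -/
/-!
Suppose that for each element `r` of an `A`-algebra `R` there is a smallest ideal `c(r)` of `A`
with `r ∈ c(r)R`, and let `m` be an ideal of `A` for which `A` is Noetherian and complete. The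
ideals `c(rₖ) + mᵏ` attached to an `m`-adic Cauchy sequence `(rₖ)` form a coherent system, which by
completeness comes from a single ideal `I` of `A`; by Artin–Rees and Nakayama the limit of the
sequence is, modulo each high power of `m`, the class of an element of content exactly `I`. If two
limits with contents `I` and `J` have product zero, this yields `x, y ∈ R` with
`c(x) = I`, `c(y) = J` and `c(xy) ≤ mᵏ ⊓ IJ ≤ m IJ` for some large `k`.

For a localization of `A[X]` at polynomials of unit content, `c` is the ideal generated by the
coefficients of the numerator. Over a valuation ring contents are multiplicative (Gauss), and for a
domain `A` one reduces to this case by a valuation ring centred on a prime containing `m`; hence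
`c(xy) ≤ m c(x) c(y)` forces `x = 0` or `y = 0`.
-/

open Filter IsLocalRing

section AdicApproximation

variable {A : Type*} [CommRing A]

theorem exists_mem_iInf_sub_mem_pow_smul_top {M : Type*} [AddCommGroup M] [Module A M]
    (m : Ideal A) [IsPrecomplete m M] {P : ℕ → Submodule A M} (hP : Antitone P)
    (hmP : ∀ k, m ^ k • ⊤ ≤ P k) (hstep : ∀ k, P k ≤ P (k + 1) ⊔ m ^ k • ⊤)
    {k : ℕ} {x : M} (hx : x ∈ P k) :
    ∃ y ∈ ⨅ j, P j, x - y ∈ m ^ k • (⊤ : Submodule A M) := by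
  have exists_next (j : ℕ) (u : P (k + j)) :
      ∃ v : P (k + (j + 1)), (u : M) - v ∈ m ^ (k + j) • (⊤ : Submodule A M) := by
    obtain ⟨v, hv, w, hw, huvw⟩ := Submodule.mem_sup.mp (hstep _ u.2)
    exact ⟨⟨v, hv⟩, by rwa [← huvw, add_sub_cancel_left]⟩
  choose next hnext using exists_next
  obtain ⟨u, hu₀, huP, hu⟩ : ∃ u : ℕ → M, u 0 = x ∧ (∀ j, u j ∈ P (k + j)) ∧
      ∀ j, u j - u (j + 1) ∈ m ^ (k + j) • (⊤ : Submodule A M) := by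
    let v (j : ℕ) : P (k + j) := Nat.rec ⟨x, hx⟩ next j
    exact ⟨fun j ↦ (v j).1, rfl, fun j ↦ (v j).2, fun j ↦ hnext j (v j)⟩
  -- The index shift makes the limit agree with `u j` modulo `m ^ (k + j)`, not only modulo `m ^ j`.
  have hcauchy (n : ℕ) : u (n - k) ≡ u (n + 1 - k) [SMOD m ^ n • (⊤ : Submodule A M)] := by
    rcases lt_or_ge n k with hn | hn
    · rw [Nat.sub_eq_zero_of_le hn.le, Nat.sub_eq_zero_of_le hn]
    · obtain ⟨j, rfl⟩ := Nat.exists_eq_add_of_le hn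
      rw [add_assoc, Nat.add_sub_cancel_left, Nat.add_sub_cancel_left, SModEq.sub_mem]
      exact hu j
  obtain ⟨y, hy⟩ := IsPrecomplete.prec ‹_› ((AdicCompletion.isAdicCauchy_iff _ _ _).mpr hcauchy)
  have hyu (j : ℕ) : u j - y ∈ m ^ (k + j) • (⊤ : Submodule A M) := by
    simpa only [SModEq.sub_mem, Nat.add_sub_cancel_left] using hy (k + j)
  refine ⟨y, (Submodule.mem_iInf P).mpr fun j ↦ hP (Nat.le_add_left j k) ?_, hu₀ ▸ hyu 0⟩
  simpa only [sub_sub_cancel] using sub_mem (huP j) (hmP _ (hyu j))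

theorem exists_submodule_sup_pow_smul_top_eq {M : Type*} [AddCommGroup M] [Module A M]
    (m : Ideal A) [IsPrecomplete m M] (N : ℕ → Submodule A M)
    (hN : ∀ k, N k ⊔ m ^ k • ⊤ = N (k + 1) ⊔ m ^ k • ⊤) :
    ∃ L : Submodule A M, ∀ k, L ⊔ m ^ k • ⊤ = N k ⊔ m ^ k • ⊤ := by
  have hpow (k : ℕ) : m ^ (k + 1) • (⊤ : Submodule A M) ≤ m ^ k • ⊤ :=
    Submodule.pow_smul_top_le m M k.le_succ
  have hanti : Antitone fun k ↦ N k ⊔ m ^ k • (⊤ : Submodule A M) :=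
    antitone_nat_of_succ_le fun k ↦ (sup_le_sup_left (hpow k) _).trans_eq (hN k).symm
  have hstep (k : ℕ) : N k ⊔ m ^ k • (⊤ : Submodule A M) ≤
      (N (k + 1) ⊔ m ^ (k + 1) • ⊤) ⊔ m ^ k • ⊤ :=
    (hN k).trans_le (sup_le_sup_right le_sup_left _)
  refine ⟨⨅ k, N k ⊔ m ^ k • ⊤, fun k ↦ le_antisymm (sup_le (iInf_le _ k) le_sup_right) ?_⟩
  intro x hx
  obtain ⟨y, hy, hxy⟩ :=
    exists_mem_iInf_sub_mem_pow_smul_top m hanti (fun _ ↦ le_sup_right) hstep hx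
  rw [← add_sub_cancel y x]
  exact Submodule.add_mem_sup hy hxy

theorem eventually_pow_inf_le_mul [IsNoetherianRing A] (m I : Ideal A) :
    ∀ᶠ k in atTop, m ^ k ⊓ I ≤ m * I := by
  obtain ⟨n, hn⟩ := Ideal.exists_pow_inf_eq_pow_smul m (M := A) I
  filter_upwards [eventually_gt_atTop n] with k hk
  have hkn := hn k hk.le
  simp only [smul_eq_mul, Ideal.mul_top] at hkn
  rw [hkn]
  exact Ideal.mul_mono (Ideal.pow_le_self (by omega)) inf_le_right

theorem eventually_forall_eq_of_sup_pow_eq [IsNoetherianRing A] {m : Ideal A}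
    (hm : m ≤ (⊥ : Ideal A).jacobson) (I : Ideal A) :
    ∀ᶠ k in atTop, ∀ J ≤ I, J ⊔ m ^ k = I ⊔ m ^ k → J = I := by
  filter_upwards [eventually_pow_inf_le_mul m I] with k hk J hJI hJ
  refine le_antisymm hJI
    (Submodule.le_of_le_smul_of_le_jacobson_bot (IsNoetherian.noetherian I) hm ?_)
  calc I = (J ⊔ m ^ k) ⊓ I := by rw [hJ, inf_eq_right.mpr le_sup_left]
    _ = J ⊔ m ^ k ⊓ I := sup_inf_assoc_of_le _ hJI
    _ ≤ J ⊔ m • I := sup_le_sup_left hk J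

end AdicApproximation

/-- The *Ohm–Rush content* over `A` of an element `r` of an `A`-algebra: the intersection of the
ideals of `A` whose extension contains `r`. It plays the role of the ideal generated by the
coefficients of a polynomial. -/
def ohmRushContent (A : Type*) {R : Type*} [CommRing A] [CommRing R] [Algebra A R] (r : R) :
    Ideal A :=
  sInf {I | r ∈ I.map (algebraMap A R)}

/-- An `A`-algebra `R` is an *Ohm–Rush algebra* if each element lies in the extension of its
content, so that the content is the smallest ideal of `A` whose extension contains the element. -/
class IsOhmRush (A R : Type*) [CommRing A] [CommRing R] [Algebra A R] : Prop where
  mem_map_content (r : R) : r ∈ (ohmRushContent A r).map (algebraMap A R)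

section OhmRush

variable {A R : Type*} [CommRing A] [CommRing R] [Algebra A R]

theorem ohmRushContent_eq_of_forall_mem_map_iff {r : R} {I : Ideal A}
    (h : ∀ K : Ideal A, r ∈ K.map (algebraMap A R) ↔ I ≤ K) : ohmRushContent A r = I :=
  le_antisymm (sInf_le ((h I).mpr le_rfl)) (le_sInf fun K hK ↦ (h K).mp hK)

theorem ohmRushContent_zero : ohmRushContent A (0 : R) = ⊥ :=
  le_bot_iff.mp (sInf_le (Set.mem_ofPred.mpr (Ideal.zero_mem _)))

variable [IsOhmRush A R]

theorem ohmRushContent_le_iff {r : R} {K : Ideal A} :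
    ohmRushContent A r ≤ K ↔ r ∈ K.map (algebraMap A R) :=
  ⟨fun h ↦ Ideal.map_mono h (IsOhmRush.mem_map_content r), fun h ↦ sInf_le h⟩

theorem ohmRushContent_eq_bot_iff {r : R} : ohmRushContent A r = ⊥ ↔ r = 0 := by
  rw [← le_bot_iff, ohmRushContent_le_iff, Ideal.map_bot, Ideal.mem_bot]

theorem ohmRushContent_mul_le (r s : R) :
    ohmRushContent A (r * s) ≤ ohmRushContent A r * ohmRushContent A s := by
  rw [ohmRushContent_le_iff, Ideal.map_mul]
  exact Ideal.mul_mem_mul (IsOhmRush.mem_map_content r) (IsOhmRush.mem_map_content s)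

theorem ohmRushContent_sup_eq_of_sub_mem {r s : R} {K : Ideal A}
    (h : r - s ∈ K.map (algebraMap A R)) :
    ohmRushContent A r ⊔ K = ohmRushContent A s ⊔ K := by
  have le_of_sub_mem {r s : R} (h : r - s ∈ K.map (algebraMap A R)) :
      ohmRushContent A r ≤ ohmRushContent A s ⊔ K := by
    rw [ohmRushContent_le_iff, Ideal.map_sup, ← add_sub_cancel s r]
    exact Submodule.add_mem_sup (IsOhmRush.mem_map_content s) h
  exact le_antisymm (sup_le (le_of_sub_mem h) le_sup_right)
    (sup_le (le_of_sub_mem (by rwa [← neg_sub, neg_mem_iff])) le_sup_right)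

theorem eventually_exists_ohmRushContent_eq [IsNoetherianRing A] {m : Ideal A}
    (hm : m ≤ (⊥ : Ideal A).jacobson) (I : Ideal A) :
    ∀ᶠ k in atTop, ∀ r : R, I ⊔ m ^ k = ohmRushContent A r ⊔ m ^ k →
      ∃ s : R, ohmRushContent A s = I ∧ r - s ∈ (m ^ k).map (algebraMap A R) := by
  filter_upwards [eventually_forall_eq_of_sup_pow_eq hm I] with k hk r hr
  have hrI : r ∈ (I ⊔ m ^ k).map (algebraMap A R) := by
    rw [← ohmRushContent_le_iff, hr]
    exact le_sup_left
  rw [Ideal.map_sup, Submodule.mem_sup] at hrI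
  obtain ⟨s, hs, t, ht, rfl⟩ := hrI
  have hst : s + t - s ∈ (m ^ k).map (algebraMap A R) := by rwa [add_sub_cancel_left]
  refine ⟨s, hk _ (ohmRushContent_le_iff.mpr hs) ?_, hst⟩
  rw [← ohmRushContent_sup_eq_of_sub_mem hst, hr]

theorem exists_ideal_sup_pow_eq_ohmRushContent_sup_pow (m : Ideal A) [IsPrecomplete m A]
    (r : ℕ → R) (hr : ∀ k, r k - r (k + 1) ∈ (m ^ k).map (algebraMap A R)) :
    ∃ I : Ideal A, ∀ k, I ⊔ m ^ k = ohmRushContent A (r k) ⊔ m ^ k := by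
  simpa only [smul_eq_mul, Ideal.mul_top] using
    exists_submodule_sup_pow_smul_top_eq m (fun k ↦ ohmRushContent A (r k)) fun k ↦ by
      simpa only [smul_eq_mul, Ideal.mul_top] using!
        ohmRushContent_sup_eq_of_sub_mem (hr k)

theorem exists_ideal_eventually_evalₐ_eq_mk [IsNoetherianRing A] (m : Ideal A)
    [IsAdicComplete m A] (ξ : AdicCompletion (m.map (algebraMap A R)) R) :
    ∃ I : Ideal A, ∀ᶠ k in atTop, ∃ r : R, ohmRushContent A r = I ∧
      AdicCompletion.evalₐ (m.map (algebraMap A R)) k ξ = Ideal.Quotient.mk _ r := by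
  obtain ⟨r, rfl⟩ := AdicCompletion.mk_surjective _ R ξ
  have hr (k : ℕ) : r k - r (k + 1) ∈ (m ^ k).map (algebraMap A R) := by
    simpa only [SModEq.sub_mem, smul_eq_mul, Ideal.mul_top, Ideal.map_pow] using r.2 k.le_succ
  obtain ⟨I, hI⟩ := exists_ideal_sup_pow_eq_ohmRushContent_sup_pow m r hr
  refine ⟨I, ?_⟩
  filter_upwards [eventually_exists_ohmRushContent_eq (R := R)
    (IsAdicComplete.le_jacobson_bot m) I] with k hk
  obtain ⟨s, hs, hrs⟩ := hk (r k) (hI k)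
  refine ⟨s, hs, ?_⟩
  rwa [AdicCompletion.evalₐ_mk, Ideal.Quotient.eq, ← Ideal.map_pow]

end OhmRush

theorem adicCompletion_eq_zero_of_eventually_evalₐ_eq_zero {R : Type*} [CommRing R] {J : Ideal R}
    {ξ : AdicCompletion J R} (h : ∀ᶠ k in atTop, AdicCompletion.evalₐ J k ξ = 0) : ξ = 0 := by
  obtain ⟨r, rfl⟩ := AdicCompletion.mk_surjective J R ξ
  obtain ⟨n, hn⟩ := eventually_atTop.mp h
  refine AdicCompletion.mk_zero_of _ _ _ ⟨n, fun k hk ↦ ⟨k, le_rfl, k, le_rfl, ?_⟩⟩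
  simpa only [AdicCompletion.evalₐ_mk, Ideal.Quotient.eq_zero_iff_mem, smul_eq_mul,
    Ideal.mul_top] using hn k hk

theorem isDomain_adicCompletion_of_isOhmRush {A R : Type*} [CommRing A] [CommRing R] [Algebra A R]
    [IsOhmRush A R] [IsNoetherianRing A] (m : Ideal A) [IsAdicComplete m A]
    (hm : m.map (algebraMap A R) ≠ ⊤)
    (h : ∀ r s : R, ohmRushContent A (r * s) ≤ m * (ohmRushContent A r * ohmRushContent A s) →
      r = 0 ∨ s = 0) :
    IsDomain (AdicCompletion (m.map (algebraMap A R)) R) := by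
  set J := m.map (algebraMap A R)
  have : Nontrivial (R ⧸ J ^ 1) := Ideal.Quotient.nontrivial_iff.mpr (by rwa [pow_one])
  have : Nontrivial (AdicCompletion J R) := (AdicCompletion.evalₐ J 1).toRingHom.domain_nontrivial
  have eq_zero {ξ : AdicCompletion J R} (hξ : ∀ᶠ k in atTop, ∃ r : R, ohmRushContent A r = ⊥ ∧
      AdicCompletion.evalₐ J k ξ = Ideal.Quotient.mk _ r) : ξ = 0 := by
    refine adicCompletion_eq_zero_of_eventually_evalₐ_eq_zero (hξ.mono ?_)
    rintro k ⟨r, hr, hrk⟩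
    rw [hrk, ohmRushContent_eq_bot_iff.mp hr, map_zero]
  have : NoZeroDivisors (AdicCompletion J R) := by
    refine ⟨fun {ξ η} hξη ↦ ?_⟩
    obtain ⟨I₁, h₁⟩ := exists_ideal_eventually_evalₐ_eq_mk m ξ
    obtain ⟨I₂, h₂⟩ := exists_ideal_eventually_evalₐ_eq_mk m η
    obtain ⟨k, ⟨r, hr, hrk⟩, ⟨s, hs, hsk⟩, hk⟩ :=
      (h₁.and (h₂.and (eventually_pow_inf_le_mul m (I₁ * I₂)))).exists
    have hrs : r * s ∈ (m ^ k).map (algebraMap A R) := by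
      rw [Ideal.map_pow, ← Ideal.Quotient.eq_zero_iff_mem, map_mul, ← hrk, ← hsk, ← map_mul, hξη,
        map_zero]
    have hle : ohmRushContent A (r * s) ≤ m * (ohmRushContent A r * ohmRushContent A s) := by
      rw [hr, hs]
      refine (le_inf (ohmRushContent_le_iff.mpr hrs) ?_).trans hk
      exact hr ▸ hs ▸ ohmRushContent_mul_le r s
    rcases h r s hle with rfl | rfl
    · exact .inl (eq_zero (by rwa [← hr, ohmRushContent_zero] at h₁))
    · exact .inr (eq_zero (by rwa [← hs, ohmRushContent_zero] at h₂))
  exact NoZeroDivisors.to_isDomain _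

section ContentIdeal

open Polynomial

theorem contentIdeal_C_mul {A : Type*} [CommSemiring A] (a : A) (f : A[X]) :
    (C a * f).contentIdeal = Ideal.span {a} * f.contentIdeal := by
  refine le_antisymm ((contentIdeal_mul_le_mul_contentIdeal _ _).trans_eq (by rw [contentIdeal_C]))
    ?_
  rw [contentIdeal_def f, Ideal.span_mul_span', Set.singleton_mul, Ideal.span_le]
  rintro _ ⟨c, hc, rfl⟩
  obtain ⟨n, -, rfl⟩ := mem_coeffs_iff.mp hc
  simpa only [coeff_C_mul] using! coeff_mem_contentIdeal (C a * f) n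

theorem exists_eq_C_mul_contentIdeal_eq_top {V : Type*} [CommRing V] [IsDomain V] [IsBezout V]
    (f : V[X]) : ∃ (a : V) (g : V[X]), f = C a * g ∧ g.contentIdeal = ⊤ := by
  rcases eq_or_ne f 0 with rfl | hf
  · exact ⟨0, 1, by simp, contentIdeal_one⟩
  have hprin : f.contentIdeal.IsPrincipal := IsBezout.isPrincipal_of_FG _ f.contentIdeal_FG
  obtain ⟨g, hg⟩ := hprin.contentIdeal_generator_dvd
  set a := hprin.generator
  have ha : a ≠ 0 := by
    intro ha
    rw [ha, C_0, zero_mul] at hg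
    exact hf hg
  refine ⟨a, g, hg, (Ideal.span_singleton_mul_right_inj ha).mp ?_⟩
  rw [← contentIdeal_C_mul, ← hg, Ideal.mul_top, Ideal.span_singleton_generator]

theorem contentIdeal_mul_of_isBezout {V : Type*} [CommRing V] [IsDomain V] [IsBezout V]
    (f g : V[X]) : (f * g).contentIdeal = f.contentIdeal * g.contentIdeal := by
  obtain ⟨a, f, rfl, hf⟩ := exists_eq_C_mul_contentIdeal_eq_top f
  obtain ⟨b, g, rfl, hg⟩ := exists_eq_C_mul_contentIdeal_eq_top g
  have hfg := contentIdeal_mul_eq_top_of_contentIdeal_eq_top hf hg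
  rw [mul_mul_mul_comm, ← C_mul]
  simp only [contentIdeal_C_mul, hf, hg, hfg, Ideal.mul_top,
    Ideal.span_singleton_mul_span_singleton]

theorem exists_injective_valuationSubring_map_le_maximalIdeal {A : Type*} (K : Type*) [CommRing A]
    [Field K] [Algebra A K] [FaithfulSMul A K] {I : Ideal A} (hI : I ≠ ⊤) :
    ∃ (V : ValuationSubring K) (φ : A →+* V),
      Function.Injective φ ∧ I.map φ ≤ maximalIdeal V := by
  have hinj := FaithfulSMul.algebraMap_injective A K
  have hbij : Function.Bijective (algebraMap A K).rangeRestrict :=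
    ⟨fun a b hab ↦ hinj (congrArg Subtype.val hab), (algebraMap A K).rangeRestrict_surjective⟩
  have hIK : I.map (algebraMap A K).rangeRestrict ≠ ⊤ := fun htop ↦ hI <| by
    rw [← Ideal.comap_map_of_bijective _ hbij (I := I), htop, Ideal.comap_top]
  obtain ⟨V, hV, hIV⟩ := Ideal.image_subset_nonunits_valuationSubring _ hIK
  refine ⟨V, (Subring.inclusion hV).comp (algebraMap A K).rangeRestrict,
    fun a b hab ↦ hinj (congrArg Subtype.val hab), Ideal.map_le_iff_le_comap.mpr fun a ha ↦ ?_⟩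
  obtain ⟨v, hv, hva⟩ : algebraMap A K a ∈ ((↑) : V → K) '' maximalIdeal V := by
    rw [V.image_maximalIdeal]
    exact hIV ⟨_, Ideal.mem_map_of_mem _ ha, rfl⟩
  obtain rfl : v = Subring.inclusion hV ((algebraMap A K).rangeRestrict a) := Subtype.ext hva
  exact hv

theorem eq_zero_or_eq_zero_of_contentIdeal_mul_le {A : Type*} [CommRing A] [IsDomain A]
    {I : Ideal A} (hI : I ≠ ⊤) {f g : A[X]}
    (h : (f * g).contentIdeal ≤ I * (f.contentIdeal * g.contentIdeal)) : f = 0 ∨ g = 0 := by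
  obtain ⟨V, φ, hφ, hIV⟩ :=
    exists_injective_valuationSubring_map_le_maximalIdeal (FractionRing A) hI
  have hle : (f.map φ * g.map φ).contentIdeal ≤
      maximalIdeal V • (f.map φ * g.map φ).contentIdeal := by
    calc (f.map φ * g.map φ).contentIdeal = (f * g).contentIdeal.map φ := by
          rw [← Polynomial.map_mul, contentIdeal_map_eq_map_contentIdeal]
      _ ≤ I.map φ * (f.map φ * g.map φ).contentIdeal := by
          simpa only [contentIdeal_mul_of_isBezout, contentIdeal_map_eq_map_contentIdeal,
            Ideal.map_mul] using Ideal.map_mono (f := φ) h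
      _ ≤ _ := Ideal.mul_mono_left hIV
  have hzero : f.map φ * g.map φ = 0 := (contentIdeal_eq_bot_iff _).mp
    (Submodule.eq_bot_of_le_smul_of_le_jacobson_bot _ _ (contentIdeal_FG _) hle
      (maximalIdeal_le_jacobson _))
  simpa only [mul_eq_zero, Polynomial.map_eq_zero_iff hφ] using hzero

variable {A : Type*} [CommRing A]

theorem contentIdeal_le_iff_mem_map_C {f : A[X]} {K : Ideal A} :
    f.contentIdeal ≤ K ↔ f ∈ K.map (C : A →+* A[X]) := by
  rw [← Ideal.mk_ker (I := K), ← Ideal.map_eq_bot_iff_le_ker,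
    ← contentIdeal_map_eq_map_contentIdeal, contentIdeal_eq_bot_iff, Ideal.mk_ker,
    Ideal.mem_map_C_iff, Polynomial.ext_iff]
  simp only [coeff_map, coeff_zero, Ideal.Quotient.eq_zero_iff_mem]

theorem mem_nonZeroDivisors_of_contentIdeal_eq_top {f : A[X]} (hf : f.contentIdeal = ⊤) :
    f ∈ nonZeroDivisors A[X] := by
  by_contra hdiv
  obtain ⟨a, ha, haf⟩ := Polynomial.notMem_nonZeroDivisors_iff.mp hdiv
  apply ha
  rw [← Ideal.span_singleton_eq_bot, ← Ideal.mul_top (Ideal.span {a}), ← hf, ← contentIdeal_C_mul,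
    ← smul_eq_C_mul, haf, contentIdeal_zero]

theorem contentIdeal_mul_eq_right_of_contentIdeal_eq_top {f : A[X]} (hf : f.contentIdeal = ⊤)
    (g : A[X]) : (f * g).contentIdeal = g.contentIdeal := by
  refine le_antisymm ((contentIdeal_mul_le_mul_contentIdeal f g).trans Ideal.mul_le_right) ?_
  set π := Ideal.Quotient.mk (f * g).contentIdeal
  have le_iff (p : A[X]) : p.contentIdeal ≤ (f * g).contentIdeal ↔ p.map π = 0 := by
    rw [← contentIdeal_eq_bot_iff, contentIdeal_map_eq_map_contentIdeal,
      Ideal.map_eq_bot_iff_le_ker, Ideal.mk_ker]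
  have hmul : f.map π * g.map π = 0 := by
    rw [← Polynomial.map_mul, ← le_iff]
  have hreg : f.map π ∈ nonZeroDivisors _ := mem_nonZeroDivisors_of_contentIdeal_eq_top <| by
    rw [contentIdeal_map_eq_map_contentIdeal, hf, Ideal.map_top]
  exact (le_iff g).mpr ((mul_left_mem_nonZeroDivisors_eq_zero_iff hreg).mp hmul)

theorem contentIdeal_eq_top_of_notMem_map_C_maximalIdeal [IsLocalRing A] {f : A[X]}
    (hf : f ∉ (maximalIdeal A).map (C : A →+* A[X])) : f.contentIdeal = ⊤ := by
  by_contra hne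
  exact hf (contentIdeal_le_iff_mem_map_C.mp (le_maximalIdeal hne))

theorem contentIdeal_eq_top_of_mem_closure {s : Set A[X]} (hs : ∀ f ∈ s, f.contentIdeal = ⊤)
    {f : A[X]} (hf : f ∈ Submonoid.closure s) : f.contentIdeal = ⊤ :=
  Submonoid.closure_induction hs contentIdeal_one
    (fun _ _ _ _ ↦ contentIdeal_mul_eq_top_of_contentIdeal_eq_top) hf

theorem mk'_mem_map_algebraMap_iff_contentIdeal_le {S : Submonoid A[X]}
    (hS : ∀ f ∈ S, f.contentIdeal = ⊤) {R : Type*} [CommRing R] [Algebra A R] [Algebra A[X] R]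
    [IsScalarTower A A[X] R] [IsLocalization S R] (f : A[X]) (s : S) (K : Ideal A) :
    IsLocalization.mk' R f s ∈ K.map (algebraMap A R) ↔ f.contentIdeal ≤ K := by
  rw [IsScalarTower.algebraMap_eq A A[X] R, ← Ideal.map_map, algebraMap_eq,
    IsLocalization.mk'_mem_map_algebraMap_iff S]
  simp only [← contentIdeal_le_iff_mem_map_C]
  refine ⟨fun ⟨t, ht, h⟩ ↦ ?_, fun h ↦ ⟨1, S.one_mem, by rwa [one_mul]⟩⟩
  rwa [contentIdeal_mul_eq_right_of_contentIdeal_eq_top (hS t ht)] at h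

theorem ohmRushContent_mk' {S : Submonoid A[X]} (hS : ∀ f ∈ S, f.contentIdeal = ⊤) {R : Type*}
    [CommRing R] [Algebra A R] [Algebra A[X] R] [IsScalarTower A A[X] R] [IsLocalization S R]
    (f : A[X]) (s : S) : ohmRushContent A (IsLocalization.mk' R f s) = f.contentIdeal :=
  ohmRushContent_eq_of_forall_mem_map_iff (mk'_mem_map_algebraMap_iff_contentIdeal_le hS f s)

theorem isOhmRush_of_isLocalization {S : Submonoid A[X]} (hS : ∀ f ∈ S, f.contentIdeal = ⊤)
    (R : Type*) [CommRing R] [Algebra A R] [Algebra A[X] R] [IsScalarTower A A[X] R]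
    [IsLocalization S R] : IsOhmRush A R where
  mem_map_content r := by
    obtain ⟨f, s, rfl⟩ := IsLocalization.exists_mk'_eq S r
    rw [ohmRushContent_mk' hS, mk'_mem_map_algebraMap_iff_contentIdeal_le hS]

theorem stmt3_general [IsDomain A] [IsNoetherianRing A] (m : Ideal A) [IsAdicComplete m A]
    {S : Submonoid A[X]} (hS : ∀ f ∈ S, f.contentIdeal = ⊤) (R : Type*) [CommRing R] [Algebra A R]
    [Algebra A[X] R] [IsScalarTower A A[X] R] [IsLocalization S R] :
    IsDomain (AdicCompletion (m.map (algebraMap A R)) R) := by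
  have hm : m ≠ ⊤ := by
    rintro rfl
    exact not_subsingleton A (IsAdicComplete.subsingleton (M := A) ‹_›)
  have hmR : m.map (algebraMap A R) ≠ ⊤ := by
    rwa [Ne, Ideal.eq_top_iff_one, ← map_one (algebraMap A[X] R), ← IsLocalization.mk'_one (M := S),
      mk'_mem_map_algebraMap_iff_contentIdeal_le hS, contentIdeal_one, top_le_iff]
  have := isOhmRush_of_isLocalization hS R
  refine isDomain_adicCompletion_of_isOhmRush m hmR fun r s hrs ↦ ?_
  obtain ⟨f, u, rfl⟩ := IsLocalization.exists_mk'_eq S r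
  obtain ⟨g, v, rfl⟩ := IsLocalization.exists_mk'_eq S s
  rw [← IsLocalization.mk'_mul] at hrs
  simp only [ohmRushContent_mk' hS] at hrs
  rcases eq_zero_or_eq_zero_of_contentIdeal_mul_le hm hrs with rfl | rfl
  · exact .inl (IsLocalization.mk'_zero u)
  · exact .inr (IsLocalization.mk'_zero v)

end ContentIdeal

/-- If `A` is a complete Noetherian local domain and `z` is an indeterminate over `A`, then the
completion of the local ring `A(z) = A[z]_{m_A A[z]}` with respect to its maximal ideal is again
a domain; that is, `A(z)` is analytically irreducible.

Here `A(z)` is realized as the localization of `A[z]` at the multiplicative closure of the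
complement of the prime ideal `m_A A[z]` (which is that complement itself), its maximal ideal is
the extension of `m_A A[z]`, and the completion is the adic completion at this ideal. -/
theorem stmt3 {A : Type*} [CommRing A] [IsDomain A] [IsNoetherianRing A] [IsLocalRing A]
    [IsAdicComplete (IsLocalRing.maximalIdeal A) A] :
    let P : Ideal (Polynomial A) := Ideal.map Polynomial.C (IsLocalRing.maximalIdeal A)
    let Az := Localization (Submonoid.closure {f : Polynomial A | f ∉ P})
    let J : Ideal Az := Ideal.map (algebraMap (Polynomial A) Az) P
    IsDomain (AdicCompletion J Az) := by
  intro P Az J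
  have hJ : J = (maximalIdeal A).map (algebraMap A Az) := by
    rw [IsScalarTower.algebraMap_eq A (Polynomial A) Az, ← Ideal.map_map, Polynomial.algebraMap_eq]
  rw [hJ]
  exact stmt3_general _ (S := Submonoid.closure {f | f ∉ P}) (fun f ↦
    contentIdeal_eq_top_of_mem_closure
      fun _ ↦ contentIdeal_eq_top_of_notMem_map_C_maximalIdeal) Az
end

section
/- Let u = [u₁,…,u_s] and T = [T₁,…,T_t] be row vectors of indeterminates over an algebraically closed field k, C an n×s matrix of linear forms in k[T], and A an n×t matrix of linear forms in k[u], satisfying C·uᵀ = A·Tᵀ. Then for any i: (1) I_i(A) ≠ 0 if and only if ht I₁(C λᵀ) ≥ i for general λ ∈ 𝔸^s; and (2) ht I_i(A) ≥ s if and only if ht I₁(C λᵀ) ≥ i for all nonzero λ ∈ 𝔸^s. -/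
open MvPolynomial

/-- The height of an ideal: the infimum of the heights of the primes containing it. -/
noncomputable def idealHeight {R : Type*} [CommRing R] (I : Ideal R) : ℕ∞ :=
  ⨅ (P : PrimeSpectrum R) (_ : I ≤ P.asIdeal), Order.height P

/-- The ideal of `r × r` minors of a matrix. -/
def minorsIdeal {R : Type*} [CommRing R] {m n : ℕ} (r : ℕ) (M : Matrix (Fin m) (Fin n) R) :
    Ideal R :=
  Ideal.span {x : R | ∃ (rs : Fin r → Fin m) (cs : Fin r → Fin n), x = (M.submatrix rs cs).det}

/-!
Setting `u = x` in `C·uᵀ = A·Tᵀ` identifies the entries of `C xᵀ` with the linear forms whose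
coefficient vectors are the rows of `A(x)`. An ideal generated by a space of linear forms is prime
of height the dimension of the space: Krull's height theorem gives `≤`, and a flag of subspaces
gives a chain of primes. Hence `I₁(C xᵀ)` has height `rank A(x)`, which is less than `i` exactly
when `x` lies in the zero locus of `I_i(A)`.

Part (1) then says that a nonzero polynomial over an infinite field is nonzero at some point. For
part (2), if the homogeneous ideal `I_i(A)` vanishes at `x ≠ 0`, it is contained in the ideal of the
line through `x`, whose height is `s - 1`; if it vanishes at most at the origin, then by the
Nullstellensatz its radical contains all variables, so its height is at least `s`.
-/

section Height

variable {R : Type*} [CommRing R]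

lemma idealHeight_eq_height (I : Ideal R) : idealHeight I = I.height := by
  apply le_antisymm
  · rw [I.height_eq_inf_minimalPrimes]
    refine le_iInf₂ fun J hJ => ?_
    rw [PrimeSpectrum.height_eq_orderHeight ⟨J, hJ.1.1⟩]
    exact iInf₂_le (⟨J, hJ.1.1⟩ : PrimeSpectrum R) hJ.1.2
  · refine le_iInf₂ fun P hP => ?_
    rw [← PrimeSpectrum.height_eq_orderHeight]
    exact Ideal.height_mono hP

lemma height_radical (I : Ideal R) : I.radical.height = I.height := by
  rw [Ideal.height_eq_inf_minimalPrimes, Ideal.radical_minimalPrimes,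
    ← Ideal.height_eq_inf_minimalPrimes]

end Height

section Rank

lemma exists_linearIndependent_row_submatrix {K m n : Type*} [Field K] [Finite m] [Fintype n]
    (M : Matrix m n K) {r : ℕ} (h : r ≤ M.rank) :
    ∃ rs : Fin r → m, LinearIndependent K (M.submatrix rs id).row := by
  rw [Matrix.rank_eq_finrank_span_row] at h
  obtain ⟨v, hv, -, hli⟩ := Submodule.exists_fun_fin_finrank_span_eq K (Set.range M.row)
  choose rs hrs using hv
  refine ⟨rs ∘ Fin.castLE h, ?_⟩
  have : (M.submatrix (rs ∘ Fin.castLE h) id).row = v ∘ Fin.castLE h :=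
    funext fun j => hrs (Fin.castLE h j)
  rw [this]
  exact hli.comp _ (Fin.castLE_injective h)

lemma le_rank_iff_exists_det_submatrix_ne_zero {K m n : Type*} [Field K] [Finite m] [Fintype n]
    (M : Matrix m n K) (r : ℕ) :
    r ≤ M.rank ↔ ∃ (rs : Fin r → m) (cs : Fin r → n), (M.submatrix rs cs).det ≠ 0 := by
  constructor
  · intro h
    obtain ⟨rs, hrs⟩ := exists_linearIndependent_row_submatrix M h
    have hrank : r ≤ (M.submatrix rs id).transpose.rank := by
      rw [Matrix.rank_transpose, hrs.rank_matrix, Fintype.card_fin]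
    obtain ⟨cs, hcs⟩ := exists_linearIndependent_row_submatrix _ hrank
    refine ⟨rs, cs, ?_⟩
    rw [← Matrix.det_transpose]
    exact ((Matrix.isUnit_iff_isUnit_det _).1
      (Matrix.linearIndependent_rows_iff_isUnit.1 hcs)).ne_zero
  · rintro ⟨rs, cs, hdet⟩
    calc r = (M.submatrix rs cs).rank := by rw [Matrix.rank_of_det_ne_zero hdet, Fintype.card_fin]
      _ ≤ M.rank := Matrix.rank_submatrix_le _ _ _

lemma minorsIdeal_le_ker_iff {R K : Type*} [CommRing R] [Field K] (φ : R →+* K) {m n : ℕ}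
    (A : Matrix (Fin m) (Fin n) R) (r : ℕ) :
    minorsIdeal r A ≤ RingHom.ker φ ↔ (A.map φ).rank < r := by
  have hdet (rs : Fin r → Fin m) (cs : Fin r → Fin n) :
      φ (A.submatrix rs cs).det = ((A.map φ).submatrix rs cs).det := by
    rw [RingHom.map_det]
    rfl
  rw [← not_le, le_rank_iff_exists_det_submatrix_ne_zero]
  simp only [← hdet]
  push Not
  refine Ideal.span_le.trans ⟨fun h rs cs => h ⟨rs, cs, rfl⟩, ?_⟩
  rintro h _ ⟨rs, cs, rfl⟩
  exact h rs cs

lemma mem_zeroLocus_minorsIdeal {σ K : Type*} [Field K] {m n : ℕ}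
    (A : Matrix (Fin m) (Fin n) (MvPolynomial σ K)) (r : ℕ) (x : σ → K) :
    x ∈ zeroLocus K (minorsIdeal r A) ↔ (A.map (eval x)).rank < r := by
  rw [← minorsIdeal_le_ker_iff, mem_zeroLocus_iff, aeval_eq_eval]
  rfl

end Rank

section LinearForm

/-- The linear form `∑ j, a j * X j` with coefficient vector `a`, as a linear map in `a`. -/
noncomputable def linearForm (R σ : Type*) [CommSemiring R] [Fintype σ] :
    (σ → R) →ₗ[R] MvPolynomial σ R :=
  Fintype.linearCombination R X

/-- The ideal generated by the linear forms with coefficient vector in `V`; over a field it is the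
prime ideal defining the linear subspace of affine space orthogonal to `V`. -/
noncomputable def linearIdeal {R σ : Type*} [CommSemiring R] [Fintype σ]
    (V : Submodule R (σ → R)) : Ideal (MvPolynomial σ R) :=
  Ideal.span (V.map (linearForm R σ))

/-- The substitution `X j ↦ linearForm (f (e j))`: the algebra map extending a linear map between
spaces of linear forms. -/
noncomputable def linearSubst {R σ τ : Type*} [CommSemiring R] [DecidableEq σ]
    [Fintype τ] (f : (σ → R) →ₗ[R] (τ → R)) : MvPolynomial σ R →ₐ[R] MvPolynomial τ R :=
  aeval fun j => linearForm R τ (f (Pi.single j 1))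

section CommSemiring

variable {R σ τ : Type*} [CommSemiring R] [Fintype σ] [Fintype τ]

lemma linearForm_apply (a : σ → R) : linearForm R σ a = ∑ j, a j • X j :=
  Fintype.linearCombination_apply ..

lemma linearForm_single [DecidableEq σ] (j : σ) : linearForm R σ (Pi.single j 1) = X j := by
  simp [linearForm]

lemma eval_linearForm (x a : σ → R) :
    eval x (linearForm R σ a) = Fintype.linearCombination R x a := by
  simp [linearForm_apply, Fintype.linearCombination_apply, smul_eval]

lemma linearForm_injective : Function.Injective (linearForm R σ) := by
  classical
  intro a b hab
  ext j
  simpa [eval_linearForm, Fintype.linearCombination_apply, Pi.single_apply] using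
    congrArg (eval (Pi.single j 1)) hab

lemma linearForm_mem_linearIdeal_of_mem {V : Submodule R (σ → R)} {a : σ → R} (ha : a ∈ V) :
    linearForm R σ a ∈ linearIdeal V :=
  Ideal.subset_span (Submodule.mem_map_of_mem ha)

lemma linearIdeal_mono {V W : Submodule R (σ → R)} (h : V ≤ W) : linearIdeal V ≤ linearIdeal W :=
  Ideal.span_mono (Submodule.map_mono h)

lemma linearIdeal_span (S : Set (σ → R)) :
    linearIdeal (Submodule.span R S) = Ideal.span (linearForm R σ '' S) := by
  rw [linearIdeal, Submodule.map_span]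
  exact Submodule.span_span_of_tower ..

lemma linearSubst_linearForm [DecidableEq σ] (f : (σ → R) →ₗ[R] (τ → R)) (a : σ → R) :
    linearSubst f (linearForm R σ a) = linearForm R τ (f a) := by
  have : (linearSubst f).toLinearMap ∘ₗ linearForm R σ = linearForm R τ ∘ₗ f :=
    LinearMap.pi_ext' fun j => LinearMap.ext_ring (by simp [linearForm_single, linearSubst])
  exact LinearMap.congr_fun this a

end CommSemiring

lemma ker_linearSubst {R σ : Type*} [CommRing R] [Fintype σ] [DecidableEq σ]
    {p : (σ → R) →ₗ[R] (σ → R)} (hp : IsIdempotentElem p) :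
    RingHom.ker (linearSubst p) = linearIdeal (LinearMap.ker p) := by
  apply le_antisymm
  · have hX (j : σ) : X j - linearSubst p (X j) ∈ linearIdeal (LinearMap.ker p) := by
      rw [← linearForm_single, linearSubst_linearForm, ← map_sub]
      refine linearForm_mem_linearIdeal_of_mem ?_
      rw [LinearMap.mem_ker, map_sub, sub_eq_zero]
      exact (LinearMap.congr_fun hp _).symm
    have hmk : (Ideal.Quotient.mkₐ R (linearIdeal (LinearMap.ker p))).comp (linearSubst p) =
        Ideal.Quotient.mkₐ R (linearIdeal (LinearMap.ker p)) :=
      algHom_ext fun j => (Ideal.Quotient.eq.2 (hX j)).symm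
    intro f hf
    have hf0 : linearSubst p f = 0 := hf
    have hf' := AlgHom.congr_fun hmk f
    rw [AlgHom.comp_apply, hf0, map_zero] at hf'
    exact Ideal.Quotient.eq_zero_iff_mem.1 hf'.symm
  · refine Ideal.span_le.2 ?_
    rintro _ ⟨a, ha, rfl⟩
    change linearSubst p _ = 0
    rw [linearSubst_linearForm, LinearMap.mem_ker.1 ha, map_zero]

section Field

variable {k σ : Type*} [Field k] [Fintype σ]

lemma exists_linearIdeal_eq_ker [DecidableEq σ] (V : Submodule k (σ → k)) :
    ∃ p : (σ → k) →ₗ[k] (σ → k), LinearMap.ker p = V ∧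
      linearIdeal V = RingHom.ker (linearSubst p) := by
  obtain ⟨W, hW⟩ := V.exists_isCompl
  refine ⟨W.projection V hW.symm, Submodule.ker_projection _, ?_⟩
  rw [ker_linearSubst (Submodule.isIdempotentElem_projection _), Submodule.ker_projection]

instance linearIdeal_isPrime (V : Submodule k (σ → k)) : (linearIdeal V).IsPrime := by
  classical
  obtain ⟨p, -, hp⟩ := exists_linearIdeal_eq_ker V
  exact hp ▸ RingHom.ker_isPrime _

lemma linearForm_mem_linearIdeal {V : Submodule k (σ → k)} {a : σ → k} :
    linearForm k σ a ∈ linearIdeal V ↔ a ∈ V := by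
  classical
  refine ⟨fun h => ?_, linearForm_mem_linearIdeal_of_mem⟩
  obtain ⟨p, hker, hp⟩ := exists_linearIdeal_eq_ker V
  rw [hp, RingHom.mem_ker, linearSubst_linearForm, ← map_zero (linearForm k σ)] at h
  rw [← hker]
  exact linearForm_injective h

lemma linearIdeal_le_linearIdeal_iff {V W : Submodule k (σ → k)} :
    linearIdeal V ≤ linearIdeal W ↔ V ≤ W :=
  ⟨fun h _ ha => linearForm_mem_linearIdeal.1 (h (linearForm_mem_linearIdeal.2 ha)),
    linearIdeal_mono⟩

lemma height_linearIdeal_le (V : Submodule k (σ → k)) :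
    (linearIdeal V).height ≤ Module.finrank k V := by
  have hfg : V.FG := IsNoetherian.noetherian V
  have hfin : V.generators.Finite := hfg.finite_generators
  have hspan : linearIdeal V = Ideal.span (linearForm k σ '' V.generators) := by
    rw [← linearIdeal_span, V.span_generators]
  refine ((linearIdeal V).height_le_spanFinrank (linearIdeal_isPrime V).ne_top).trans
    (Nat.cast_le.2 ?_)
  calc (linearIdeal V).spanFinrank
      ≤ (linearForm k σ '' V.generators).ncard := by
        rw [hspan]
        exact Submodule.spanFinrank_span_le_ncard_of_finite (hfin.image _)
    _ ≤ V.generators.ncard := Set.ncard_image_le hfin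
    _ = Module.finrank k V := by
        rw [hfg.generators_ncard, Module.finrank_eq_spanFinrank_of_free, V.spanFinrank_top]

lemma height_linearIdeal (V : Submodule k (σ → k)) :
    (linearIdeal V).height = Module.finrank k V := by
  refine (height_linearIdeal_le V).antisymm ?_
  -- The flags of subspaces below `V` give chains of primes below `linearIdeal V`.
  let toSpec (W : Submodule k (σ → k)) : PrimeSpectrum (MvPolynomial σ k) :=
    ⟨linearIdeal W, linearIdeal_isPrime W⟩
  have hmono : StrictMono toSpec :=
    strictMono_of_le_iff_le fun _ _ => linearIdeal_le_linearIdeal_iff.symm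
  calc (Module.finrank k V : ℕ∞) = Order.height V := by
        rw [← Module.length_eq_finrank, Module.length_submodule]
    _ ≤ Order.height (toSpec V) := Order.height_le_height_apply_of_strictMono _ hmono V
    _ = (linearIdeal V).height := (PrimeSpectrum.height_eq_orderHeight _).symm

lemma height_span_range_linearForm_row {m : Type*} [Finite m] (M : Matrix m σ k) :
    (Ideal.span (Set.range fun p => linearForm k σ (M.row p))).height = M.rank := by
  rw [Matrix.rank_eq_finrank_span_row, ← height_linearIdeal, linearIdeal_span, ← Set.range_comp]
  rfl

end Field

lemma sum_smul_eq_linearForm {R σ τ : Type*} [CommSemiring R] [Fintype σ] [Fintype τ]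
    {c : σ → MvPolynomial τ R} {a : τ → MvPolynomial σ R}
    (h : ∑ j, rename (Sum.inr : τ → σ ⊕ τ) (c j) * X (Sum.inl j) =
      ∑ l, rename (Sum.inl : σ → σ ⊕ τ) (a l) * X (Sum.inr l)) (x : σ → R) :
    ∑ j, x j • c j = linearForm R τ fun l => eval x (a l) := by
  have hconst (f : MvPolynomial σ R) :
      aeval (fun j => C (x j) : σ → MvPolynomial τ R) f = C (eval x f) := by
    simpa [algebraMap_eq, Function.comp_def, aeval_eq_eval] using
      aeval_algebraMap_apply (MvPolynomial τ R) x f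
  have heval := congrArg (aeval (Sum.elim (fun j => C (x j)) X : σ ⊕ τ → MvPolynomial τ R)) h
  simp only [map_sum, map_mul, aeval_X, aeval_rename, Sum.elim_inl, Sum.elim_inr,
    Sum.elim_comp_inl, Sum.elim_comp_inr, aeval_X_left_apply, hconst] at heval
  calc ∑ j, x j • c j = ∑ j, c j * C (x j) := by simp only [smul_eq_C_mul, mul_comm]
    _ = ∑ l, C (eval x (a l)) * X l := heval
    _ = linearForm R τ fun l => eval x (a l) := by simp only [linearForm_apply, smul_eq_C_mul]

end LinearForm

section Homogeneous

lemma aeval_smul_const_of_isHomogeneous {R S σ : Type*} [CommSemiring R] [CommSemiring S]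
    [Algebra R S] {f : MvPolynomial σ R} {d : ℕ} (hf : f.IsHomogeneous d) (x : σ → R) (y : S) :
    aeval (fun j => x j • y) f = eval x f • y ^ d := by
  rw [aeval_def, eval₂_eq, eval_eq, Finset.sum_smul]
  refine Finset.sum_congr rfl fun m hm => ?_
  calc algebraMap R S (coeff m f) * ∏ j ∈ m.support, (x j • y) ^ m j
      = coeff m f • ((∏ j ∈ m.support, x j ^ m j) • y ^ ∑ j ∈ m.support, m j) := by
        simp_rw [← Algebra.smul_def, smul_pow, Finset.prod_smul, Finset.prod_pow_eq_pow_sum]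
    _ = (coeff m f * ∏ j ∈ m.support, x j ^ m j) • y ^ d := by
        rw [smul_smul, hf.degree_eq_sum_deg_support hm]

lemma isHomogeneous_det {R σ n : Type*} [CommRing R] [Fintype n] [DecidableEq n]
    {M : Matrix n n (MvPolynomial σ R)} {d : ℕ} (hM : ∀ i j, (M i j).IsHomogeneous d) :
    M.det.IsHomogeneous (Fintype.card n * d) := by
  rw [Matrix.det_apply]
  refine IsHomogeneous.sum _ _ _ fun τ _ => ?_
  have hprod : (∏ i, M (τ i) i).IsHomogeneous (Fintype.card n * d) := by
    simpa using IsHomogeneous.prod Finset.univ (fun i => M (τ i) i) (fun _ => d) fun i _ => hM _ _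
  exact Submodule.smul_of_tower_mem (homogeneousSubmodule σ R _) _ hprod

attribute [local instance] MvPolynomial.gradedAlgebra

lemma minorsIdeal_isHomogeneous {R σ : Type*} [CommRing R] {m n d : ℕ}
    {A : Matrix (Fin m) (Fin n) (MvPolynomial σ R)} (hA : ∀ i j, (A i j).IsHomogeneous d) (r : ℕ) :
    (minorsIdeal r A).IsHomogeneous (homogeneousSubmodule σ R) := by
  refine Ideal.homogeneous_span _ _ ?_
  rintro _ ⟨rs, cs, rfl⟩
  exact ⟨_, isHomogeneous_det fun i j => hA (rs i) (cs j)⟩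

variable {k σ : Type*} [Field k] [Fintype σ]

lemma mem_linearIdeal_ker_of_eval_eq_zero {f : MvPolynomial σ k} {d : ℕ}
    (hf : f.IsHomogeneous d) {x : σ → k} (hx : x ≠ 0) (hfx : eval x f = 0) :
    f ∈ linearIdeal (LinearMap.ker (Fintype.linearCombination k x)) := by
  classical
  obtain ⟨j, hj : x j ≠ 0⟩ := Function.ne_iff.1 hx
  -- Modulo this ideal the vector of variables is a multiple of `x`, so `f` becomes a multiple of
  -- `eval x f` by homogeneity.
  let q := Ideal.Quotient.mkₐ k (linearIdeal (LinearMap.ker (Fintype.linearCombination k x)))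
  have hX : ⇑q ∘ X = fun i => x i • q ((x j)⁻¹ • X j) := by
    ext i
    rw [Function.comp_apply, ← map_smul, ← linearForm_single, ← linearForm_single, ← map_smul,
      ← map_smul]
    refine Ideal.Quotient.eq.2 ?_
    rw [← map_sub]
    refine linearForm_mem_linearIdeal_of_mem ?_
    simp [Fintype.linearCombination_apply_single, hj]
  refine Ideal.Quotient.eq_zero_iff_mem.1 ?_
  calc q f = aeval (⇑q ∘ X) f := (DFunLike.congr_fun (aeval_unique q) f)
    _ = 0 := by rw [hX, aeval_smul_const_of_isHomogeneous hf, hfx, zero_smul]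

lemma height_lt_card_of_mem_zeroLocus {I : Ideal (MvPolynomial σ k)}
    (hI : I.IsHomogeneous (homogeneousSubmodule σ k)) {x : σ → k} (hx : x ≠ 0)
    (hxI : x ∈ zeroLocus k I) : I.height < Fintype.card σ := by
  classical
  set W := LinearMap.ker (Fintype.linearCombination k x) with hW
  have hIW : I ≤ linearIdeal W := fun f hf => by
    rw [← sum_homogeneousComponent f]
    refine Ideal.sum_mem _ fun d _ => mem_linearIdeal_ker_of_eval_eq_zero
      (homogeneousComponent_isHomogeneous d f) hx ?_
    simpa [aeval_eq_eval] using hxI _ (homogeneousComponent_mem_of_mem hI hf d)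
  have hWtop : W ≠ ⊤ := fun h => hx <| funext fun j => by
    have : Pi.single j 1 ∈ W := h ▸ Submodule.mem_top
    simpa [hW] using this
  calc I.height ≤ (linearIdeal W).height := Ideal.height_mono hIW
    _ = Module.finrank k W := height_linearIdeal W
    _ < Module.finrank k (σ → k) := Nat.cast_lt.2 (Submodule.finrank_lt hWtop)
    _ = Fintype.card σ := by rw [Module.finrank_fintype_fun_eq_card]

end Homogeneous

section ZeroLocus

variable {k σ : Type*} [Field k]

lemma ne_bot_iff_exists_forall_notMem_zeroLocus [Infinite k] {I : Ideal (MvPolynomial σ k)} :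
    I ≠ ⊥ ↔ ∃ h : MvPolynomial σ k, h ≠ 0 ∧ ∀ x, eval x h ≠ 0 → x ∉ zeroLocus k I := by
  constructor
  · intro hI
    obtain ⟨f, hfI, hf⟩ := Submodule.exists_mem_ne_zero_of_ne_bot hI
    exact ⟨f, hf, fun x hfx hx => hfx (by simpa [aeval_eq_eval] using hx f hfI)⟩
  · rintro ⟨h, h0, hh⟩ rfl
    refine h0 (MvPolynomial.funext fun x => ?_)
    rw [map_zero]
    by_contra hx
    exact hh x hx (by simp)

variable [Fintype σ]

lemma card_le_height_of_zeroLocus_subset [IsAlgClosed k] {I : Ideal (MvPolynomial σ k)}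
    (hI : zeroLocus k I ⊆ {0}) : Fintype.card σ ≤ I.height := by
  have hrad : linearIdeal ⊤ ≤ I.radical := by
    rw [← vanishingIdeal_zeroLocus_eq_radical (K := k)]
    refine Ideal.span_le.2 ?_
    rintro _ ⟨a, -, rfl⟩ x hx
    obtain rfl : x = 0 := hI hx
    rw [aeval_eq_eval, eval_linearForm, Fintype.linearCombination_apply]
    simp
  calc (Fintype.card σ : ℕ∞) = (linearIdeal (⊤ : Submodule k (σ → k))).height := by
        rw [height_linearIdeal, finrank_top, Module.finrank_fintype_fun_eq_card]
    _ ≤ I.radical.height := Ideal.height_mono hrad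
    _ = I.height := height_radical I

attribute [local instance] MvPolynomial.gradedAlgebra

lemma card_le_height_iff_forall_notMem_zeroLocus [IsAlgClosed k] {I : Ideal (MvPolynomial σ k)}
    (hI : I.IsHomogeneous (homogeneousSubmodule σ k)) :
    Fintype.card σ ≤ I.height ↔ ∀ x, x ≠ 0 → x ∉ zeroLocus k I :=
  ⟨fun h _ hx hxI => (height_lt_card_of_mem_zeroLocus hI hx hxI).not_ge h,
    fun h => card_le_height_of_zeroLocus_subset fun x hx => by_contra fun hx0 => h x hx0 hx⟩

end ZeroLocus

/-- Let `u = [u₁,…,u_s]` and `T = [T₁,…,T_t]` be row vectors of indeterminates over an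
algebraically closed field `k`, `C` an `n × s` matrix of linear forms in `k[T]`, and `A` an
`n × t` matrix of linear forms in `k[u]`, satisfying `C·uᵀ = A·Tᵀ`.  Then for any `i`:
(1) `I_i(A) ≠ 0` if and only if `ht I₁(C λᵀ) ≥ i` for general `λ ∈ 𝔸^s`; and
(2) `ht I_i(A) ≥ s` if and only if `ht I₁(C λᵀ) ≥ i` for all nonzero `λ ∈ 𝔸^s`. -/
theorem stmt7 {k : Type*} [Field k] [IsAlgClosed k] (n s t : ℕ)
    (C : Matrix (Fin n) (Fin s) (MvPolynomial (Fin t) k))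
    (A : Matrix (Fin n) (Fin t) (MvPolynomial (Fin s) k))
    (hC : ∀ i j, (C i j).IsHomogeneous 1)
    (hA : ∀ i l, (A i l).IsHomogeneous 1)
    (hrel : ∀ i : Fin n,
      ∑ j : Fin s,
          rename (Sum.inr : Fin t → Fin s ⊕ Fin t) (C i j) * X (Sum.inl j) =
        ∑ l : Fin t,
          rename (Sum.inl : Fin s → Fin s ⊕ Fin t) (A i l) * X (Sum.inr l))
    (i : ℕ) :
    (minorsIdeal i A ≠ ⊥ ↔
      ∃ h : MvPolynomial (Fin s) k, h ≠ 0 ∧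
        ∀ l : Fin s → k, eval l h ≠ 0 →
          (i : ℕ∞) ≤ idealHeight
            (Ideal.span (Set.range fun p : Fin n => ∑ j : Fin s, l j • C p j))) ∧
    ((s : ℕ∞) ≤ idealHeight (minorsIdeal i A) ↔
      ∀ l : Fin s → k, l ≠ 0 →
        (i : ℕ∞) ≤ idealHeight
          (Ideal.span (Set.range fun p : Fin n => ∑ j : Fin s, l j • C p j))) := by
  have hrank (x : Fin s → k) :
      idealHeight (Ideal.span (Set.range fun p : Fin n => ∑ j, x j • C p j)) =
        (A.map (eval x)).rank := by
    simp only [fun p => sum_smul_eq_linearForm (hrel p) x, idealHeight_eq_height]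
    exact height_span_range_linearForm_row (A.map (eval x))
  have hmem (x : Fin s → k) :
      (i : ℕ∞) ≤ idealHeight (Ideal.span (Set.range fun p : Fin n => ∑ j, x j • C p j)) ↔
        x ∉ zeroLocus k (minorsIdeal i A) := by
    rw [hrank, Nat.cast_le, mem_zeroLocus_minorsIdeal, not_lt]
  simp only [hmem]
  have : Infinite k := IsAlgClosed.instInfinite
  refine ⟨ne_bot_iff_exists_forall_notMem_zeroLocus, ?_⟩
  rw [idealHeight_eq_height, ← card_le_height_iff_forall_notMem_zeroLocus
    (minorsIdeal_isHomogeneous hA i), Fintype.card_fin]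
end

section
/- Let C be a matrix of linear forms with 2 columns in a polynomial ring R = k[T₁,T₂,T₃] in three variables over a field k. If some generalized column ideal I₁(C λᵀ) (for λ ∈ k² nonzero) is zero-dimensional (i.e., primary to the maximal homogeneous ideal) and ht I₂(C) = 2, then e(R/I₂(C)) + μ(I₂(C)) = 6, where e denotes multiplicity and μ denotes minimal number of generators. -/
open MvPolynomial

/-- The Hilbert function of `R/I` in degree `m`, for a homogeneous ideal `I` of
`R = k[T₁,T₂,T₃]`: the `k`-dimension of `(R/I)_m = R_m / (I ∩ R_m)`. -/
noncomputable def hilbertFn (k : Type*) [Field k] (I : Ideal (MvPolynomial (Fin 3) k)) (m : ℕ) :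
    ℕ :=
  Module.finrank k
    (↥(homogeneousSubmodule (Fin 3) k m) ⧸
      Submodule.comap (homogeneousSubmodule (Fin 3) k m).subtype
        (Submodule.restrictScalars k (I : Submodule (MvPolynomial (Fin 3) k)
          (MvPolynomial (Fin 3) k))))

/-!
Let `V` be the space of linear forms of `R = k[σ]` and `I = I₂(C)`. After a column operation the
given generalized column is the first one, and being primary to the irrelevant ideal its entries
span `V`. The row space of `C` then contains the graph of an endomorphism `a` of `V`, and `a`
preserves `U = {u ∈ V | V u ⊆ I}`. Enlarging the row space by `0 × U` does not change `I`, so `I` is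
determined by the quotient map `π` from `V` to the `k[X]`-module `M = V/U` on which `X` acts as `a`:
it is generated by the quadrics `x y' - y x'` with `π x' = X • π x` and `π y' = X • π y`.

If `M` is cyclic, it is an algebra `B = k[X]/J`, and `π` extends to an algebra map `R → B`. Its
kernel agrees with `I` in every degree at least `2`, so there the Hilbert function of `R/I` is
`dim M`. If `M` is not cyclic, it maps onto `L × L` for a residue field `L` of `k[X]`; then `I` lies
in the kernel of a map `R → L[Y₀, Y₁]` sending some linear forms to `Y₀` and `Y₁`, whence
`ht I ≤ dim R - 2`.

Under the height hypothesis `M` is therefore cyclic and `e(R/I) = dim (R/I)₂`. Since `I` is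
generated by quadrics, `μ(I) = dim I₂`, and the two numbers add up to `dim R₂`.
-/

section Graded

variable {σ k : Type*} [Field k]

/-- The Hilbert function `m ↦ dim (R/I)_m` for a homogeneous ideal `I` of a polynomial ring `R`
in any set of variables, extending `hilbertFn`. -/
noncomputable def hilbertFunction (I : Ideal (MvPolynomial σ k)) (m : ℕ) : ℕ :=
  Module.finrank k
    (homogeneousSubmodule σ k m ⧸ (I.restrictScalars k).submoduleOf (homogeneousSubmodule σ k m))

instance finite_homogeneousSubmodule [Finite σ] (m : ℕ) :
    Module.Finite k (homogeneousSubmodule σ k m) :=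
  Module.Finite.iff_fg.2 (homogeneousSubmodule_fg σ k m)

theorem finrank_homogeneousSubmodule [Fintype σ] (m : ℕ) :
    Module.finrank k (homogeneousSubmodule σ k m) = (Fintype.card σ).multichoose m := by
  classical
  have exponents : {d : σ →₀ ℕ | d.degree = m} = (Finset.univ : Finset σ).finsuppAntidiag m := by
    ext d
    simp [Finset.mem_finsuppAntidiag, Finsupp.degree_eq_sum]
  rw [homogeneousSubmodule_eq_finsupp_supported,
    (AddMonoidAlgebra.supportedEquivFinsupp (R := k) (S := k) _).finrank_eq, exponents,
    Module.finrank_finsupp_self]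
  simp [Finset.card_finsuppAntidiag_nat_eq_multichoose]

theorem hilbertFunction_add_finrank_inf [Finite σ] (I : Ideal (MvPolynomial σ k)) (m : ℕ) :
    hilbertFunction I m +
        Module.finrank k ↥(I.restrictScalars k ⊓ homogeneousSubmodule σ k m) =
      Module.finrank k (homogeneousSubmodule σ k m) := by
  rw [hilbertFunction, inf_comm, ← Submodule.map_comap_subtype, Submodule.finrank_map_subtype_eq]
  exact Submodule.finrank_quotient_add_finrank _

theorem homogeneousComponent_mul_of_isHomogeneous {q : MvPolynomial σ k} {d : ℕ}
    (hq : q.IsHomogeneous d) (g : MvPolynomial σ k) :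
    homogeneousComponent d (g * q) = constantCoeff g • q := by
  have h (i : ℕ) : homogeneousComponent d (homogeneousComponent i g * q) =
      if d = i + d then homogeneousComponent i g * q else 0 :=
    homogeneousComponent_of_mem ((homogeneousComponent_isHomogeneous i g).mul hq)
  conv_lhs => rw [← sum_homogeneousComponent g]
  simp only [Finset.sum_mul, map_sum, h, right_eq_add]
  rw [Finset.sum_ite_eq' _ 0, if_pos (by simp), homogeneousComponent_zero, smul_eq_C_mul,
    constantCoeff_eq]

theorem homogeneousComponent_mul_of_mem_span {G : Set (MvPolynomial σ k)} {d : ℕ}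
    (hG : ∀ q ∈ G, q.IsHomogeneous d) {f : MvPolynomial σ k} (hf : f ∈ Ideal.span G)
    (g : MvPolynomial σ k) :
    homogeneousComponent d (g * f) = constantCoeff g • homogeneousComponent d f := by
  induction hf using Submodule.span_induction generalizing g with
  | mem q hq =>
    rw [homogeneousComponent_mul_of_isHomogeneous (hG q hq),
      homogeneousComponent_eq_self (hG q hq)]
  | zero => simp
  | add f₁ f₂ _ _ h₁ h₂ => rw [mul_add, map_add, h₁, h₂, map_add, smul_add]
  | smul r f _ h => rw [smul_eq_mul, ← mul_assoc, h, h, smul_smul, map_mul]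

theorem span_inf_homogeneousSubmodule_le_span_image {G F : Set (MvPolynomial σ k)} {d : ℕ}
    (hG : ∀ q ∈ G, q.IsHomogeneous d) (hF : Ideal.span F = Ideal.span G) :
    (Ideal.span G).restrictScalars k ⊓ homogeneousSubmodule σ k d ≤
      Submodule.span k (homogeneousComponent d '' F) := by
  rintro f ⟨hfG, hfd⟩
  rw [← homogeneousComponent_eq_self hfd]
  replace hfG : f ∈ Ideal.span F := hF ▸ hfG
  clear hfd
  induction hfG using Submodule.span_induction with
  | mem q hq => exact Submodule.subset_span ⟨q, hq, rfl⟩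
  | zero => simp
  | add f₁ f₂ _ _ h₁ h₂ => rw [map_add]; exact add_mem h₁ h₂
  | smul r f hf h =>
    rw [smul_eq_mul, homogeneousComponent_mul_of_mem_span hG (hF ▸ hf)]
    exact Submodule.smul_mem _ _ h

theorem sInf_card_generators_eq_finrank [Finite σ] {G : Set (MvPolynomial σ k)} {d : ℕ}
    (hG : ∀ q ∈ G, q.IsHomogeneous d) :
    sInf {m : ℕ | ∃ F : Finset (MvPolynomial σ k),
        F.card = m ∧ Ideal.span (F : Set (MvPolynomial σ k)) = Ideal.span G} =
      Module.finrank k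
        ↥((Ideal.span G).restrictScalars k ⊓ homogeneousSubmodule σ k d) := by
  classical
  set Q := (Ideal.span G).restrictScalars k ⊓ homogeneousSubmodule σ k d
  have : FiniteDimensional k Q := Submodule.finiteDimensional_of_le inf_le_right
  refine le_antisymm (Nat.sInf_le ?_) (le_csInf ?_ ?_)
  · have : FiniteDimensional k (Submodule.span k (Q : Set (MvPolynomial σ k))) := by
      rwa [Submodule.span_eq]
    obtain ⟨F, hFQ, hFcard, hFspan, -⟩ := Submodule.exists_finset_span_eq_linearIndepOn k
      (Q : Set (MvPolynomial σ k))
    rw [Submodule.span_eq] at hFcard hFspan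
    have hQF : Q ≤ (Ideal.span (F : Set (MvPolynomial σ k))).restrictScalars k :=
      hFspan ▸ Submodule.span_le.2 Ideal.subset_span
    exact ⟨F, hFcard, le_antisymm (Ideal.span_le.2 fun q hq => (hFQ hq).1)
      (Ideal.span_le.2 fun q hq => hQF ⟨Ideal.subset_span hq, hG q hq⟩)⟩
  · obtain ⟨F, hF⟩ := IsNoetherian.noetherian (Ideal.span G)
    exact ⟨_, F, rfl, hF⟩
  · rintro _ ⟨F, rfl, hF⟩
    have hspan := span_inf_homogeneousSubmodule_le_span_image hG hF
    rw [← Finset.coe_image] at hspan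
    exact (Submodule.finrank_mono hspan).trans
      ((finrank_span_finset_le_card _).trans Finset.card_image_le)

end Graded

section LinearForms

variable (σ k : Type*) [Field k]

/-- The space of linear forms in the variables `σ`, the degree-one part of `k[σ]`. -/
abbrev LinearForms : Type _ :=
  homogeneousSubmodule σ k 1

variable {σ k}

/-- The algebra map out of `k[σ]`, regarded as the symmetric algebra of its space of linear forms,
that extends a `k`-linear map `g` on linear forms. -/
noncomputable def liftLinearForms {B : Type*} [CommRing B] [Algebra k B]
    (g : LinearForms σ k →ₗ[k] B) : MvPolynomial σ k →ₐ[k] B :=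
  aeval fun i => g ⟨X i, isHomogeneous_X k i⟩

theorem span_range_X_eq_top :
    Submodule.span k (Set.range fun i => (⟨X i, isHomogeneous_X k i⟩ : LinearForms σ k)) = ⊤ := by
  apply Submodule.map_injective_of_injective (Submodule.subtype_injective _)
  rw [Submodule.map_span, ← Set.range_comp, Submodule.map_subtype_top]
  exact homogeneousSubmodule_one_eq_span_X.symm

theorem liftLinearForms_coe {B : Type*} [CommRing B] [Algebra k B]
    (g : LinearForms σ k →ₗ[k] B) (x : LinearForms σ k) : liftLinearForms g x = g x := by
  have hcomp : (liftLinearForms g).toLinearMap ∘ₗ (homogeneousSubmodule σ k 1).subtype = g :=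
    LinearMap.ext_on_range span_range_X_eq_top fun i => by simp [liftLinearForms]
  exact LinearMap.congr_fun hcomp x

theorem coe_linearForms_mem_span_X (x : LinearForms σ k) :
    (x : MvPolynomial σ k) ∈ Ideal.span (Set.range (X : σ → MvPolynomial σ k)) := by
  obtain ⟨x, hx⟩ := x
  rw [homogeneousSubmodule_one_eq_span_X] at hx
  exact Submodule.span_le_restrictScalars k _ _ hx

theorem span_eq_top_of_pow_le_span_range {ι : Type*} {L : ι → LinearForms σ k} {t : ℕ}
    (hL : Ideal.span (Set.range (X : σ → MvPolynomial σ k)) ^ t ≤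
      Ideal.span (Set.range fun i => (L i : MvPolynomial σ k))) :
    Submodule.span k (Set.range L) = ⊤ := by
  by_contra hne
  obtain ⟨f, hf, hker⟩ := Submodule.exists_le_ker_of_lt_top _ (lt_top_iff_ne_top.2 hne)
  have hspan_le : Ideal.span (Set.range fun i => (L i : MvPolynomial σ k)) ≤
      RingHom.ker (liftLinearForms f) := by
    rw [Ideal.span_le]
    rintro _ ⟨i, rfl⟩
    simpa [liftLinearForms_coe] using hker (Submodule.subset_span ⟨i, rfl⟩)
  refine hf (LinearMap.ext fun x => ?_)
  have hxt := hspan_le 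
    (hL (Ideal.pow_mem_pow (coe_linearForms_mem_span_X x) t))
  rw [RingHom.mem_ker, map_pow, liftLinearForms_coe] at hxt
  exact eq_zero_of_pow_eq_zero hxt

end LinearForms

section RowMinors

variable {σ k : Type*} [Field k]

/-- The ideal of `2 × 2` minors of the two-column matrix of linear forms with set of rows `S`. -/
noncomputable def rowMinorsIdeal (S : Set (LinearForms σ k × LinearForms σ k)) :
    Ideal (MvPolynomial σ k) :=
  Ideal.span {f | ∃ r ∈ S, ∃ s ∈ S, f = r.1 * s.2 - s.1 * r.2}

theorem mul_sub_mul_mem_rowMinorsIdeal {S : Set (LinearForms σ k × LinearForms σ k)}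
    {r s : LinearForms σ k × LinearForms σ k} (hr : r ∈ S) (hs : s ∈ S) :
    (r.1 * s.2 - s.1 * r.2 : MvPolynomial σ k) ∈ rowMinorsIdeal S :=
  Ideal.subset_span ⟨r, hr, s, hs, rfl⟩

theorem rowMinorsIdeal_span (S : Set (LinearForms σ k × LinearForms σ k)) :
    rowMinorsIdeal (Submodule.span k S : Set (LinearForms σ k × LinearForms σ k)) =
      rowMinorsIdeal S := by
  refine le_antisymm (Ideal.span_le.2 ?_) (Ideal.span_mono ?_)
  · rintro _ ⟨r, hr, s, hs, rfl⟩
    rw [SetLike.mem_coe] at hr hs ⊢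
    induction hr, hs using Submodule.span_induction₂ with
    | mem_mem r s hr hs => exact mul_sub_mul_mem_rowMinorsIdeal hr hs
    | zero_left => simp
    | zero_right => simp
    | add_left r₁ r₂ s _ _ _ h₁ h₂ =>
      convert add_mem h₁ h₂ using 1
      simp only [Prod.fst_add, Prod.snd_add, Submodule.coe_add]
      ring
    | add_right r s₁ s₂ _ _ _ h₁ h₂ =>
      convert add_mem h₁ h₂ using 1
      simp only [Prod.fst_add, Prod.snd_add, Submodule.coe_add]
      ring
    | smul_left c r s _ _ h =>
      convert Ideal.mul_mem_left _ (C c) h using 1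
      simp only [Prod.smul_fst, Prod.smul_snd, Submodule.coe_smul, smul_eq_C_mul]
      ring
    | smul_right c r s _ _ h =>
      convert Ideal.mul_mem_left _ (C c) h using 1
      simp only [Prod.smul_fst, Prod.smul_snd, Submodule.coe_smul, smul_eq_C_mul]
      ring
  · rintro _ ⟨r, hr, s, hs, rfl⟩
    exact ⟨r, Submodule.subset_span hr, s, Submodule.subset_span hs, rfl⟩

end RowMinors

section Minors

theorem minorsIdeal_eq_span_det {R : Type*} [CommRing R] {n r : ℕ}
    (M : Matrix (Fin n) (Fin r) R) :
    minorsIdeal r M = Ideal.span (Set.range fun rs : Fin r → Fin n => (M.submatrix rs id).det) := by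
  refine le_antisymm (Ideal.span_le.2 ?_) (Ideal.span_mono ?_)
  · rintro _ ⟨rs, cs, rfl⟩
    by_cases hcs : Function.Injective cs
    · obtain ⟨e, rfl⟩ : ∃ e : Equiv.Perm (Fin r), ⇑e = cs :=
        ⟨Equiv.ofBijective cs (Finite.injective_iff_bijective.1 hcs), rfl⟩
      rw [SetLike.mem_coe, show M.submatrix rs e = (M.submatrix rs id).submatrix id e from rfl,
        Matrix.det_permute']
      exact Ideal.mul_mem_left _ _ (Ideal.subset_span ⟨rs, rfl⟩)
    · obtain ⟨i, j, hij, hne⟩ := Function.not_injective_iff.1 hcs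
      rw [SetLike.mem_coe, Matrix.det_zero_of_column_eq hne fun l => by
        rw [Matrix.submatrix_apply, Matrix.submatrix_apply, hij]]
      exact zero_mem _
  · rintro _ ⟨rs, rfl⟩
    exact ⟨rs, id, rfl⟩

theorem minorsIdeal_mul_of_det_eq_one {R : Type*} [CommRing R] {n r : ℕ}
    (M : Matrix (Fin n) (Fin r) R) {P : Matrix (Fin r) (Fin r) R} (hP : P.det = 1) :
    minorsIdeal r (M * P) = minorsIdeal r M := by
  simp only [minorsIdeal_eq_span_det]
  congr! 3 with rs
  rw [Matrix.submatrix_mul _ _ rs id id Function.bijective_id, Matrix.det_mul,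
    Matrix.submatrix_id_id, hP, mul_one]

theorem minorsIdeal_two_eq_rowMinorsIdeal {σ k : Type*} [Field k] {n : ℕ}
    (L : Matrix (Fin n) (Fin 2) (LinearForms σ k)) :
    minorsIdeal 2 (L.map Subtype.val) = rowMinorsIdeal (Set.range fun p => (L p 0, L p 1)) := by
  rw [minorsIdeal_eq_span_det, rowMinorsIdeal]
  congr 1
  ext f
  constructor
  · rintro ⟨rs, rfl⟩
    refine ⟨_, ⟨rs 0, rfl⟩, _, ⟨rs 1, rfl⟩, ?_⟩
    simp [Matrix.det_fin_two, mul_comm]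
  · rintro ⟨_, ⟨p, rfl⟩, _, ⟨q, rfl⟩, rfl⟩
    refine ⟨![p, q], ?_⟩
    simp only [Matrix.det_fin_two, Matrix.submatrix_apply, Matrix.map_apply, id,
      Matrix.cons_val_zero, Matrix.cons_val_one]
    ring

theorem exists_minorsIdeal_eq_rowMinorsIdeal {σ k : Type*} [Field k] {n : ℕ}
    {M : Matrix (Fin n) (Fin 2) (MvPolynomial σ k)} (hM : ∀ p j, (M p j).IsHomogeneous 1)
    {l : Fin 2 → k} (hl : l ≠ 0) :
    ∃ x y : Fin n → LinearForms σ k, (∀ p, (x p : MvPolynomial σ k) = ∑ j, l j • M p j) ∧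
      minorsIdeal 2 M = rowMinorsIdeal (Set.range fun p => (x p, y p)) := by
  have hcoprime : IsCoprime (l 0) (l 1) := by
    rw [Semifield.isCoprime_iff]
    by_contra! h
    exact hl (funext (Fin.forall_fin_two.2 h))
  obtain ⟨P, hP₀, hP₁⟩ := hcoprime.exists_SL2_col 0
  let Q : Matrix.SpecialLinearGroup (Fin 2) (MvPolynomial σ k) := P.map C
  let L : Matrix (Fin n) (Fin 2) (LinearForms σ k) :=
    Matrix.of fun p i => ∑ j, P j i • ⟨M p j, hM p j⟩
  have hL : L.map Subtype.val = M * Q.1 := by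
    ext1 p i
    simp [L, Q, Matrix.mul_apply, smul_eq_C_mul, mul_comm]
  refine ⟨fun p => L p 0, fun p => L p 1, fun p => ?_, ?_⟩
  · simp [L, hP₀, hP₁]
  · rw [← minorsIdeal_two_eq_rowMinorsIdeal, hL, minorsIdeal_mul_of_det_eq_one M Q.2]

end Minors

section PencilIdeal

variable {σ k M N : Type*} [Field k]
  [AddCommGroup M] [Module k M] [Module (Polynomial k) M]
  [AddCommGroup N] [Module k N] [Module (Polynomial k) N]

/-- For a `k`-linear map `π` from the linear forms to a `k[X]`-module, the ideal of `2 × 2` minors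
of the two-column matrix whose rows are all pairs `(x, x')` of linear forms with
`π x' = X • π x`. It is the normal form of `I₂(C)` when a generalized column of `C` spans the
linear forms. -/
noncomputable def pencilIdeal (π : LinearForms σ k →ₗ[k] M) : Ideal (MvPolynomial σ k) :=
  rowMinorsIdeal {r | π r.2 = (Polynomial.X : Polynomial k) • π r.1}

theorem mul_sub_mul_mem_pencilIdeal {π : LinearForms σ k →ₗ[k] M} {x x' y y' : LinearForms σ k}
    (hx : π x' = (Polynomial.X : Polynomial k) • π x)
    (hy : π y' = (Polynomial.X : Polynomial k) • π y) :
    (x * y' - y * x' : MvPolynomial σ k) ∈ pencilIdeal π :=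
  mul_sub_mul_mem_rowMinorsIdeal (r := (x, x')) (s := (y, y')) hx hy

theorem mul_mem_pencilIdeal_of_apply_eq_zero {π : LinearForms σ k →ₗ[k] M}
    (hπ : Function.Surjective π) (x : LinearForms σ k) {u : LinearForms σ k} (hu : π u = 0) :
    (x * u : MvPolynomial σ k) ∈ pencilIdeal π := by
  obtain ⟨x', hx'⟩ := hπ ((Polynomial.X : Polynomial k) • π x)
  simpa using mul_sub_mul_mem_pencilIdeal (y := 0) hx' (by simp [hu])

variable [IsScalarTower k (Polynomial k) M] [IsScalarTower k (Polynomial k) N]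

theorem pencilIdeal_le_comp (π : LinearForms σ k →ₗ[k] M) (g : M →ₗ[Polynomial k] N) :
    pencilIdeal π ≤ pencilIdeal (g.restrictScalars k ∘ₗ π) := by
  refine Ideal.span_mono ?_
  rintro _ ⟨r, hr, s, hs, rfl⟩
  exact ⟨r, (congrArg g hr).trans (map_smul g _ _), s, (congrArg g hs).trans (map_smul g _ _), rfl⟩

theorem pencilIdeal_comp_linearEquiv (π : LinearForms σ k →ₗ[k] M) (e : M ≃ₗ[Polynomial k] N) :
    pencilIdeal (e.toLinearMap.restrictScalars k ∘ₗ π) = pencilIdeal π := by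
  refine le_antisymm ((pencilIdeal_le_comp _ e.symm.toLinearMap).trans_eq ?_)
    (pencilIdeal_le_comp π e.toLinearMap)
  congr 1
  ext x
  simp

theorem pencilIdeal_le_ker {B : Type*} [CommRing B] [Algebra k B] [Algebra (Polynomial k) B]
    (π : LinearForms σ k →ₗ[k] B) :
    pencilIdeal π ≤ RingHom.ker (liftLinearForms π) := by
  refine Ideal.span_le.2 ?_
  rintro _ ⟨r, hr, s, hs, rfl⟩
  rw [Set.mem_ofPred_eq] at hr hs
  simp only [SetLike.mem_coe, RingHom.mem_ker, map_sub, map_mul, liftLinearForms_coe, hr, hs,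
    Algebra.smul_def]
  ring

theorem exists_mul_sub_mul_mem_pencilIdeal {π : LinearForms σ k →ₗ[k] M}
    (hπ : Function.Surjective π) {v : LinearForms σ k} (p : Polynomial k) {x : LinearForms σ k}
    (hx : π x = p • π v) (y : LinearForms σ k) :
    ∃ z : LinearForms σ k, (x * y - v * z : MvPolynomial σ k) ∈ pencilIdeal π := by
  induction p using Polynomial.induction_on' generalizing x y with
  | add p q hp hq =>
    obtain ⟨x₁, hx₁⟩ := hπ (p • π v)
    obtain ⟨x₂, hx₂⟩ := hπ (q • π v)
    obtain ⟨z₁, hz₁⟩ := hp hx₁ y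
    obtain ⟨z₂, hz₂⟩ := hq hx₂ y
    have hker : π (x - x₁ - x₂) = 0 := by rw [map_sub, map_sub, hx, hx₁, hx₂]; module
    refine ⟨z₁ + z₂, ?_⟩
    convert add_mem (mul_mem_pencilIdeal_of_apply_eq_zero hπ y hker) (add_mem hz₁ hz₂) using 1
    simp only [Submodule.coe_sub, Submodule.coe_add]
    ring
  | monomial n c =>
    induction n generalizing x y with
    | zero =>
      have hker : π (x - c • v) = 0 := by
        rw [map_sub, map_smul, hx, Polynomial.monomial_zero_left,
          ← Polynomial.algebraMap_eq, algebraMap_smul, sub_self]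
      refine ⟨c • y, ?_⟩
      convert mul_mem_pencilIdeal_of_apply_eq_zero hπ y hker using 1
      simp only [Submodule.coe_sub, Submodule.coe_smul, smul_eq_C_mul]
      ring
    | succ n ih =>
      obtain ⟨x₁, hx₁⟩ := hπ (Polynomial.monomial n c • π v)
      obtain ⟨y', hy'⟩ := hπ ((Polynomial.X : Polynomial k) • π y)
      obtain ⟨z, hz⟩ := ih hx₁ y'
      have hx' : π x = (Polynomial.X : Polynomial k) • π x₁ := by
        rw [hx, hx₁, smul_smul, Polynomial.X_mul_monomial]
      refine ⟨z, ?_⟩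
      convert sub_mem hz (mul_sub_mul_mem_pencilIdeal hx' hy') using 1
      ring

theorem exists_sub_pow_mul_mem_pencilIdeal {π : LinearForms σ k →ₗ[k] M}
    (hπ : Function.Surjective π) {v : LinearForms σ k}
    (hv : Submodule.span (Polynomial k) {π v} = ⊤) {m : ℕ} {f : MvPolynomial σ k}
    (hf : f.IsHomogeneous (m + 1)) :
    ∃ x : LinearForms σ k, f - v ^ m * x ∈ pencilIdeal π := by
  replace hf : f ∈ homogeneousSubmodule σ k 1 ^ (m + 1) := by
    rwa [homogeneousSubmodule_one_pow]
  induction m generalizing f with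
  | zero => exact ⟨⟨f, by simpa using hf⟩, by simp⟩
  | succ m ih =>
    rw [pow_succ] at hf
    induction hf using Submodule.mul_induction_on' with
    | mem_mul_mem g hg y hy =>
      obtain ⟨x, hx⟩ := ih hg
      obtain ⟨p, hp⟩ := (Submodule.span_singleton_eq_top_iff _ _).1 hv (π x)
      obtain ⟨z, hz⟩ := exists_mul_sub_mul_mem_pencilIdeal hπ p hp.symm ⟨y, hy⟩
      refine ⟨z, ?_⟩
      convert add_mem (Ideal.mul_mem_right y _ hx)
        (Ideal.mul_mem_left _ ((v : MvPolynomial σ k) ^ m) hz) using 1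
      ring
    | add f₁ _ f₂ _ h₁ h₂ =>
      obtain ⟨x₁, hx₁⟩ := h₁
      obtain ⟨x₂, hx₂⟩ := h₂
      refine ⟨x₁ + x₂, ?_⟩
      convert add_mem hx₁ hx₂ using 1
      rw [Submodule.coe_add]
      ring

theorem hilbertFunction_pencilIdeal_of_surjective_algebraMap {B : Type*} [CommRing B] [Algebra k B]
    [Algebra (Polynomial k) B] [IsScalarTower k (Polynomial k) B]
    (hB : Function.Surjective (algebraMap (Polynomial k) B)) {π : LinearForms σ k →ₗ[k] B}
    (hπ : Function.Surjective π) {m : ℕ} (hm : 2 ≤ m) :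
    hilbertFunction (pencilIdeal π) m = Module.finrank k B := by
  obtain ⟨m, rfl⟩ := Nat.exists_eq_add_of_le' hm
  obtain ⟨v, hv⟩ := hπ 1
  have hspan : Submodule.span (Polynomial k) {π v} = ⊤ := by
    rw [hv, Submodule.span_singleton_eq_top_iff]
    intro b
    obtain ⟨p, rfl⟩ := hB b
    exact ⟨p, (Algebra.algebraMap_eq_smul_one p).symm⟩
  let φ : homogeneousSubmodule σ k (m + 2) →ₗ[k] B :=
    (liftLinearForms π).toLinearMap ∘ₗ (homogeneousSubmodule σ k (m + 2)).subtype
  have hφv (x : LinearForms σ k) : liftLinearForms π (v ^ (m + 1) * x) = π x := by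
    rw [map_mul, map_pow, liftLinearForms_coe, liftLinearForms_coe, hv, one_pow, one_mul]
  have hφ : Function.Surjective φ := by
    intro b
    obtain ⟨x, rfl⟩ := hπ b
    exact ⟨⟨v ^ (m + 1) * x, by simpa using (v.2.pow (m + 1)).mul x.2⟩, hφv x⟩
  have hker : LinearMap.ker φ =
      ((pencilIdeal π).restrictScalars k).submoduleOf (homogeneousSubmodule σ k (m + 2)) := by
    refine le_antisymm (fun f hf => ?_) fun f hf => pencilIdeal_le_ker π hf
    obtain ⟨x, hx⟩ := exists_sub_pow_mul_mem_pencilIdeal hπ hspan f.2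
    have hπx : π x = 0 := by
      have := pencilIdeal_le_ker π hx
      rw [RingHom.mem_ker, map_sub, hφv, sub_eq_zero] at this
      exact this.symm.trans hf
    have hvx : (v * x : MvPolynomial σ k) ∈ pencilIdeal π :=
      mul_mem_pencilIdeal_of_apply_eq_zero hπ v hπx
    change (f : MvPolynomial σ k) ∈ pencilIdeal π
    convert add_mem hx (Ideal.mul_mem_left _ ((v : MvPolynomial σ k) ^ m) hvx) using 1
    ring
  rw [hilbertFunction, ← hker]
  exact (φ.quotKerEquivOfSurjective hφ).finrank_eq

theorem hilbertFunction_pencilIdeal_of_span_singleton_eq_top {π : LinearForms σ k →ₗ[k] M}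
    (hπ : Function.Surjective π) {w : M} (hw : Submodule.span (Polynomial k) {w} = ⊤)
    {m : ℕ} (hm : 2 ≤ m) :
    hilbertFunction (pencilIdeal π) m = Module.finrank k M := by
  let e := (LinearMap.toSpanSingleton (Polynomial k) M w).quotKerEquivOfSurjective
    (LinearMap.range_eq_top.1 (by rwa [LinearMap.range_toSpanSingleton]))
  rw [← pencilIdeal_comp_linearEquiv π e.symm,
    hilbertFunction_pencilIdeal_of_surjective_algebraMap Ideal.Quotient.mk_surjective _ hm]
  · exact (e.restrictScalars k).finrank_eq
  · exact e.symm.surjective.comp hπ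

end PencilIdeal

section Height

theorem idealHeight_mono {R : Type*} [CommRing R] {I J : Ideal R} (h : I ≤ J) :
    idealHeight I ≤ idealHeight J :=
  le_iInf₂ fun P hP => iInf₂_le P (h.trans hP)

theorem ker_lt_ker_comp {A B C : Type*} [CommRing A] [CommRing B] [CommRing C]
    (f : A →+* B) (g : B →+* C) {a : A} (ha : f a ≠ 0) (hga : g (f a) = 0) :
    RingHom.ker f < RingHom.ker (g.comp f) :=
  SetLike.lt_iff_le_and_exists.2
    ⟨fun _ hx => (congrArg g hx).trans (map_zero g), a, hga, ha⟩

theorem idealHeight_add_two_le_ringKrullDim {A B₀ B₁ B₂ : Type*} [CommRing A] [CommRing B₀]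
    [CommRing B₁] [CommRing B₂] [IsDomain B₀] [IsDomain B₁] [IsDomain B₂]
    (f : A →+* B₀) (g : B₀ →+* B₁) (h : B₁ →+* B₂) {I : Ideal A} (hI : I ≤ RingHom.ker f)
    {a b : A} (ha : f a ≠ 0) (hga : g (f a) = 0) (hb : g (f b) ≠ 0) (hhb : h (g (f b)) = 0) :
    ((idealHeight I + 2 : ℕ∞) : WithBot ℕ∞) ≤ ringKrullDim A := by
  let P₀ : PrimeSpectrum A := ⟨RingHom.ker f, RingHom.ker_isPrime _⟩
  let P₁ : PrimeSpectrum A := ⟨RingHom.ker (g.comp f), RingHom.ker_isPrime _⟩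
  let P₂ : PrimeSpectrum A := ⟨RingHom.ker (h.comp (g.comp f)), RingHom.ker_isPrime _⟩
  have h₀₁ : P₀ < P₁ := ker_lt_ker_comp f g ha hga
  have h₁₂ : P₁ < P₂ := ker_lt_ker_comp (g.comp f) h hb hhb
  have hheight : idealHeight I + 2 ≤ Order.height P₂ :=
    calc idealHeight I + 2
        = idealHeight I + 1 + 1 := by rw [add_assoc, one_add_one_eq_two]
      _ ≤ Order.height P₀ + 1 + 1 := by gcongr; exact iInf₂_le P₀ hI
      _ ≤ Order.height P₁ + 1 := by gcongr; exact Order.height_add_one_le h₀₁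
      _ ≤ Order.height P₂ := Order.height_add_one_le h₁₂
  exact (WithBot.coe_le_coe.2 hheight).trans (Order.height_le_krullDim P₂)

theorem idealHeight_pencilIdeal_add_two_le {σ k L : Type*} [Fintype σ] [Field k] [CommRing L]
    [IsDomain L] [Algebra k L] [Algebra (Polynomial k) L] [IsScalarTower k (Polynomial k) L]
    {π : LinearForms σ k →ₗ[k] L × L} (hπ : Function.Surjective π) :
    idealHeight (pencilIdeal π) + 2 ≤ Fintype.card σ := by
  let combine : L × L →ₗ[Polynomial k] MvPolynomial (Fin 2) L :=
    ((LinearMap.toSpanSingleton L _ (X 0)).coprod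
      (LinearMap.toSpanSingleton L _ (X 1))).restrictScalars (Polynomial k)
  let φ : MvPolynomial σ k →+* MvPolynomial (Fin 2) L :=
    liftLinearForms (combine.restrictScalars k ∘ₗ π)
  let ψ : MvPolynomial (Fin 2) L →+* MvPolynomial (Fin 2) L :=
    aeval (R := L) (![X 0, 0] : Fin 2 → MvPolynomial (Fin 2) L)
  let χ : MvPolynomial (Fin 2) L →+* L := aeval (R := L) (0 : Fin 2 → L)
  have hφ (x : LinearForms σ k) : φ x = (π x).1 • X 0 + (π x).2 • X 1 := liftLinearForms_coe _ x
  obtain ⟨x, hx⟩ := hπ (0, 1)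
  obtain ⟨y, hy⟩ := hπ (1, 0)
  have hI : pencilIdeal π ≤ RingHom.ker φ :=
    (pencilIdeal_le_comp π combine).trans (pencilIdeal_le_ker _)
  have hdim : ringKrullDim (MvPolynomial σ k) = ((Fintype.card σ : ℕ∞) : WithBot ℕ∞) := by
    rw [MvPolynomial.ringKrullDim_of_isNoetherianRing, ringKrullDim_eq_zero_of_field, zero_add,
      Nat.card_eq_fintype_card]
    rfl
  rw [← WithBot.coe_le_coe, ← hdim]
  exact idealHeight_add_two_le_ringKrullDim φ ψ χ hI (a := x) (b := y)
    (by simp [hφ, hx]) (by simp [hφ, hx, ψ]) (by simp [hφ, hy, ψ]) (by simp [hφ, hy, ψ, χ])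

end Height

section CyclicModules

variable {R : Type*} [CommRing R]

theorem exists_span_singleton_eq_top_or_exists_surjective_of_pi {ι : Type*} [Finite ι]
    (I : ι → Ideal R) :
    (∃ v : ∀ i, R ⧸ I i, Submodule.span R {v} = ⊤) ∨
      ∃ (𝔪 : Ideal R) (_ : 𝔪.IsMaximal) (g : (∀ i, R ⧸ I i) →ₗ[R] (R ⧸ 𝔪) × (R ⧸ 𝔪)),
        Function.Surjective g := by
  classical
  by_cases hI : Pairwise (Function.onFun IsCoprime I)
  · refine .inl ⟨fun _ => 1, (Submodule.span_singleton_eq_top_iff _ _).2 fun x => ?_⟩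
    obtain ⟨r, hr⟩ := Ideal.pi_quotient_surjective hI x
    exact ⟨r, funext fun i => (Algebra.algebraMap_eq_smul_one r).symm.trans (hr i)⟩
  · obtain ⟨i, j, hij, hcop⟩ : ∃ i j, i ≠ j ∧ ¬IsCoprime (I i) (I j) := by
      simpa [Pairwise, Function.onFun] using hI
    obtain ⟨𝔪, h𝔪, hle⟩ := Ideal.exists_le_maximal _ (mt Ideal.isCoprime_iff_sup_eq.2 hcop)
    obtain ⟨hi, hj⟩ := sup_le_iff.1 hle
    refine .inr ⟨𝔪, h𝔪, ((Submodule.factor hi).comp (LinearMap.proj i)).prod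
      ((Submodule.factor hj).comp (LinearMap.proj j)), ?_⟩
    rintro ⟨a, b⟩
    obtain ⟨a, rfl⟩ := Submodule.factor_surjective hi a
    obtain ⟨b, rfl⟩ := Submodule.factor_surjective hj b
    exact ⟨Function.update (Pi.single i a) j b, by simp [hij]⟩

theorem exists_span_singleton_eq_top_or_exists_surjective_of_isTorsion [IsDomain R]
    [IsPrincipalIdealRing R] {N : Type*} [AddCommGroup N] [Module R N] [Module.Finite R N]
    (hN : Module.IsTorsion R N) :
    (∃ v : N, Submodule.span R {v} = ⊤) ∨
      ∃ (𝔪 : Ideal R) (_ : 𝔪.IsMaximal) (g : N →ₗ[R] (R ⧸ 𝔪) × (R ⧸ 𝔪)),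
        Function.Surjective g := by
  classical
  obtain ⟨ι, _, p, -, d, ⟨e⟩⟩ := Module.equiv_directSum_of_isTorsion hN
  let e' := e.trans (DirectSum.linearEquivFunOnFintype R ι fun i => R ⧸ Ideal.span {p i ^ d i})
  obtain ⟨v, hv⟩ | ⟨𝔪, h𝔪, g, hg⟩ := exists_span_singleton_eq_top_or_exists_surjective_of_pi
    fun i => Ideal.span {p i ^ d i}
  · refine .inl ⟨e'.symm v, ?_⟩
    rw [← Set.image_singleton, ← LinearEquiv.coe_coe, Submodule.span_image, hv, Submodule.map_top,
      LinearEquiv.range]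
  · exact .inr ⟨𝔪, h𝔪, g ∘ₗ e'.toLinearMap, hg.comp e'.surjective⟩

end CyclicModules

section Reduction

theorem exists_forall_prodMk_mem {k V W : Type*} [Field k] [AddCommGroup V] [Module k V]
    [AddCommGroup W] [Module k W] {T : Submodule k (V × W)}
    (hT : T.map (LinearMap.fst k V W) = ⊤) : ∃ a : V →ₗ[k] W, ∀ x, (x, a x) ∈ T := by
  obtain ⟨s, hs⟩ := (LinearMap.fst k V W ∘ₗ T.subtype).exists_rightInverse_of_surjective
    (by rw [LinearMap.range_comp, Submodule.range_subtype, hT])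
  refine ⟨LinearMap.snd k V W ∘ₗ T.subtype ∘ₗ s, fun x => ?_⟩
  have hsx : (s x : V × W) = (x, (s x).1.2) := Prod.ext (LinearMap.congr_fun hs x) rfl
  exact hsx ▸ (s x).2

theorem exists_rowMinorsIdeal_eq_pencilIdeal {σ k : Type*} [Field k]
    {T : Submodule k (LinearForms σ k × LinearForms σ k)}
    (hT : T.map (LinearMap.fst k _ _) = ⊤) :
    ∃ (U : Submodule k (LinearForms σ k)) (φ : Module.End k (LinearForms σ k ⧸ U)),
      rowMinorsIdeal (T : Set (LinearForms σ k × LinearForms σ k)) =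
        pencilIdeal ((Module.AEval'.of φ).toLinearMap ∘ₗ U.mkQ) := by
  obtain ⟨a, ha⟩ := exists_forall_prodMk_mem hT
  set I := rowMinorsIdeal (T : Set (LinearForms σ k × LinearForms σ k))
  let U : Submodule k (LinearForms σ k) := ⨅ x : LinearForms σ k, (I.restrictScalars k).comap
    (LinearMap.mulLeft k (x : MvPolynomial σ k) ∘ₗ (homogeneousSubmodule σ k 1).subtype)
  have mem_U {u : LinearForms σ k} :
      u ∈ U ↔ ∀ x : LinearForms σ k, (x * u : MvPolynomial σ k) ∈ I := by
    simp [U, Submodule.mem_iInf]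
  have hU : U ≤ U.comap a := fun u hu => mem_U.2 fun x => by
    convert add_mem (mul_sub_mul_mem_rowMinorsIdeal (ha x) (ha u)) (mem_U.1 hu (a x)) using 1
    ring
  let π := (Module.AEval'.of (U.mapQ U a hU)).toLinearMap ∘ₗ U.mkQ
  have apply_eq_X_smul_iff {x x' : LinearForms σ k} :
      π x' = (Polynomial.X : Polynomial k) • π x ↔ x' - a x ∈ U := by
    simp [π, Module.AEval'.X_smul_of, Submodule.Quotient.eq]
  refine ⟨U, U.mapQ U a hU, le_antisymm (Ideal.span_mono ?_) (Ideal.span_le.2 ?_)⟩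
  · have T_le (r) (hr : r ∈ T) : π r.2 = (Polynomial.X : Polynomial k) • π r.1 := by
      refine apply_eq_X_smul_iff.2 (mem_U.2 fun x => ?_)
      simpa using mul_sub_mul_mem_rowMinorsIdeal (ha x) (T.sub_mem hr (ha r.1))
    rintro _ ⟨r, hr, s, hs, rfl⟩
    exact ⟨r, T_le r hr, s, T_le s hs, rfl⟩
  · rintro _ ⟨r, hr, s, hs, rfl⟩
    rw [SetLike.mem_coe]
    replace hr := mem_U.1 (apply_eq_X_smul_iff.1 hr) s.1
    replace hs := mem_U.1 (apply_eq_X_smul_iff.1 hs) r.1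
    convert add_mem (mul_sub_mul_mem_rowMinorsIdeal (ha r.1) (ha s.1)) (sub_mem hs hr) using 1
    simp only [Submodule.coe_sub]
    ring

end Reduction

section Multiplicity

variable {σ k : Type*} [Fintype σ] [Field k]

theorem hilbertFunction_two_add_sInf_card_generators
    (S : Set (LinearForms σ k × LinearForms σ k)) :
    hilbertFunction (rowMinorsIdeal S) 2 +
        sInf {m : ℕ | ∃ F : Finset (MvPolynomial σ k),
          F.card = m ∧ Ideal.span (F : Set (MvPolynomial σ k)) = rowMinorsIdeal S} =
      (Fintype.card σ + 1).choose 2 := by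
  have hquadrics : ∀ f ∈ {f : MvPolynomial σ k | ∃ r ∈ S, ∃ s ∈ S, f = r.1 * s.2 - s.1 * r.2},
      f.IsHomogeneous 2 := by
    rintro _ ⟨r, -, s, -, rfl⟩
    exact (r.1.2.mul s.2.2).sub (s.1.2.mul r.2.2)
  rw [rowMinorsIdeal, sInf_card_generators_eq_finrank hquadrics, hilbertFunction_add_finrank_inf,
    finrank_homogeneousSubmodule, Nat.multichoose_eq]
  rfl

theorem hilbertFunction_pencilIdeal_of_isTorsion {M : Type*} [AddCommGroup M] [Module k M]
    [Module (Polynomial k) M] [IsScalarTower k (Polynomial k) M] [Module.Finite (Polynomial k) M]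
    (hM : Module.IsTorsion (Polynomial k) M) {π : LinearForms σ k →ₗ[k] M}
    (hπ : Function.Surjective π) (hht : Fintype.card σ ≤ idealHeight (pencilIdeal π) + 1)
    {m : ℕ} (hm : 2 ≤ m) :
    hilbertFunction (pencilIdeal π) m = Module.finrank k M := by
  obtain ⟨v, hv⟩ | ⟨𝔪, _, g, hg⟩ :=
    exists_span_singleton_eq_top_or_exists_surjective_of_isTorsion hM
  · exact hilbertFunction_pencilIdeal_of_span_singleton_eq_top hπ hv hm
  · have hle : idealHeight (pencilIdeal π) + 2 ≤ Fintype.card σ :=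
      (add_le_add_left (idealHeight_mono (pencilIdeal_le_comp π g)) 2).trans
        (idealHeight_pencilIdeal_add_two_le (hg.comp hπ))
    have hne_top : idealHeight (pencilIdeal π) ≠ ⊤ :=
      ne_top_of_le_ne_top (ENat.natCast_ne_top _) (le_self_add.trans hle)
    lift idealHeight (pencilIdeal π) to ℕ using hne_top with h
    norm_cast at hle hht
    omega

theorem hilbertFunction_rowMinorsIdeal_eq_of_two_le
    {T : Submodule k (LinearForms σ k × LinearForms σ k)}
    (hT : T.map (LinearMap.fst k _ _) = ⊤)
    (hht : Fintype.card σ ≤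
      idealHeight (rowMinorsIdeal (T : Set (LinearForms σ k × LinearForms σ k))) + 1)
    {m : ℕ} (hm : 2 ≤ m) :
    hilbertFunction (rowMinorsIdeal (T : Set (LinearForms σ k × LinearForms σ k))) m =
      hilbertFunction (rowMinorsIdeal (T : Set (LinearForms σ k × LinearForms σ k))) 2 := by
  obtain ⟨U, φ, hφ⟩ := exists_rowMinorsIdeal_eq_pencilIdeal hT
  have hπ : Function.Surjective ((Module.AEval'.of φ).toLinearMap ∘ₗ U.mkQ) :=
    (Module.AEval'.of φ).surjective.comp U.mkQ_surjective
  have htorsion := Module.AEval.isTorsion_of_finiteDimensional k (LinearForms σ k ⧸ U) φ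
  rw [hφ] at hht ⊢
  rw [hilbertFunction_pencilIdeal_of_isTorsion htorsion hπ hht hm,
    hilbertFunction_pencilIdeal_of_isTorsion htorsion hπ hht le_rfl]

end Multiplicity

theorem stmt8_general {σ k : Type*} [Fintype σ] [Field k] (n : ℕ)
    (C : Matrix (Fin n) (Fin 2) (MvPolynomial σ k))
    (hC : ∀ i j, (C i j).IsHomogeneous 1)
    (hcol : ∃ l : Fin 2 → k, l ≠ 0 ∧ ∃ t : ℕ,
      (Ideal.span (Set.range (X : σ → MvPolynomial σ k))) ^ t ≤
        Ideal.span (Set.range fun p : Fin n => ∑ j : Fin 2, l j • C p j))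
    (hht : Fintype.card σ ≤ idealHeight (minorsIdeal 2 C) + 1) :
    ∃ e : ℕ,
      (∀ m : ℕ, 2 ≤ m → hilbertFunction (minorsIdeal 2 C) m = e) ∧
      e + sInf {m : ℕ | ∃ F : Finset (MvPolynomial σ k),
          F.card = m ∧ Ideal.span (F : Set (MvPolynomial σ k)) = minorsIdeal 2 C} =
        (Fintype.card σ + 1).choose 2 := by
  obtain ⟨l, hl, t, ht⟩ := hcol
  obtain ⟨x, y, hx, hxy⟩ := exists_minorsIdeal_eq_rowMinorsIdeal hC hl
  simp_rw [← hx] at ht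
  have hT : (Submodule.span k (Set.range fun p => (x p, y p))).map (LinearMap.fst k _ _) = ⊤ := by
    rw [Submodule.map_span, ← Set.range_comp]
    exact span_eq_top_of_pow_le_span_range ht
  rw [hxy, ← rowMinorsIdeal_span] at hht ⊢
  exact ⟨_, fun m hm => hilbertFunction_rowMinorsIdeal_eq_of_two_le hT hht hm,
    hilbertFunction_two_add_sInf_card_generators _⟩

/-- Let `C` be a matrix of linear forms with `2` columns in a polynomial ring
`R = k[T₁,T₂,T₃]` in three variables over a field `k`.  If some generalized column ideal
`I₁(C λᵀ)` (for `λ ∈ k²` nonzero) is zero-dimensional (i.e. contains a power of the maximal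
homogeneous ideal) and `ht I₂(C) = 2`, then `e(R/I₂(C)) + μ(I₂(C)) = 6`, where the multiplicity
`e` of the one-dimensional standard graded ring `R/I₂(C)` is the eventually constant value of its
Hilbert function, and `μ` denotes the minimal number of generators. -/
theorem stmt8 {k : Type*} [Field k] (n : ℕ)
    (C : Matrix (Fin n) (Fin 2) (MvPolynomial (Fin 3) k))
    (hC : ∀ i j, (C i j).IsHomogeneous 1)
    (hcol : ∃ l : Fin 2 → k, l ≠ 0 ∧ ∃ t : ℕ,
      (Ideal.span (Set.range (X : Fin 3 → MvPolynomial (Fin 3) k))) ^ t ≤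
        Ideal.span (Set.range fun p : Fin n => ∑ j : Fin 2, l j • C p j))
    (hht : idealHeight (minorsIdeal 2 C) = 2) :
    ∃ e N : ℕ,
      (∀ m : ℕ, N ≤ m → hilbertFn k (minorsIdeal 2 C) m = e) ∧
      e + sInf {m : ℕ | ∃ F : Finset (MvPolynomial (Fin 3) k),
          F.card = m ∧ Ideal.span (F : Set (MvPolynomial (Fin 3) k)) = minorsIdeal 2 C} = 6 := by
  obtain ⟨e, he, hsum⟩ := stmt8_general n C hC hcol (by rw [hht]; rfl)
  exact ⟨e, 2, he, hsum⟩
end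

section
/- Let B = k[x,y] with k an infinite field, I a height-two ideal of B generated by forms g₁,…,g_n of degree d, and φ a homogeneous Hilbert–Burch matrix for [g₁,…,g_n]. Assume every entry of φ has the same degree c. Then: (1) writing f₁, f₂ for the degree-r forms with k[I_d] ⊆ k[f₁,f₂] (r the degree of the field extension [Quot(k[B_d]) : Quot(k[I_d])]), every entry of φ lies in the subring k[f₁,f₂]; and (2) if c is prime, the morphism ℙ¹ → ℙ^{n-1} given by q ↦ [g₁(q):⋯:g_n(q)] is birational onto its image if and only if μ(I₁(φ)) ≥ 3. -/
open MvPolynomial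

/-!
Let `A = k[f₁, f₂]` for coprime forms `f₁`, `f₂` of the same positive degree. Polynomials are a free
`A`-module, and this makes membership in `A` descend. If all `g i` lie in `A`, then an `A`-linear
functional with values in `A` turns the columns of `φ` into syzygies of `g`, that is, into
combinations of the columns; comparing parts of degree `c` puts the entries of `φ` in `A`.
Conversely, `g` spans the left kernel of `φ`, so if all entries of `φ` lie in `A`, the ratios of the
`g i` are fractions over `A`, and the same descent, applied to the single column `g`, puts the `g i`
in `A`.

By Lüroth's theorem a parametrization which is not birational has the ratios of the `g i` in
`k(f₁ / f₂)` with `f₁`, `f₂` of degree `r ≠ 1`. So the entries of `φ` lie in `k[f₁, f₂]` and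
`r ∣ c`; for `c` prime this forces `r = c`, and the entries are combinations of `f₁` and `f₂`.
Conversely, if the entries are combinations of two forms of degree `c ≥ 2`, then the `g i` lie in
`k[f₁, f₂]`, over which the variables are linearly independent, so the ratio of two variables is not
a fraction over `k[g]`.
-/

/-! ### Primitive families -/

/-- A family in a commutative ring is primitive if its only common divisors are units. Height two
of the ideal of the forms `g i` is used through this property. -/
def IsPrimitiveFamily {ι R : Type*} [CommRing R] (v : ι → R) : Prop :=
  ∀ p, (∀ i, p ∣ v i) → IsUnit p

section PrimitiveFamily

variable {ι R : Type*} [CommRing R]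

theorem isPrimitiveFamily_of_one_lt_idealHeight [IsNoetherianRing R] {g : ι → R}
    (hg : 1 < idealHeight (Ideal.span (Set.range g))) : IsPrimitiveFamily g := by
  intro p hp
  by_contra hunit
  obtain ⟨P, hP⟩ := Ideal.nonempty_minimalPrimes (I := Ideal.span {p})
    (by rwa [Ne, Ideal.span_singleton_eq_top])
  have : P.IsPrime := hP.1.1
  have hle : Ideal.span (Set.range g) ≤ P :=
    (Ideal.span_le.2 (Set.range_subset_iff.2 fun i ↦
      Ideal.mem_span_singleton.2 (hp i))).trans hP.1.2
  have hheight : Order.height (⟨P, this⟩ : PrimeSpectrum R) ≤ 1 :=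
    (PrimeSpectrum.height_eq_orderHeight ⟨P, this⟩).symm.trans_le
      (Ideal.height_le_one_of_isPrincipal_of_mem_minimalPrimes _ P hP)
  exact hg.not_ge ((iInf₂_le (⟨P, this⟩ : PrimeSpectrum R) hle).trans hheight)

theorem idealHeight_top : idealHeight (⊤ : Ideal R) = ⊤ :=
  iInf₂_eq_top.2 fun P hP ↦ absurd (top_le_iff.1 hP) P.isPrime.ne_top

theorem not_isUnit_of_idealHeight_ne_top {g : ι → R}
    (hg : idealHeight (Ideal.span (Set.range g)) ≠ ⊤) (i : ι) : ¬ IsUnit (g i) := fun hunit ↦ by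
  rw [Ideal.eq_top_of_isUnit_mem _ (Ideal.subset_span (Set.mem_range_self i)) hunit,
    idealHeight_top] at hg
  exact hg rfl

theorem IsPrimitiveFamily.exists_ne_zero [Nontrivial R] {v : ι → R} (hv : IsPrimitiveFamily v) :
    ∃ i, v i ≠ 0 := by
  by_contra! h
  exact not_isUnit_zero (hv 0 fun i ↦ by rw [h i])

theorem isUnit_of_mem_bot {k : Type*} [Field k] [Algebra k R] {b : R}
    (hb : b ∈ (⊥ : Subalgebra k R)) (hb0 : b ≠ 0) : IsUnit b := by
  obtain ⟨β, rfl⟩ := Algebra.mem_bot.1 hb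
  exact (IsUnit.mk0 β fun hβ ↦ hb0 (by rw [hβ, map_zero])).map (algebraMap k R)

theorem IsPrimitiveFamily.isUnit_of_forall_dvd_mul {k : Type*} [Field k] [Algebra k R]
    {v : ι → R} (hv : IsPrimitiveFamily v) {i₀ : ι}
    (h : ∀ i, ∃ b ∈ (⊥ : Subalgebra k R), b ≠ 0 ∧ v i₀ ∣ b * v i) : IsUnit (v i₀) :=
  hv _ fun i ↦
    let ⟨_, hb, hb0, hdvd⟩ := h i
    (isUnit_of_mem_bot hb hb0).dvd_mul_left.1 hdvd

variable [Finite ι] [UniqueFactorizationMonoid R]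

theorem IsPrimitiveFamily.dvd_of_forall_dvd_mul {v : ι → R} (hv : IsPrimitiveFamily v) {a u : R}
    (h : ∀ i, a ∣ u * v i) : a ∣ u := by
  let := Fintype.ofFinite ι
  let : NormalizedGCDMonoid R := Nonempty.some inferInstance
  have hgcd : IsUnit (Finset.univ.gcd v) := hv _ fun i ↦ Finset.gcd_dvd (Finset.mem_univ i)
  have hdvd : a ∣ Finset.univ.gcd fun i ↦ u * v i := Finset.dvd_gcd fun i _ ↦ h i
  rwa [(Finset.gcd_mul_left' _ v u).dvd_iff_dvd_right, hgcd.dvd_mul_right] at hdvd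

theorem IsPrimitiveFamily.exists_eq_mul_of_cross_mul [IsDomain R] {g u : ι → R}
    (hg : IsPrimitiveFamily g) {i₀ : ι} (h₀ : g i₀ ≠ 0) (h : ∀ i, u i * g i₀ = u i₀ * g i) :
    ∃ s, ∀ i, u i = s * g i := by
  obtain ⟨s, hs⟩ : g i₀ ∣ u i₀ := hg.dvd_of_forall_dvd_mul fun i ↦ ⟨u i, by rw [← h, mul_comm]⟩
  refine ⟨s, fun i ↦ mul_right_cancel₀ h₀ ?_⟩
  rw [h, hs]
  ring

end PrimitiveFamily

/-! ### Linear independence over adjoined elements -/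

section LinearIndependentAdjoin

variable {ι R S M N : Type*} [CommRing R] [CommRing S] [Algebra R S] [AddCommGroup M] [Module R M]
  [Module S M] [IsScalarTower R S M] [AddCommGroup N] [Module R N] {f : S}

theorem sum_aeval_smul_eq (f : S) (b : ι → M) (s : Finset ι) (p : ι → Polynomial R) :
    ∑ i ∈ s, Polynomial.aeval f (p i) • b i =
      ∑ i ∈ s, (p i).coeff 0 • b i + f • ∑ i ∈ s, Polynomial.aeval f (p i).divX • b i := by
  rw [Finset.smul_sum, ← Finset.sum_add_distrib]
  refine Finset.sum_congr rfl fun i _ ↦ ?_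
  nth_rw 1 [← (p i).X_mul_divX_add, map_add, map_mul, Polynomial.aeval_X, Polynomial.aeval_C,
    add_smul, mul_smul, algebraMap_smul, add_comm]

theorem coeff_eq_zero_of_sum_aeval_smul_eq_zero (hf : IsSMulRegular M f) (π : M →ₗ[R] N)
    (hπ : ∀ m, π (f • m) = 0) {b : ι → M} (hb : LinearIndependent R (π ∘ b)) {s : Finset ι}
    {i : ι} (hi : i ∈ s) (n : ℕ) (p : ι → Polynomial R)
    (hp : ∑ i ∈ s, Polynomial.aeval f (p i) • b i = 0) : (p i).coeff n = 0 := by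
  have hzero (p : ι → Polynomial R) (hp : ∑ i ∈ s, Polynomial.aeval f (p i) • b i = 0) :
      ∀ i ∈ s, (p i).coeff 0 = 0 := linearIndependent_iff'.1 hb s _ <| by
    rw [sum_aeval_smul_eq] at hp
    simpa only [map_add, hπ, add_zero, map_sum, map_smul, map_zero, Function.comp_apply]
      using congrArg π hp
  induction n generalizing p with
  | zero => exact hzero p hp i hi
  | succ n ih =>
    have hconst : ∑ i ∈ s, (p i).coeff 0 • b i = 0 :=
      Finset.sum_eq_zero fun i hi ↦ by rw [hzero p hp i hi, zero_smul]
    rw [sum_aeval_smul_eq, hconst, zero_add] at hp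
    rw [← Polynomial.coeff_divX]
    exact ih _ (hf.right_eq_zero_of_smul hp)

theorem linearIndependent_adjoin_singleton (hf : IsSMulRegular M f) (π : M →ₗ[R] N)
    (hπ : ∀ m, π (f • m) = 0) {b : ι → M} (hb : LinearIndependent R (π ∘ b)) :
    LinearIndependent (Algebra.adjoin R {f}) b := by
  refine linearIndependent_iff'.2 fun s a ha i hi ↦ ?_
  have hex (i : ι) : ∃ p : Polynomial R, Polynomial.aeval f p = (a i : S) :=
    (Algebra.adjoin_singleton_eq_range_aeval R f).le (a i).2
  choose p hp using hex
  have hp0 : ∑ i ∈ s, Polynomial.aeval f (p i) • b i = 0 := by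
    simp only [hp]
    exact ha
  have hpi : p i = 0 := Polynomial.ext fun n ↦
    coeff_eq_zero_of_sum_aeval_smul_eq_zero hf π hπ hb hi n p hp0
  ext
  rw [← hp, hpi, map_zero, ZeroMemClass.coe_zero]

theorem linearIndependent_adjoin_pair [IsDomain S] [DecompositionMonoid S] {f₁ f₂ : S}
    (h₁ : f₁ ≠ 0) (hrel : IsRelPrime f₁ f₂) {b : ι → S}
    (hb : LinearIndependent R (Ideal.Quotient.mk (Ideal.span {f₁, f₂}) ∘ b)) :
    LinearIndependent (Algebra.adjoin R {f₁, f₂}) b := by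
  have hle : Ideal.span {f₁} ≤ Ideal.span {f₁, f₂} := Ideal.span_mono (by simp)
  have h₂ : LinearIndependent (Algebra.adjoin R {f₂})
      (Ideal.Quotient.mkₐ (Algebra.adjoin R {f₂}) (Ideal.span {f₁}) ∘ b) := by
    refine linearIndependent_adjoin_singleton ?_
      (Ideal.Quotient.factorₐ R hle).toLinearMap ?_ hb
    · refine isSMulRegular_iff_right_eq_zero_of_smul.2 fun m hm ↦ ?_
      obtain ⟨v, rfl⟩ := Ideal.Quotient.mk_surjective m
      rw [Algebra.smul_def, Ideal.Quotient.algebraMap_eq, ← map_mul,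
        Ideal.Quotient.eq_zero_iff_dvd] at hm
      exact (Ideal.Quotient.eq_zero_iff_dvd _ _).2 (hrel.dvd_of_dvd_mul_left hm)
    · intro m
      obtain ⟨v, rfl⟩ := Ideal.Quotient.mk_surjective m
      exact Ideal.Quotient.eq_zero_iff_mem.2
        (Ideal.mul_mem_right _ _ (Ideal.subset_span (by simp)))
  have h₁₂ : LinearIndependent (Algebra.adjoin (Algebra.adjoin R {f₂}) {f₁}) b :=
    linearIndependent_adjoin_singleton (IsSMulRegular.of_ne_zero h₁)
      (Ideal.Quotient.mkₐ (Algebra.adjoin R {f₂}) (Ideal.span {f₁})).toLinearMap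
      (fun m ↦ (Ideal.Quotient.eq_zero_iff_dvd _ _).2 (dvd_mul_right _ _)) h₂
  have hadjoin : Algebra.adjoin R {f₁, f₂} =
      (Algebra.adjoin (Algebra.adjoin R {f₂}) {f₁}).restrictScalars R := by
    rw [Set.pair_comm, Set.insert_eq, Algebra.adjoin_union_eq_adjoin_adjoin]
  rw [hadjoin]
  exact h₁₂

end LinearIndependentAdjoin

/-! ### Subalgebras generated by forms of one degree -/

section HomogeneousSubalgebra

variable {k σ : Type*}

theorem constantCoeff_eq_zero_of_isHomogeneous [CommSemiring k] {f : MvPolynomial σ k} {n : ℕ}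
    (hf : f.IsHomogeneous n) (hn : n ≠ 0) : constantCoeff f = 0 :=
  hf.coeff_eq_zero (by simpa using hn.symm)

theorem mem_bot_of_isHomogeneous_zero [CommSemiring k] {f : MvPolynomial σ k}
    (hf : f.IsHomogeneous 0) : f ∈ (⊥ : Subalgebra k (MvPolynomial σ k)) :=
  ⟨coeff 0 f, (totalDegree_eq_zero_iff_eq_C.1 ((totalDegree_zero_iff_isHomogeneous σ).2 hf)).symm⟩

variable [CommRing k]

theorem homogeneousComponent_mul_of_isHomogeneous_s10 {m : ℕ} {f : MvPolynomial σ k}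
    (hf : f.IsHomogeneous m) (n : ℕ) (p : MvPolynomial σ k) :
    homogeneousComponent n (f * p) = if m ≤ n then f * homogeneousComponent (n - m) p else 0 := by
  let := gradedAlgebra (σ := σ) (R := k)
  simp only [← decomposition.decompose'_apply]
  exact DirectSum.coe_decompose_mul_of_left_mem (homogeneousSubmodule σ k) n hf

variable {s : Set (MvPolynomial σ k)} {r : ℕ}

theorem exists_isHomogeneous_mul_of_mem_closure (hs : ∀ f ∈ s, f.IsHomogeneous r)
    {x : MvPolynomial σ k} (hx : x ∈ Submonoid.closure s) : ∃ n, x.IsHomogeneous (r * n) := by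
  induction hx using Submonoid.closure_induction with
  | mem f hf => exact ⟨1, by simpa using hs f hf⟩
  | one => exact ⟨0, isHomogeneous_one σ k⟩
  | mul x y _ _ hx hy =>
    obtain ⟨m, hm⟩ := hx
    obtain ⟨n, hn⟩ := hy
    exact ⟨m + n, by simpa [mul_add] using hm.mul hn⟩

theorem homogeneousComponent_mem_adjoin (hs : ∀ f ∈ s, f.IsHomogeneous r) (n : ℕ)
    {v : MvPolynomial σ k} (hv : v ∈ Algebra.adjoin k s) :
    homogeneousComponent n v ∈ Algebra.adjoin k s := by
  rw [← Subalgebra.mem_toSubmodule, Algebra.adjoin_eq_span] at hv ⊢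
  refine (Submodule.span_le (p := (Submodule.span k _).comap (homogeneousComponent n))).2
    (fun x hx ↦ ?_) hv
  obtain ⟨m, hm⟩ := exists_isHomogeneous_mul_of_mem_closure hs hx
  have := homogeneousComponent_of_mem (m := n) hm
  simp only [SetLike.mem_coe, Submodule.mem_comap, this]
  split_ifs
  exacts [Submodule.subset_span hx, zero_mem _]

theorem dvd_of_isHomogeneous_of_mem_adjoin (hs : ∀ f ∈ s, f.IsHomogeneous r) {n : ℕ}
    {v : MvPolynomial σ k} (hv : v ∈ Algebra.adjoin k s) (hn : v.IsHomogeneous n) (hv0 : v ≠ 0) :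
    r ∣ n := by
  contrapose! hv0
  rw [← Subalgebra.mem_toSubmodule, Algebra.adjoin_eq_span] at hv
  rw [← homogeneousComponent_eq_self hn]
  refine (Submodule.span_le (p := LinearMap.ker (homogeneousComponent n))).2 (fun x hx ↦ ?_) hv
  obtain ⟨m, hm⟩ := exists_isHomogeneous_mul_of_mem_closure hs hx
  have := homogeneousComponent_of_mem (m := n) hm
  rwa [if_neg] at this
  rintro rfl
  exact hv0 (dvd_mul_right _ _)

theorem homogeneousComponent_mem_span_of_mem_adjoin (hs : ∀ f ∈ s, f.IsHomogeneous r) (hr : r ≠ 0)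
    {v : MvPolynomial σ k} (hv : v ∈ Algebra.adjoin k s) :
    homogeneousComponent r v ∈ Submodule.span k s := by
  rw [← Subalgebra.mem_toSubmodule, Algebra.adjoin_eq_span] at hv
  refine (Submodule.span_le (p := (Submodule.span k s).comap (homogeneousComponent r))).2
    (fun x hx ↦ ?_) hv
  induction hx using Submonoid.closure_induction_left with
  | one =>
    simp [homogeneousComponent_of_mem (isHomogeneous_one σ k), hr]
  | mul_left f hf x _ _ =>
    have hcomp : homogeneousComponent r (f * x) = coeff 0 x • f := by
      simp [homogeneousComponent_mul_of_isHomogeneous_s10 (hs f hf), smul_eq_C_mul, mul_comm]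
    simpa only [SetLike.mem_coe, Submodule.mem_comap, hcomp]
      using Submodule.smul_mem _ _ (Submodule.subset_span hf)

theorem mem_ideal_span_of_mem_adjoin (hs : ∀ f ∈ s, constantCoeff f = 0) {v : MvPolynomial σ k}
    (hv : v ∈ Algebra.adjoin k s) (hv0 : constantCoeff v = 0) : v ∈ Ideal.span s := by
  have heq : Set.EqOn (Ideal.Quotient.mkₐ k (Ideal.span s))
      ((Algebra.ofId k _).comp (aeval fun _ ↦ 0)) s := fun f hf ↦ by
    have h0 : Ideal.Quotient.mk (Ideal.span s) f = 0 :=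
      Ideal.Quotient.eq_zero_iff_mem.2 (Ideal.subset_span hf)
    simp [h0, hs f hf]
  refine Ideal.Quotient.eq_zero_iff_mem.1 ?_
  simpa [hv0] using AlgHom.adjoin_le_equalizer _ _ heq hv

theorem homogeneousComponent_eq_zero_of_mem_ideal_span (hs : ∀ f ∈ s, f.IsHomogeneous r)
    {n : ℕ} (hn : n < r) {v : MvPolynomial σ k} (hv : v ∈ Ideal.span s) :
    homogeneousComponent n v = 0 := by
  obtain ⟨m, u, f, rfl⟩ := Submodule.mem_span_set'.1 hv
  refine (map_sum _ _ _).trans (Finset.sum_eq_zero fun i _ ↦ ?_)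
  rw [smul_eq_mul, mul_comm, homogeneousComponent_mul_of_isHomogeneous_s10 (hs _ (f i).2),
    if_neg hn.not_ge]

theorem linearIndependent_mk_of_isHomogeneous {κ : Type*} (hs : ∀ f ∈ s, f.IsHomogeneous r)
    {n : ℕ} (hn : n < r) {b : κ → MvPolynomial σ k} (hb : ∀ q, (b q).IsHomogeneous n)
    (hli : LinearIndependent k b) :
    LinearIndependent k (Ideal.Quotient.mk (Ideal.span s) ∘ b) := by
  refine hli.map (f := (Ideal.Quotient.mkₐ k (Ideal.span s)).toLinearMap) ?_
  refine Submodule.disjoint_def.2 fun v hv hvs ↦ ?_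
  have hvn : v.IsHomogeneous n :=
    (Submodule.span_le (p := homogeneousSubmodule σ k n)).2 (Set.range_subset_iff.2 hb) hv
  rw [← homogeneousComponent_eq_self hvn]
  exact homogeneousComponent_eq_zero_of_mem_ideal_span hs hn (Ideal.Quotient.eq_zero_iff_mem.1 hvs)

end HomogeneousSubalgebra

/-! ### Freeness over `k[f₁, f₂]` -/

section FreeAdjoinPair

theorem IsPrimitiveFamily.isRelPrime_of_forall_mem_adjoin {ι k σ : Type*} [CommRing k]
    {f₁ f₂ : MvPolynomial σ k} (h₁ : constantCoeff f₁ = 0) (h₂ : constantCoeff f₂ = 0)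
    {v : ι → MvPolynomial σ k} (hv : IsPrimitiveFamily v)
    (hmem : ∀ i, v i ∈ Algebra.adjoin k {f₁, f₂}) (hv0 : ∀ i, constantCoeff (v i) = 0) :
    IsRelPrime f₁ f₂ := fun p hp₁ hp₂ ↦ hv p fun i ↦ by
  have hle : Ideal.span {f₁, f₂} ≤ Ideal.span {p} := by
    simpa [Ideal.span_le, Set.pair_subset_iff, Ideal.mem_span_singleton] using ⟨hp₁, hp₂⟩
  exact Ideal.mem_span_singleton.1
    (hle (mem_ideal_span_of_mem_adjoin (by simp [h₁, h₂]) (hmem i) (hv0 i)))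

theorem left_ne_zero_of_isRelPrime {k σ : Type*} [CommRing k] [Nontrivial k]
    {f₁ f₂ : MvPolynomial σ k} (h₂ : constantCoeff f₂ = 0) (hrel : IsRelPrime f₁ f₂) : f₁ ≠ 0 := by
  rintro rfl
  exact not_isUnit_zero (h₂ ▸ (isRelPrime_zero_left.1 hrel).map constantCoeff)

theorem span_adjoin_pair_eq_top {k σ κ : Type*} [CommRing k] {f₁ f₂ : MvPolynomial σ k} {r : ℕ}
    (h₁ : f₁.IsHomogeneous r) (h₂ : f₂.IsHomogeneous r) (hr : r ≠ 0) {b : κ → MvPolynomial σ k}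
    {e : κ → ℕ} (hb : ∀ q, (b q).IsHomogeneous (e q))
    (hspan : ∀ v, ∃ w ∈ Submodule.span k (Set.range b), v - w ∈ Ideal.span {f₁, f₂}) :
    Submodule.span (Algebra.adjoin k {f₁, f₂}) (Set.range b) = ⊤ := by
  set N := Submodule.span (Algebra.adjoin k {f₁, f₂}) (Set.range b)
  have hcomp (n : ℕ) : Submodule.span k (Set.range b) ≤
      (N.restrictScalars k).comap (homogeneousComponent n) := by
    rw [Submodule.span_le, Set.range_subset_iff]
    intro q
    simp only [SetLike.mem_coe, Submodule.mem_comap, homogeneousComponent_of_mem (hb q)]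
    split_ifs
    exacts [Submodule.subset_span ⟨q, rfl⟩, zero_mem _]
  have hhom (n : ℕ) : ∀ v : MvPolynomial σ k, v.IsHomogeneous n → v ∈ N := by
    induction n using Nat.strong_induction_on with
    | h n ih =>
      have hmul {f : MvPolynomial σ k} (hf : f.IsHomogeneous r)
          (hmem : f ∈ Algebra.adjoin k {f₁, f₂}) (u : MvPolynomial σ k) :
          homogeneousComponent n (u * f) ∈ N := by
        rw [mul_comm, homogeneousComponent_mul_of_isHomogeneous_s10 hf]
        split_ifs with hrn
        · exact N.smul_mem ⟨f, hmem⟩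
            (ih (n - r) (by lia) _ (homogeneousComponent_isHomogeneous _ _))
        · exact N.zero_mem
      intro v hv
      obtain ⟨w, hw, hvw⟩ := hspan v
      obtain ⟨u₁, u₂, hu⟩ := Ideal.mem_span_pair.1 hvw
      rw [← homogeneousComponent_eq_self hv, eq_add_of_sub_eq hu.symm, map_add, map_add]
      exact N.add_mem (N.add_mem (hmul h₁ (Algebra.subset_adjoin (by simp)) u₁)
        (hmul h₂ (Algebra.subset_adjoin (by simp)) u₂)) (hcomp n hw)
  refine eq_top_iff.2 fun v _ ↦ ?_
  rw [← sum_homogeneousComponent v]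
  exact N.sum_mem fun n _ ↦ hhom n _ (homogeneousComponent_isHomogeneous n v)

universe u

variable {k : Type*} {σ : Type u} [Field k]

theorem exists_monomials_linearIndependent_mk (I : Ideal (MvPolynomial σ k)) :
    ∃ (κ : Type u) (a : κ → σ →₀ ℕ),
      LinearIndependent k (Ideal.Quotient.mk I ∘ fun q ↦ monomial (a q) (1 : k)) ∧
      ∀ v, ∃ w ∈ Submodule.span k (Set.range fun q ↦ monomial (a q) (1 : k)), v - w ∈ I := by
  obtain ⟨κ, a, -, hspan, hli⟩ := exists_linearIndependent' k
    (Ideal.Quotient.mkₐ k I ∘ fun m : σ →₀ ℕ ↦ monomial m (1 : k))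
  refine ⟨κ, a, hli, fun v ↦ ?_⟩
  have hmon : Submodule.span k (Set.range fun m : σ →₀ ℕ ↦ monomial m (1 : k)) = ⊤ := by
    simpa only [coe_basisMonomials] using (basisMonomials σ k).span_eq
  have hmap {ι : Type _} (b : ι → MvPolynomial σ k) :
      Submodule.span k (Set.range (Ideal.Quotient.mkₐ k I ∘ b)) =
        (Submodule.span k (Set.range b)).map (Ideal.Quotient.mkₐ k I).toLinearMap := by
    rw [Submodule.map_span, Set.range_comp]
    rfl
  have hv : Ideal.Quotient.mk I v ∈ Submodule.span k (Set.range
      (Ideal.Quotient.mkₐ k I ∘ fun q ↦ monomial (a q) (1 : k))) := by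
    refine hspan.symm.le ?_
    rw [hmap, hmon]
    exact ⟨v, trivial, rfl⟩
  rw [hmap] at hv
  obtain ⟨w, hw, hwv⟩ := hv
  exact ⟨w, hw, Ideal.Quotient.eq.1 hwv.symm⟩

theorem free_adjoin_pair {f₁ f₂ : MvPolynomial σ k} {r : ℕ} (h₁ : f₁.IsHomogeneous r)
    (h₂ : f₂.IsHomogeneous r) (hr : r ≠ 0) (hrel : IsRelPrime f₁ f₂) :
    Module.Free (Algebra.adjoin k {f₁, f₂}) (MvPolynomial σ k) := by
  obtain ⟨κ, a, hli, hspan⟩ := exists_monomials_linearIndependent_mk (Ideal.span {f₁, f₂})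
  have hf₁ : f₁ ≠ 0 :=
    left_ne_zero_of_isRelPrime (constantCoeff_eq_zero_of_isHomogeneous h₂ hr) hrel
  exact .of_basis <| .mk (linearIndependent_adjoin_pair hf₁ hrel hli)
    (span_adjoin_pair_eq_top h₁ h₂ hr (fun q ↦ isHomogeneous_monomial 1 rfl) hspan).ge

end FreeAdjoinPair

/-! ### Hilbert–Burch matrices -/

section HilbertBurch

open Matrix

/-- `0 → R^κ → R^ι → R`, with maps `φ` and `g`, is exact: for `g` of height two this says that
`φ` is a Hilbert–Burch matrix of `g`. -/
structure IsHilbertBurch {ι κ R : Type*} [Fintype ι] [Fintype κ] [CommRing R]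
    (g : ι → R) (φ : Matrix ι κ R) : Prop where
  injective : Function.Injective φ.mulVec
  dotProduct_eq_zero_iff : ∀ v, g ⬝ᵥ v = 0 ↔ ∃ w, φ *ᵥ w = v

namespace IsHilbertBurch

section CommRing

variable {ι κ R : Type*} [Fintype ι] [Fintype κ] [CommRing R] {g : ι → R}
  {φ : Matrix ι κ R}

theorem of_range_eq_ker (hinj : Function.Injective φ.mulVecLin)
    (hexact : LinearMap.range φ.mulVecLin =
      LinearMap.ker (mulVecLin (of fun (_ : Fin 1) (i : ι) ↦ g i))) :
    IsHilbertBurch g φ where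
  injective := hinj
  dotProduct_eq_zero_iff v := by
    have := SetLike.ext_iff.1 hexact v
    rw [LinearMap.mem_range, LinearMap.mem_ker, funext_iff, Fin.forall_fin_one] at this
    exact this.symm

theorem dotProduct_col (h : IsHilbertBurch g φ) (j : κ) : g ⬝ᵥ φ.col j = 0 := by
  classical
  exact (h.dotProduct_eq_zero_iff _).2 ⟨Pi.single j 1, by simp⟩

theorem mul_eq_mul_of_vecMul_eq_zero (h : IsHilbertBurch g φ) {u : ι → R} (hu : u ᵥ* φ = 0)
    (i j : ι) : u i * g j = u j * g i := by
  classical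
  have hKoszul : g ⬝ᵥ (Pi.single i (g j) - Pi.single j (g i)) = 0 := by
    simp [dotProduct_sub, mul_comm]
  obtain ⟨w, hw⟩ := (h.dotProduct_eq_zero_iff _).1 hKoszul
  have hdot : u ⬝ᵥ (Pi.single i (g j) - Pi.single j (g i)) = 0 := by
    rw [← hw, dotProduct_mulVec, hu, zero_dotProduct]
  simpa [dotProduct_sub, sub_eq_zero] using hdot

theorem exists_isUnit_of_isEmpty [Nontrivial R] [IsEmpty κ] (h : IsHilbertBurch g φ)
    (hg : IsPrimitiveFamily g) : ∃ i, IsUnit (g i) := by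
  classical
  obtain ⟨i, -⟩ := hg.exists_ne_zero
  refine ⟨i, hg _ fun j ↦ ?_⟩
  obtain rfl | hij := eq_or_ne j i
  · rfl
  have hgj : g j = 0 := by
    simpa [hij] using
      h.mul_eq_mul_of_vecMul_eq_zero (u := Pi.single i 1) (Subsingleton.elim _ _) i j
  exact hgj ▸ dvd_zero _

end CommRing

section IsDomain

variable {ι κ R : Type*} [Fintype ι] [Fintype κ] [CommRing R] [IsDomain R] {g : ι → R}
  {φ : Matrix ι κ R}

theorem card_lt_card (h : IsHilbertBurch g φ) {i : ι} (hi : g i ≠ 0) :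
    Fintype.card κ < Fintype.card ι := by
  classical
  let f : (Option κ → R) →ₗ[R] ι → R :=
    φ.mulVecLin ∘ₗ LinearMap.funLeft R R some +
      LinearMap.single R (fun _ ↦ R) i ∘ₗ LinearMap.proj none
  have hf : Function.Injective f := by
    refine (injective_iff_map_eq_zero f).2 fun w hw ↦ ?_
    have hw' : φ *ᵥ (w ∘ some) + Pi.single i (w none) = 0 := hw
    have hnone : w none = 0 := by
      have := congrArg (g ⬝ᵥ ·) hw'
      simpa [dotProduct_add, (h.dotProduct_eq_zero_iff _).2 ⟨_, rfl⟩, hi] using this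
    have hsome : w ∘ some = 0 := h.injective (by simpa [hnone] using hw')
    ext (_ | j)
    exacts [hnone, congrFun hsome j]
  exact (Fintype.card_option (α := κ)).symm.trans_le (card_le_of_injective R f hf)

theorem isPrimitiveFamily_col (h : IsHilbertBurch g φ) (j : κ) : IsPrimitiveFamily (φ.col j) := by
  classical
  intro p hp
  choose ψ hψ using hp
  have hcol : φ.col j = p • ψ := funext hψ
  have hp0 : p ≠ 0 := by
    rintro rfl
    have : φ *ᵥ Pi.single j 1 = φ *ᵥ 0 := by simp [hcol]
    simpa using congrFun (h.injective this) j
  obtain ⟨w, rfl⟩ := (h.dotProduct_eq_zero_iff ψ).1 <| by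
    simpa [hcol, hp0] using h.dotProduct_col j
  have hw : p • w = Pi.single j 1 := h.injective <| by simp [mulVec_smul, ← hcol]
  exact .of_mul_eq_one (w j) (by simpa using congrFun hw j)

theorem exists_mul_eq_mul_of_forall_mem {S : Type*} [CommRing S] [Algebra S R]
    (h : IsHilbertBurch g φ) {A : Subalgebra S R} (hφ : ∀ i j, φ i j ∈ A) {i₁ : ι} (h₁ : g i₁ ≠ 0) :
    ∃ i₀, g i₀ ≠ 0 ∧ ∀ i, ∃ a ∈ A, ∃ b ∈ A, b ≠ 0 ∧ b * g i = a * g i₀ := by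
  let φA : Matrix ι κ A := fun i j ↦ ⟨φ i j, hφ i j⟩
  obtain ⟨u, hu, hu0⟩ : ∃ u, u ᵥ* φA = 0 ∧ u ≠ 0 := by
    by_contra! hinj
    exact (h.card_lt_card h₁).not_ge <| card_le_of_injective A φA.vecMulLinear <|
      (injective_iff_map_eq_zero _).2 hinj
  have hker : (fun i ↦ (u i : R)) ᵥ* φ = 0 := by
    ext j
    simpa [φA, vecMul, dotProduct] using congrArg (fun v ↦ (v j : R)) hu
  have hcross := h.mul_eq_mul_of_vecMul_eq_zero hker
  obtain ⟨i₀, hi₀⟩ := Function.ne_iff.1 hu0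
  have hi₀' : (u i₀ : R) ≠ 0 := by simpa using hi₀
  refine ⟨i₀, fun h₀ ↦ ?_, fun i ↦ ⟨u i, (u i).2, u i₀, (u i₀).2, hi₀', hcross i₀ i⟩⟩
  have := hcross i₀ i₁
  simp [h₀, hi₀', h₁] at this

end IsDomain

end IsHilbertBurch

end HilbertBurch

/-! ### Descent to a subalgebra over which polynomials are free -/

section Descent

open Matrix

variable {k σ ι κ : Type*} [CommRing k] [Fintype κ]

theorem homogeneousComponent_mulVec_congr {ψ : Matrix ι κ (MvPolynomial σ k)} {c : ℕ}
    (hψ : ∀ i j, (ψ i j).IsHomogeneous c) {w w' : κ → MvPolynomial σ k}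
    (hw : ∀ j, constantCoeff (w j) = constantCoeff (w' j)) (i : ι) :
    homogeneousComponent c ((ψ *ᵥ w) i) = homogeneousComponent c ((ψ *ᵥ w') i) := by
  rw [constantCoeff_eq] at hw
  simp [mulVec, dotProduct, homogeneousComponent_mul_of_isHomogeneous_s10 (hψ i _), hw]

theorem exists_sum_basis_smul_eq_single {A B Q : Type*} [CommRing A] [CommRing B]
    [Algebra A B] [Finite ι] [DecidableEq κ] (b : Module.Basis Q A B) {ψ : Matrix ι κ B}
    (hinj : Function.Injective ψ.mulVec) {j : κ} {w : Q → κ → B}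
    (hw : ∀ q i, (ψ *ᵥ w q) i = algebraMap A B (b.coord q (ψ i j))) :
    ∃ T : Finset Q, ∑ q ∈ T, b q • w q = Pi.single j 1 := by
  classical
  let := Fintype.ofFinite ι
  refine ⟨Finset.univ.biUnion fun i ↦ (b.repr (ψ i j)).support, hinj ?_⟩
  ext i
  have hsub : (b.repr (ψ i j)).support ⊆ Finset.univ.biUnion fun i ↦ (b.repr (ψ i j)).support :=
    Finset.subset_biUnion_of_mem (fun i ↦ (b.repr (ψ i j)).support) (Finset.mem_univ i)
  have hexpand := b.linearCombination_repr (ψ i j)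
  rw [Finsupp.linearCombination_apply, Finsupp.sum_of_support_subset _ hsub _ (by simp)] at hexpand
  simp only [mulVec_sum, mulVec_smul, Finset.sum_apply, Pi.smul_apply, hw, mulVec_single_one,
    col_apply, smul_eq_mul]
  refine (Finset.sum_congr rfl fun q _ ↦ ?_).trans hexpand
  rw [Algebra.smul_def, mul_comm, b.coord_apply]

theorem mem_of_forall_linearMap_exists_mulVec [Finite ι] {A : Subalgebra k (MvPolynomial σ k)}
    [Module.Free A (MvPolynomial σ k)] (hA : ∀ n, ∀ v ∈ A, homogeneousComponent n v ∈ A)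
    {ψ : Matrix ι κ (MvPolynomial σ k)} (hinj : Function.Injective ψ.mulVec) {c : ℕ}
    (hψ : ∀ i j, (ψ i j).IsHomogeneous c)
    (hπ : ∀ (π : MvPolynomial σ k →ₗ[A] A) (j : κ),
      ∃ w, ψ *ᵥ w = fun i ↦ (π (ψ i j) : MvPolynomial σ k))
    (i : ι) (j : κ) : ψ i j ∈ A := by
  classical
  -- Since `ψ` is injective, the `w q` with weights `b q` recombine to the `j`-th unit vector; in
  -- degree `c` only the constant coefficients of these weights matter.
  let b := Module.Free.chooseBasis A (MvPolynomial σ k)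
  choose w hw using fun q ↦ hπ (b.coord q) j
  obtain ⟨T, hT⟩ := exists_sum_basis_smul_eq_single b hinj fun q i ↦ congrFun (hw q) i
  have hsum : ψ i j = ∑ q ∈ T, constantCoeff (b q) •
      homogeneousComponent c (b.coord q (ψ i j) : MvPolynomial σ k) := calc
    ψ i j = homogeneousComponent c ((ψ *ᵥ Pi.single j 1) i) := by
      rw [mulVec_single_one, col_apply, homogeneousComponent_eq_self (hψ i j)]
    _ = homogeneousComponent c ((ψ *ᵥ ∑ q ∈ T, constantCoeff (b q) • w q) i) :=
      homogeneousComponent_mulVec_congr hψ (fun l ↦ by simp [← hT, smul_eq_C_mul]) i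
    _ = _ := by
      simp [mulVec_sum, mulVec_smul, hw]
  rw [hsum]
  exact A.sum_mem fun q _ ↦ A.smul_mem (hA c _ (b.coord q (ψ i j)).2) _

theorem IsHilbertBurch.apply_mem_of_forall_mem [Fintype ι] {A : Subalgebra k (MvPolynomial σ k)}
    [Module.Free A (MvPolynomial σ k)] {g : ι → MvPolynomial σ k}
    {φ : Matrix ι κ (MvPolynomial σ k)} (h : IsHilbertBurch g φ)
    (hA : ∀ n, ∀ v ∈ A, homogeneousComponent n v ∈ A) {c : ℕ}
    (hφ : ∀ i j, (φ i j).IsHomogeneous c) (hg : ∀ i, g i ∈ A) (i : ι) (j : κ) : φ i j ∈ A := by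
  refine mem_of_forall_linearMap_exists_mulVec hA h.injective hφ (fun π j ↦ ?_) i j
  refine (h.dotProduct_eq_zero_iff _).1 ?_
  have hπ : π (∑ i, (⟨g i, hg i⟩ : A) • φ i j) = 0 :=
    (congrArg π (h.dotProduct_col j)).trans (map_zero π)
  simpa [dotProduct] using congrArg ((↑) : A → MvPolynomial σ k) hπ

theorem IsPrimitiveFamily.mem_of_ratio_mem {k σ ι : Type*} [Field k] [Finite ι]
    {A : Subalgebra k (MvPolynomial σ k)} [Module.Free A (MvPolynomial σ k)]
    {g : ι → MvPolynomial σ k} (hg : IsPrimitiveFamily g)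
    (hA : ∀ n, ∀ v ∈ A, homogeneousComponent n v ∈ A) {d : ℕ} (hd : ∀ i, (g i).IsHomogeneous d)
    {i₀ : ι} (h₀ : g i₀ ≠ 0)
    (hratio : ∀ i, ∃ a ∈ A, ∃ b ∈ A, b ≠ 0 ∧ b * g i = a * g i₀) (i : ι) : g i ∈ A := by
  have hinj : Function.Injective (replicateCol Unit g).mulVec := fun w w' hw ↦ by
    ext1
    simpa [mulVec, dotProduct, h₀] using congrFun hw i₀
  refine mem_of_forall_linearMap_exists_mulVec hA hinj (fun i _ ↦ hd i) (fun π _ ↦ ?_) i ()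
  have hcross (i : ι) : (π (g i) : MvPolynomial σ k) * g i₀ = π (g i₀) * g i := by
    obtain ⟨a, ha, b, hb, hb0, hab⟩ := hratio i
    have hπ : b * (π (g i) : MvPolynomial σ k) = a * π (g i₀) := by
      have := congrArg π (show (⟨b, hb⟩ : A) • g i = (⟨a, ha⟩ : A) • g i₀ from hab)
      simpa using congrArg ((↑) : A → MvPolynomial σ k) this
    refine mul_left_cancel₀ hb0 ?_
    linear_combination g i₀ * hπ - π (g i₀) * hab
  obtain ⟨s, hs⟩ := hg.exists_eq_mul_of_cross_mul h₀ hcross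
  refine ⟨fun _ ↦ s, ?_⟩
  ext1 i
  simp [mulVec, dotProduct, hs i, mul_comm]

end Descent

/-! ### Fractions of binary forms and Lüroth's theorem -/

section BinaryForms

theorem aeval_mul_of_isHomogeneous {k σ S : Type*} [CommSemiring k] [CommSemiring S] [Algebra k S]
    {n : ℕ} {q : MvPolynomial σ k} (hq : q.IsHomogeneous n) (t : S) (a : σ → S) :
    aeval (fun i ↦ t * a i) q = t ^ n * aeval a q := by
  simp only [aeval_def, eval₂_eq, Finset.mul_sum]
  refine Finset.sum_congr rfl fun e he ↦ ?_
  simp only [mul_pow, Finset.prod_mul_distrib, Finset.prod_pow_eq_pow_sum,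
    ← hq.degree_eq_sum_deg_support he]
  ring

/-- Restriction of a binary form to the affine chart `X 1 = 1`, the inverse of
`Polynomial.homogenize` on forms of a given degree. -/
noncomputable abbrev dehomogenize (k : Type*) [CommSemiring k] :
    MvPolynomial (Fin 2) k →ₐ[k] Polynomial k :=
  aeval ![Polynomial.X, 1]

variable {k K : Type*} [Field k] [Field K] [Algebra k K] [Algebra (MvPolynomial (Fin 2) k) K]
  [IsScalarTower k (MvPolynomial (Fin 2) k) K] [FaithfulSMul (MvPolynomial (Fin 2) k) K]

theorem algebraMap_eq_pow_mul_aeval_dehomogenize {n : ℕ} {q : MvPolynomial (Fin 2) k}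
    (hq : q.IsHomogeneous n) :
    algebraMap (MvPolynomial (Fin 2) k) K q = algebraMap (MvPolynomial (Fin 2) k) K (X 1) ^ n *
      Polynomial.aeval (algebraMap (MvPolynomial (Fin 2) k) K (X 0) /
        algebraMap (MvPolynomial (Fin 2) k) K (X 1)) (dehomogenize k q) := by
  set x := algebraMap (MvPolynomial (Fin 2) k) K (X 0)
  set y := algebraMap (MvPolynomial (Fin 2) k) K (X 1) with hy
  have hy0 : y ≠ 0 := by simp [hy]
  have haeval : (Polynomial.aeval (x / y)).comp (dehomogenize k) = aeval ![x / y, 1] := by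
    ext i
    fin_cases i <;> simp
  have hscale : aeval (fun i ↦ y * ![x / y, 1] i) = IsScalarTower.toAlgHom k _ K := by
    ext i
    fin_cases i <;> simp [x, y, mul_div_cancel₀ _ hy0]
  rw [← AlgHom.comp_apply, haeval, ← aeval_mul_of_isHomogeneous hq, hscale,
    IsScalarTower.toAlgHom_apply]

theorem transcendental_algebraMap_div :
    Transcendental k (algebraMap (MvPolynomial (Fin 2) k) K (X 0) /
      algebraMap (MvPolynomial (Fin 2) k) K (X 1)) := by
  refine transcendental_iff.2 fun p hp ↦ Polynomial.eq_zero_of_homogenize_eq_zero le_rfl <|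
    FaithfulSMul.algebraMap_injective _ K ?_
  rw [algebraMap_eq_pow_mul_aeval_dehomogenize p.isHomogeneous_homogenize,
    Polynomial.aeval_homogenize_X_one p le_rfl, hp, mul_zero, map_zero]

theorem exists_algHom_ratFunc_dehomogenize_div (k K : Type*) [Field k] [Field K] [Algebra k K]
    [Algebra (MvPolynomial (Fin 2) k) K] [IsScalarTower k (MvPolynomial (Fin 2) k) K]
    [FaithfulSMul (MvPolynomial (Fin 2) k) K] :
    ∃ θ : RatFunc k →ₐ[k] K, ∀ {n : ℕ} {u v : MvPolynomial (Fin 2) k}, u.IsHomogeneous n →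
      v.IsHomogeneous n →
      θ (algebraMap _ _ (dehomogenize k u) / algebraMap _ _ (dehomogenize k v)) =
        algebraMap _ K u / algebraMap _ K v := by
  refine ⟨RatFunc.liftAlgHom _ (nonZeroDivisors_le_comap_nonZeroDivisors_of_injective _
    (transcendental_iff_injective.1 (transcendental_algebraMap_div (K := K)))),
    fun {n u v} hu hv ↦ ?_⟩
  rw [RatFunc.liftAlgHom_apply_div, algebraMap_eq_pow_mul_aeval_dehomogenize hu,
    algebraMap_eq_pow_mul_aeval_dehomogenize hv, mul_div_mul_left _ _ (pow_ne_zero n (by simp))]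

theorem algebraMap_div_mem_adjoin (k : Type*) {B K : Type*} [Field k] [CommRing B] [Field K]
    [Algebra k K] [Algebra B K] {S : Set B} {u v : B} (hu : u ∈ S) (hv : v ∈ S) :
    algebraMap B K u / algebraMap B K v ∈ IntermediateField.adjoin k (algebraMap B K '' S) :=
  div_mem (IntermediateField.subset_adjoin k _ (Set.mem_image_of_mem _ hu))
    (IntermediateField.subset_adjoin k _ (Set.mem_image_of_mem _ hv))

theorem exists_mul_eq_mul_of_div_mem_adjoin {B K : Type*} [CommRing B] [Nontrivial B] [Field K]
    [Algebra k B] [Algebra B K] [Algebra k K] [IsScalarTower k B K] [FaithfulSMul B K] {S : Set B}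
    {u v : B} (hv : v ≠ 0)
    (huv : algebraMap B K u / algebraMap B K v ∈ IntermediateField.adjoin k (algebraMap B K '' S)) :
    ∃ a ∈ Algebra.adjoin k S, ∃ b ∈ Algebra.adjoin k S, b ≠ 0 ∧ b * u = a * v := by
  have hinj : Function.Injective (algebraMap B K) := FaithfulSMul.algebraMap_injective B K
  have hadjoin : Algebra.adjoin k (algebraMap B K '' S) =
      (Algebra.adjoin k S).map (IsScalarTower.toAlgHom k B K) :=
    (AlgHom.map_adjoin (IsScalarTower.toAlgHom k B K) S).symm
  rw [IntermediateField.mem_adjoin_iff_div, hadjoin] at huv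
  obtain ⟨_, ⟨a, ha, rfl⟩, _, ⟨b, hb, rfl⟩, hab⟩ := huv
  obtain rfl | hb0 := eq_or_ne b 0
  · exact ⟨0, zero_mem _, 1, one_mem _, one_ne_zero, by simpa [hv, hinj.eq_iff] using hab⟩
  · refine ⟨a, ha, b, hb, hb0, hinj ?_⟩
    rw [map_mul, map_mul, mul_comm]
    exact (div_eq_div_iff ((map_ne_zero_iff _ hinj).2 hv) ((map_ne_zero_iff _ hinj).2 hb0)).1 hab

theorem isRelPrime_homogenize_of_isCoprime {R : Type*} [CommRing R] [IsDomain R]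
    {p q : Polynomial R} (hpq : IsCoprime p q) {n : ℕ} (hp : p.natDegree ≤ n)
    (hq : q.natDegree ≤ n) (hn : p.coeff n ≠ 0 ∨ q.coeff n ≠ 0) :
    IsRelPrime (p.homogenize n) (q.homogenize n) := by
  intro s hsp hsq
  obtain ⟨u, v, huv⟩ := hpq
  obtain ⟨m, hum, hvm⟩ : ∃ m, u.natDegree ≤ m ∧ v.natDegree ≤ m :=
    ⟨_, le_max_left _ _, le_max_right _ _⟩
  have hBezout : u.homogenize m * p.homogenize n + v.homogenize m * q.homogenize n =
      X 1 ^ (m + n) := by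
    rw [← Polynomial.homogenize_mul u p hum hp, ← Polynomial.homogenize_mul v q hvm hq,
      ← Polynomial.homogenize_add, huv, Polynomial.homogenize_one]
  have hs : s ∣ X 1 ^ (m + n) := hBezout ▸ dvd_add (hsp.mul_left _) (hsq.mul_left _)
  obtain ⟨i, -, hi⟩ := (dvd_prime_pow X_prime _).1 hs
  obtain rfl | hi0 := eq_or_ne i 0
  · simpa using hi
  have hcoeff (f : Polynomial R) (hf : s ∣ f.homogenize n) : f.coeff n = 0 := by
    obtain ⟨w, hw⟩ := ((dvd_pow_self _ hi0).trans hi.symm.dvd).trans hf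
    have := f.coeff_homogenize n (.single 0 n)
    rw [hw, coeff_X_mul', if_neg (by simp)] at this
    simpa using this.symm
  exact (hn.elim (· (hcoeff p hsp)) (· (hcoeff q hsq))).elim

theorem exists_isRelPrime_forms_eq_div (h : RatFunc k) :
    ∃ f₁ f₂ : MvPolynomial (Fin 2) k,
      f₁.IsHomogeneous (max h.num.natDegree h.denom.natDegree) ∧
      f₂.IsHomogeneous (max h.num.natDegree h.denom.natDegree) ∧ IsRelPrime f₁ f₂ ∧
      h = algebraMap _ _ (dehomogenize k f₁) / algebraMap _ _ (dehomogenize k f₂) := by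
  refine ⟨h.num.homogenize _, h.denom.homogenize _, h.num.isHomogeneous_homogenize,
    h.denom.isHomogeneous_homogenize, isRelPrime_homogenize_of_isCoprime h.isCoprime_num_denom
      (le_max_left _ _) (le_max_right _ _) ?_, ?_⟩
  · obtain hmax | hmax := max_choice h.num.natDegree h.denom.natDegree
    · obtain h0 | h0 := eq_or_ne h.num 0
      · exact .inr (by simp [h0, h.denom_ne_zero])
      · exact .inl (by simpa [hmax] using h0)
    · exact .inr (by simp [hmax, h.denom_ne_zero])
  · rw [Polynomial.aeval_homogenize_X_one _ (le_max_left _ _),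
      Polynomial.aeval_homogenize_X_one _ (le_max_right _ _), h.num_div_denom]

end BinaryForms

/-! ### Birationality onto the image -/

/-- Birationality onto its image of the map defined by the forms `g` of degree `d`, in algebraic
terms: every element of the Veronese ring `k[B_d]` is a fraction of elements of `k[g]`, that is,
the two rings have the same quotient field. -/
def IsBirationalOntoImage {ι σ k : Type*} [Field k] (d : ℕ) (g : ι → MvPolynomial σ k) : Prop :=
  ∀ v ∈ Algebra.adjoin k {f : MvPolynomial σ k | f.IsHomogeneous d},
    ∃ a ∈ Algebra.adjoin k (Set.range g), ∃ b ∈ Algebra.adjoin k (Set.range g), b ≠ 0 ∧ b * v = a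

section Birational

variable {k K σ ι : Type*} [Field k] [Field K] [Algebra k K] [Algebra (MvPolynomial σ k) K]
  [IsScalarTower k (MvPolynomial σ k) K] [FaithfulSMul (MvPolynomial σ k) K]
  {g : ι → MvPolynomial σ k} {d : ℕ}

theorem isBirationalOntoImage_of_forall_div_mem {i₀ : ι} (h₀ : g i₀ ≠ 0)
    (h : ∀ v : MvPolynomial σ k, v.IsHomogeneous d →
      algebraMap _ K v / algebraMap _ K (g i₀) ∈
        IntermediateField.adjoin k (algebraMap (MvPolynomial σ k) K '' Set.range g)) :
    IsBirationalOntoImage d g := by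
  set L := IntermediateField.adjoin k (algebraMap (MvPolynomial σ k) K '' Set.range g)
  have hle : Algebra.adjoin k {f : MvPolynomial σ k | f.IsHomogeneous d} ≤
      L.toSubalgebra.comap (IsScalarTower.toAlgHom k _ K) := by
    refine Algebra.adjoin_le fun v hv ↦ ?_
    have hg₀ : algebraMap _ K (g i₀) ∈ L :=
      IntermediateField.subset_adjoin k _ ⟨_, ⟨i₀, rfl⟩, rfl⟩
    have := mul_mem (h v hv) hg₀
    rwa [div_mul_cancel₀ _ (by simpa using h₀)] at this
  intro v hv
  obtain ⟨a, ha, b, hb, hb0, hab⟩ := exists_mul_eq_mul_of_div_mem_adjoin (K := K) one_ne_zero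
    (S := Set.range g) (u := v) (by simpa using hle hv)
  exact ⟨a, ha, b, hb, hb0, by rw [hab, mul_one]⟩

end Birational

theorem exists_forms_ratio_mem_of_not_isBirationalOntoImage {k ι : Type*} [Field k]
    {g : ι → MvPolynomial (Fin 2) k} {d : ℕ} (hg : ∀ i, (g i).IsHomogeneous d) {i₀ : ι}
    (h₀ : g i₀ ≠ 0) (hbir : ¬ IsBirationalOntoImage d g) :
    ∃ r ≠ 1, ∃ f₁ f₂ : MvPolynomial (Fin 2) k, f₁.IsHomogeneous r ∧ f₂.IsHomogeneous r ∧
      IsRelPrime f₁ f₂ ∧ ∀ i, ∃ a ∈ Algebra.adjoin k {f₁, f₂}, ∃ b ∈ Algebra.adjoin k {f₁, f₂},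
        b ≠ 0 ∧ b * g i = a * g i₀ := by
  let K := FractionRing (MvPolynomial (Fin 2) k)
  obtain ⟨θ, hθ⟩ := exists_algHom_ratFunc_dehomogenize_div k K
  have hmem {S : Set (MvPolynomial (Fin 2) k)} {n : ℕ} {u v : MvPolynomial (Fin 2) k}
      (hu : u.IsHomogeneous n) (hv : v.IsHomogeneous n) :
      algebraMap _ _ (dehomogenize k u) / algebraMap _ _ (dehomogenize k v) ∈
        (IntermediateField.adjoin k (algebraMap _ K '' S)).comap θ ↔
      algebraMap _ K u / algebraMap _ K v ∈ IntermediateField.adjoin k (algebraMap _ K '' S) := by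
    rw [← hθ hu hv]
    rfl
  let E := (IntermediateField.adjoin k (algebraMap _ K '' Set.range g)).comap θ
  have hE : E ≠ ⊤ := fun htop ↦ hbir <| isBirationalOntoImage_of_forall_div_mem (K := K) h₀
    fun v hv ↦ hθ hv (hg i₀) ▸ htop.ge IntermediateField.mem_top
  have hEgen := RatFunc.Luroth.eq_adjoin_generator (E := E)
  set h := RatFunc.Luroth.generator E
  obtain ⟨f₁, f₂, h₁, h₂, hrel, hdiv⟩ := exists_isRelPrime_forms_eq_div h
  refine ⟨_, fun hr ↦ hE ?_, f₁, f₂, h₁, h₂, hrel, fun i ↦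
    exists_mul_eq_mul_of_div_mem_adjoin (K := K) h₀ ?_⟩
  · rwa [← RatFunc.finrank_eq_max_natDegree, ← hEgen,
      IntermediateField.finrank_eq_one_iff_eq_top] at hr
  have hle : E ≤ (IntermediateField.adjoin k (algebraMap _ K '' {f₁, f₂})).comap θ := by
    rw [hEgen, IntermediateField.adjoin_simple_le_iff]
    exact hdiv ▸ (hmem h₁ h₂).2 (algebraMap_div_mem_adjoin k (by simp) (by simp))
  exact (hmem (hg i) (hg i₀)).1 <| hle <|
    (hmem (hg i) (hg i₀)).2 (algebraMap_div_mem_adjoin k ⟨i, rfl⟩ ⟨i₀, rfl⟩)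

theorem not_isBirationalOntoImage_of_forall_mem_adjoin {ι k σ : Type*} [Field k]
    [Nontrivial σ] {f₁ f₂ : MvPolynomial σ k} {r : ℕ} (h₁ : f₁.IsHomogeneous r)
    (h₂ : f₂.IsHomogeneous r) (hr : 2 ≤ r) (hrel : IsRelPrime f₁ f₂) {d : ℕ} (hd : d ≠ 0)
    {g : ι → MvPolynomial σ k} (hg : ∀ i, g i ∈ Algebra.adjoin k {f₁, f₂}) :
    ¬ IsBirationalOntoImage d g := by
  intro hbir
  obtain ⟨i, j, hij⟩ := exists_pair_ne σ
  have hle : Algebra.adjoin k (Set.range g) ≤ Algebra.adjoin k {f₁, f₂} :=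
    Algebra.adjoin_le (Set.range_subset_iff.2 hg)
  have hX : LinearIndependent (Algebra.adjoin k {f₁, f₂}) (X : σ → MvPolynomial σ k) :=
    linearIndependent_adjoin_pair
      (left_ne_zero_of_isRelPrime (constantCoeff_eq_zero_of_isHomogeneous h₂ (by lia)) hrel) hrel
      (linearIndependent_mk_of_isHomogeneous (by simp [h₁, h₂]) hr (isHomogeneous_X k)
        (linearIndependent_X σ k))
  have hhom (l : σ) : (X i ^ (d - 1) * X l : MvPolynomial σ k).IsHomogeneous d := by
    simpa [Nat.sub_add_cancel (Nat.pos_of_ne_zero hd)] using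
      ((isHomogeneous_X k i).pow (d - 1)).mul (isHomogeneous_X k l)
  obtain ⟨a₁, ha₁, b₁, hb₁, hb₁0, hab₁⟩ := hbir _ (Algebra.subset_adjoin (hhom i))
  obtain ⟨a₂, ha₂, b₂, hb₂, hb₂0, hab₂⟩ := hbir _ (Algebra.subset_adjoin (hhom j))
  have hX0 : (X i : MvPolynomial σ k) ≠ 0 := X_ne_zero i
  have ha₁0 : a₁ ≠ 0 := hab₁ ▸ mul_ne_zero hb₁0 (mul_ne_zero (pow_ne_zero _ hX0) hX0)
  have hsmul : (⟨a₁ * b₂, mul_mem (hle ha₁) (hle hb₂)⟩ : Algebra.adjoin k {f₁, f₂}) •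
      (X j : MvPolynomial σ k) =
      (⟨b₁ * a₂, mul_mem (hle hb₁) (hle ha₂)⟩ : Algebra.adjoin k {f₁, f₂}) • X i := by
    simp only [Subalgebra.smul_def, smul_eq_mul, ← hab₁, ← hab₂]
    ring
  refine hij (hX.eq_of_smul_apply_eq_smul_apply _ _ _ _ ?_ hsmul).symm
  exact fun h0 ↦ mul_ne_zero ha₁0 hb₂0 (congrArg Subtype.val h0)

/-! ### Generators and syzygies in `k[f₁, f₂]` -/

section PairOfForms

theorem exists_span_range_eq_of_finrank_le {k V : Type*} [DivisionRing k] [AddCommGroup V]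
    [Module k V] {W : Submodule k V} [Module.Finite k W] {n : ℕ} (h : Module.finrank k W ≤ n) :
    ∃ f : Fin n → V, Submodule.span k (Set.range f) = W := by
  obtain ⟨e, he⟩ : ∃ e : W →ₗ[k] Fin n → k, Function.Injective e :=
    finrank_le_iff_exists_linearMap.1 (by simpa using h)
  obtain ⟨p, hp⟩ := e.exists_leftInverse_of_injective (LinearMap.ker_eq_bot.2 he)
  refine ⟨(W.subtype ∘ₗ p) ∘ Pi.basisFun k (Fin n), ?_⟩
  rw [Set.range_comp, ← Submodule.map_span, Module.Basis.span_eq, Submodule.map_comp,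
    Submodule.map_top, LinearMap.range_eq_top.2 (LinearMap.surjective_of_comp_eq_id _ _ hp),
    Submodule.map_top, Submodule.range_subtype]

variable {k σ ι : Type*} [Field k] {g : ι → MvPolynomial σ k} {f₁ f₂ : MvPolynomial σ k} {c d r : ℕ}

theorem exists_forms_span_pair_eq {S : Set (MvPolynomial σ k)} (hfin : S.Finite)
    (hS : ∀ f ∈ S, f.IsHomogeneous r) (hrank : Module.finrank k (Submodule.span k S) ≤ 2) :
    ∃ f₁ f₂ : MvPolynomial σ k, f₁.IsHomogeneous r ∧ f₂.IsHomogeneous r ∧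
      Submodule.span k {f₁, f₂} = Submodule.span k S := by
  have : Module.Finite k (Submodule.span k S) := .span_of_finite k hfin
  obtain ⟨f, hf⟩ := exists_span_range_eq_of_finrank_le hrank
  have hpair : Set.range f = {f 0, f 1} := by ext; simp [eq_comm]
  have hhom (l : Fin 2) : (f l).IsHomogeneous r :=
    (Submodule.span_le (p := homogeneousSubmodule σ k r)).2 hS
      (hf.le (Submodule.subset_span (Set.mem_range_self l)))
  exact ⟨f 0, f 1, hhom 0, hhom 1, hpair ▸ hf⟩

theorem finrank_span_range_le_two_of_mem_adjoin_pair {f : ι → MvPolynomial σ k}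
    (hr : r ≠ 0) (h₁ : f₁.IsHomogeneous r) (h₂ : f₂.IsHomogeneous r)
    (hf : ∀ i, (f i).IsHomogeneous r) (hmem : ∀ i, f i ∈ Algebra.adjoin k {f₁, f₂}) :
    Module.finrank k (Submodule.span k (Set.range f)) ≤ 2 := by
  have hle : Submodule.span k (Set.range f) ≤ Submodule.span k {f₁, f₂} :=
    Submodule.span_le.2 <| Set.range_subset_iff.2 fun i ↦ by
      rw [← homogeneousComponent_eq_self (hf i)]
      exact homogeneousComponent_mem_span_of_mem_adjoin (by simp [h₁, h₂]) hr (hmem i)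
  have hfin : Module.Finite k (Submodule.span k {f₁, f₂}) := .span_of_finite k (Set.toFinite _)
  have hcard : Module.finrank k (Submodule.span k {f₁, f₂}) ≤ 2 := by
    have := finrank_range_le_card (R := k) ![f₁, f₂]
    rwa [Matrix.range_cons_cons_empty] at this
  exact (Submodule.finrank_mono hle).trans hcard

theorem IsPrimitiveFamily.degree_ne_zero (hprim : IsPrimitiveFamily g)
    (hunit : ∀ i, ¬ IsUnit (g i)) (hg : ∀ i, (g i).IsHomogeneous d) : d ≠ 0 := by
  rintro rfl
  obtain ⟨i, hi⟩ := hprim.exists_ne_zero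
  exact hunit i (isUnit_of_mem_bot (mem_bot_of_isHomogeneous_zero (hg i)) hi)

theorem IsPrimitiveFamily.mem_adjoin_pair_of_ratio_mem [Finite ι] (hg : IsPrimitiveFamily g)
    (hd : ∀ i, (g i).IsHomogeneous d) (h₁ : f₁.IsHomogeneous r) (h₂ : f₂.IsHomogeneous r)
    (hr : r ≠ 0) (hrel : IsRelPrime f₁ f₂) {i₀ : ι} (h₀ : g i₀ ≠ 0)
    (hratio : ∀ i, ∃ a ∈ Algebra.adjoin k {f₁, f₂}, ∃ b ∈ Algebra.adjoin k {f₁, f₂},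
      b ≠ 0 ∧ b * g i = a * g i₀) (i : ι) : g i ∈ Algebra.adjoin k {f₁, f₂} :=
  have := free_adjoin_pair h₁ h₂ hr hrel
  hg.mem_of_ratio_mem
    (fun n _ ↦ homogeneousComponent_mem_adjoin (r := r) (by simp [h₁, h₂]) n) hd h₀ hratio i

theorem IsPrimitiveFamily.exists_forms_mem_adjoin_of_not_isBirationalOntoImage
    [Finite ι] {g : ι → MvPolynomial (Fin 2) k} (hprim : IsPrimitiveFamily g)
    (hunit : ∀ i, ¬ IsUnit (g i)) (hg : ∀ i, (g i).IsHomogeneous d)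
    (hbir : ¬ IsBirationalOntoImage d g) :
    ∃ r ≠ 1, ∃ f₁ f₂ : MvPolynomial (Fin 2) k, f₁.IsHomogeneous r ∧ f₂.IsHomogeneous r ∧
      ∀ i, g i ∈ Algebra.adjoin k {f₁, f₂} := by
  obtain ⟨i₀, h₀⟩ := hprim.exists_ne_zero
  obtain ⟨r, hr1, f₁, f₂, h₁, h₂, hrel, hratio⟩ :=
    exists_forms_ratio_mem_of_not_isBirationalOntoImage hg h₀ hbir
  have hr0 : r ≠ 0 := by
    rintro rfl
    have hle : Algebra.adjoin k {f₁, f₂} ≤ ⊥ := Algebra.adjoin_le <|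
      Set.pair_subset (mem_bot_of_isHomogeneous_zero h₁) (mem_bot_of_isHomogeneous_zero h₂)
    refine hunit i₀ (hprim.isUnit_of_forall_dvd_mul (k := k) fun i ↦ ?_)
    obtain ⟨a, -, b, hb, hb0, hab⟩ := hratio i
    exact ⟨b, hle hb, hb0, hab ▸ dvd_mul_left _ _⟩
  exact ⟨r, hr1, f₁, f₂, h₁, h₂,
    hprim.mem_adjoin_pair_of_ratio_mem hg h₁ h₂ hr0 hrel h₀ hratio⟩

variable {κ : Type*} [Fintype ι] [Fintype κ] {φ : Matrix ι κ (MvPolynomial σ k)}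

theorem IsHilbertBurch.apply_mem_adjoin_pair (h : IsHilbertBurch g φ)
    (hφ : ∀ i j, (φ i j).IsHomogeneous c) (h₁ : f₁.IsHomogeneous r) (h₂ : f₂.IsHomogeneous r)
    (hr : r ≠ 0) (hrel : IsRelPrime f₁ f₂) (hmem : ∀ i, g i ∈ Algebra.adjoin k {f₁, f₂})
    (i : ι) (j : κ) : φ i j ∈ Algebra.adjoin k {f₁, f₂} :=
  have := free_adjoin_pair h₁ h₂ hr hrel
  h.apply_mem_of_forall_mem
    (fun n _ ↦ homogeneousComponent_mem_adjoin (r := r) (by simp [h₁, h₂]) n) hφ hmem i j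

theorem IsHilbertBurch.mem_adjoin_pair_of_forall_apply_mem (h : IsHilbertBurch g φ)
    (hprim : IsPrimitiveFamily g) (hg : ∀ i, (g i).IsHomogeneous d) (h₁ : f₁.IsHomogeneous r)
    (h₂ : f₂.IsHomogeneous r) (hr : r ≠ 0) (hrel : IsRelPrime f₁ f₂)
    (hφ : ∀ i j, φ i j ∈ Algebra.adjoin k {f₁, f₂}) (i : ι) :
    g i ∈ Algebra.adjoin k {f₁, f₂} := by
  obtain ⟨i₁, hi₁⟩ := hprim.exists_ne_zero
  obtain ⟨i₀, h₀, hratio⟩ := h.exists_mul_eq_mul_of_forall_mem hφ hi₁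
  exact hprim.mem_adjoin_pair_of_ratio_mem hg h₁ h₂ hr hrel h₀ hratio i

theorem IsHilbertBurch.nonempty_of_forall_not_isUnit (h : IsHilbertBurch g φ)
    (hprim : IsPrimitiveFamily g) (hunit : ∀ i, ¬ IsUnit (g i)) : Nonempty κ := by
  by_contra! hκ
  obtain ⟨i, hi⟩ := h.exists_isUnit_of_isEmpty hprim
  exact hunit i hi

theorem IsHilbertBurch.apply_mem_adjoin_pair_of_primitive (h : IsHilbertBurch g φ)
    (hprim : IsPrimitiveFamily g) (hg : ∀ i, (g i).IsHomogeneous d) (hunit : ∀ i, ¬ IsUnit (g i))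
    (hφ : ∀ i j, (φ i j).IsHomogeneous c) (h₁ : f₁.IsHomogeneous r) (h₂ : f₂.IsHomogeneous r)
    (hmem : ∀ i, g i ∈ Algebra.adjoin k {f₁, f₂}) (i : ι) (j : κ) :
    φ i j ∈ Algebra.adjoin k {f₁, f₂} := by
  have hd : d ≠ 0 := hprim.degree_ne_zero hunit hg
  obtain ⟨i₀, h₀⟩ := hprim.exists_ne_zero
  have hr : r ≠ 0 := ne_zero_of_dvd_ne_zero hd <|
    dvd_of_isHomogeneous_of_mem_adjoin (by simp [h₁, h₂]) (hmem i₀) (hg i₀) h₀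
  have hrel : IsRelPrime f₁ f₂ := hprim.isRelPrime_of_forall_mem_adjoin
    (constantCoeff_eq_zero_of_isHomogeneous h₁ hr) (constantCoeff_eq_zero_of_isHomogeneous h₂ hr)
    hmem fun i ↦ constantCoeff_eq_zero_of_isHomogeneous (hg i) hd
  exact h.apply_mem_adjoin_pair hφ h₁ h₂ hr hrel hmem i j

theorem IsHilbertBurch.three_le_finrank_of_isBirationalOntoImage [Nontrivial σ]
    (h : IsHilbertBurch g φ) (hprim : IsPrimitiveFamily g) (hunit : ∀ i, ¬ IsUnit (g i))
    (hg : ∀ i, (g i).IsHomogeneous d) (hφ : ∀ i j, (φ i j).IsHomogeneous c) (hc : 2 ≤ c)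
    (hbir : IsBirationalOntoImage d g) :
    3 ≤ Module.finrank k (Submodule.span k (Set.range fun p : ι × κ ↦ φ p.1 p.2)) := by
  by_contra! hrank
  obtain ⟨f₁, f₂, h₁, h₂, hspan⟩ := exists_forms_span_pair_eq
    (Set.finite_range fun p : ι × κ ↦ φ p.1 p.2) (Set.forall_mem_range.2 fun p ↦ hφ p.1 p.2)
    (Nat.le_of_lt_succ hrank)
  have hφmem (i : ι) (j : κ) : φ i j ∈ Algebra.adjoin k {f₁, f₂} :=
    Algebra.span_le_adjoin k _ (hspan.ge (Submodule.subset_span (Set.mem_range_self (i, j))))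
  obtain ⟨j⟩ := h.nonempty_of_forall_not_isUnit hprim hunit
  have hc0 : c ≠ 0 := by lia
  have hrel : IsRelPrime f₁ f₂ := (h.isPrimitiveFamily_col j).isRelPrime_of_forall_mem_adjoin
    (constantCoeff_eq_zero_of_isHomogeneous h₁ hc0) (constantCoeff_eq_zero_of_isHomogeneous h₂ hc0)
    (hφmem · j) fun i ↦ constantCoeff_eq_zero_of_isHomogeneous (hφ i j) hc0
  exact not_isBirationalOntoImage_of_forall_mem_adjoin h₁ h₂ hc hrel
    (hprim.degree_ne_zero hunit hg)
    (h.mem_adjoin_pair_of_forall_apply_mem hprim hg h₁ h₂ hc0 hrel hφmem) hbir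

theorem IsHilbertBurch.isBirationalOntoImage_of_three_le_finrank
    {g : ι → MvPolynomial (Fin 2) k} {φ : Matrix ι κ (MvPolynomial (Fin 2) k)}
    (h : IsHilbertBurch g φ) (hprim : IsPrimitiveFamily g) (hunit : ∀ i, ¬ IsUnit (g i))
    (hg : ∀ i, (g i).IsHomogeneous d) (hφ : ∀ i j, (φ i j).IsHomogeneous c) (hc : c.Prime)
    (hrank : 3 ≤ Module.finrank k (Submodule.span k (Set.range fun p : ι × κ ↦ φ p.1 p.2))) :
    IsBirationalOntoImage d g := by
  by_contra hbir
  obtain ⟨r, hr1, f₁, f₂, h₁, h₂, hgmem⟩ :=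
    hprim.exists_forms_mem_adjoin_of_not_isBirationalOntoImage hunit hg hbir
  have hφmem := h.apply_mem_adjoin_pair_of_primitive hprim hg hunit hφ h₁ h₂ hgmem
  obtain ⟨j⟩ := h.nonempty_of_forall_not_isUnit hprim hunit
  obtain ⟨i, hij⟩ := (h.isPrimitiveFamily_col j).exists_ne_zero
  have hrc : r ∣ c :=
    dvd_of_isHomogeneous_of_mem_adjoin (by simp [h₁, h₂]) (hφmem i j) (hφ i j) hij
  obtain rfl : r = c := (hc.eq_one_or_self_of_dvd r hrc).resolve_left hr1
  have := finrank_span_range_le_two_of_mem_adjoin_pair hc.ne_zero h₁ h₂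
    (fun p : ι × κ ↦ hφ p.1 p.2) fun p ↦ hφmem p.1 p.2
  lia

end PairOfForms

theorem stmt10_general {k ι κ : Type*} [Field k] [Fintype ι] [Fintype κ] {d c : ℕ}
    {g : ι → MvPolynomial (Fin 2) k} (hg : ∀ i, (g i).IsHomogeneous d)
    (hht : idealHeight (Ideal.span (Set.range g)) = 2)
    {φ : Matrix ι κ (MvPolynomial (Fin 2) k)} (hHB : IsHilbertBurch g φ)
    (hφhom : ∀ i j, (φ i j).IsHomogeneous c) :
    (∀ (r : ℕ) (f₁ f₂ : MvPolynomial (Fin 2) k), f₁.IsHomogeneous r → f₂.IsHomogeneous r →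
      (∀ i, g i ∈ Algebra.adjoin k {f₁, f₂}) → ∀ i j, φ i j ∈ Algebra.adjoin k {f₁, f₂}) ∧
    (c.Prime → (IsBirationalOntoImage d g ↔
      3 ≤ Module.finrank k (Submodule.span k (Set.range fun p : ι × κ ↦ φ p.1 p.2)))) := by
  have hprim : IsPrimitiveFamily g :=
    isPrimitiveFamily_of_one_lt_idealHeight (hht ▸ Nat.one_lt_ofNat)
  have hunit : ∀ i, ¬ IsUnit (g i) :=
    not_isUnit_of_idealHeight_ne_top (hht ▸ ENat.ofNat_ne_top _)
  exact ⟨fun r f₁ f₂ h₁ h₂ hmem ↦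
      hHB.apply_mem_adjoin_pair_of_primitive hprim hg hunit hφhom h₁ h₂ hmem, fun hc ↦
    ⟨hHB.three_le_finrank_of_isBirationalOntoImage hprim hunit hg hφhom hc.two_le,
      hHB.isBirationalOntoImage_of_three_le_finrank hprim hunit hg hφhom hc⟩⟩

/-- Let `B = k[x,y]` with `k` an infinite field, `I` a height-two ideal of `B` generated by forms
`g₁, …, g_n` of degree `d`, and `φ` a homogeneous Hilbert–Burch matrix for `[g₁, …, g_n]` (so
that `0 → B^{n-1} → B^n → I` is exact).  Assume every entry of `φ` is homogeneous of the same
degree `c`.  Then: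
(1) for forms `f₁, f₂` of a common degree `r` with `k[I_d] = k[g₁,…,g_n] ⊆ k[f₁,f₂]`, every
entry of `φ` lies in the subring `k[f₁,f₂]`; and
(2) if `c` is prime, the morphism `ℙ¹ → ℙ^{n-1}` given by `q ↦ [g₁(q):⋯:g_n(q)]` is birational
onto its image (equivalently, `k[g₁,…,g_n]` and the Veronese `k[B_d]` have the same quotient
field) if and only if `μ(I₁(φ)) ≥ 3`, i.e. the entries of `φ` span a `k`-space of dimension at
least `3`. -/
theorem stmt10 {k : Type*} [Field k] [Infinite k] (n d c : ℕ)
    (g : Fin n → MvPolynomial (Fin 2) k) (hg : ∀ i, (g i).IsHomogeneous d)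
    (hht : idealHeight (Ideal.span (Set.range g)) = 2)
    (φ : Matrix (Fin n) (Fin (n - 1)) (MvPolynomial (Fin 2) k))
    (hHBinj : Function.Injective φ.mulVecLin)
    (hHBexact : LinearMap.range φ.mulVecLin =
      LinearMap.ker (Matrix.mulVecLin (Matrix.of fun (_ : Fin 1) (i : Fin n) => g i)))
    (hφhom : ∀ i j, (φ i j).IsHomogeneous c) :
    (∀ (r : ℕ) (f₁ f₂ : MvPolynomial (Fin 2) k), f₁.IsHomogeneous r → f₂.IsHomogeneous r →
      (∀ i, g i ∈ Algebra.adjoin k ({f₁, f₂} : Set (MvPolynomial (Fin 2) k))) →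
      ∀ i j, φ i j ∈ Algebra.adjoin k ({f₁, f₂} : Set (MvPolynomial (Fin 2) k))) ∧
    (c.Prime →
      ((∀ v ∈ Algebra.adjoin k {f : MvPolynomial (Fin 2) k | f.IsHomogeneous d},
          ∃ a ∈ Algebra.adjoin k (Set.range g), ∃ b ∈ Algebra.adjoin k (Set.range g),
            b ≠ 0 ∧ b * v = a) ↔
        3 ≤ Module.finrank k
          (Submodule.span k (Set.range fun p : Fin n × Fin (n - 1) => φ p.1 p.2)))) := by
  exact stmt10_general hg hht (.of_range_eq_ker hHBinj hHBexact) hφhom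
end
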